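/- arXiv:1403.6252 — 3 statements merged into one kernel-verified Lean document; each statement's English description precedes it below -/
import Mathlib

section
/- There exists a constant C > 0, depending only on the solution, such that |A(R,θ) e^{2U(R,θ)}| ≤ C e^{C R^{1/2}} for all R ≥ R₀ and all θ ∈ ℝ. -/
open Real MeasureTheory Set

/-- Partial derivative with respect to the first (time) variable `R`. -/
noncomputable def pdR (f : ℝ → ℝ → ℝ) (R θ : ℝ) : ℝ := deriv (fun r => f r θ) R

/-- Partial derivative with respect to the second (space) variable `θ`. -/
noncomputable def pdT (f : ℝ → ℝ → ℝ) (R θ : ℝ) : ℝ := deriv (fun t => f R t) θ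

/-!
In the time `t = log R` and the unknowns `P = 2U - t`, `Q = A`, the Gowdy equations are a damped
wave map into the hyperbolic plane, whose energy `H` is dissipated at twice the kinetic energy.
Adding to `H` a small multiple of `∫ (f - ⨍ f) e^{2φ} ∂ₜf` for each unknown `f`, with weight
`e^{2φ}`, makes the potential energy decay too; the weight oscillates in `θ` by at most
`e^{O(√H)}`. Bounded oscillation first gives `H = O(e^{-εt})` for some `ε > 0`; the oscillation is
then integrable in time, and the same argument, with kinetic and potential energy equidistributed
to leading order, gives the sharp rate `H = O(e^{-t}) = O(1/R)`.

Hence the mean of `P` has `t`-derivative `O(e^t √H) = O(√R)`, so `|P| = O(√R)`; integrating the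
mean of `∂ₜQ` against this bound gives `|⨍ Q| ≤ e^{O(√R)}`, and `|Q - ⨍ Q| e^P = O(√H)` stays
bounded. Together they bound `|A| e^{2U} = R |Q| e^P`.
-/

namespace Gowdy

open Function Filter Topology

section PartialDerivatives

variable {f : ℝ → ℝ → ℝ}

lemma hasDerivAt_pdR (hf : Differentiable ℝ (uncurry f)) (t θ : ℝ) :
    HasDerivAt (fun r => f r θ) (pdR f t θ) t :=
  (hf.comp (by fun_prop : Differentiable ℝ fun r : ℝ => (r, θ)) t).hasDerivAt

lemma hasDerivAt_pdT (hf : Differentiable ℝ (uncurry f)) (t θ : ℝ) :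
    HasDerivAt (f t) (pdT f t θ) θ :=
  (hf.comp (by fun_prop : Differentiable ℝ fun x : ℝ => (t, x)) θ).hasDerivAt

lemma uncurry_pdR (hf : Differentiable ℝ (uncurry f)) :
    uncurry (pdR f) = fun p => fderiv ℝ (uncurry f) p (1, 0) := by
  ext ⟨t, θ⟩
  have hpath : HasDerivAt (fun r : ℝ => (r, θ)) ((1 : ℝ), (0 : ℝ)) t :=
    (hasDerivAt_id t).prodMk (hasDerivAt_const t θ)
  have hchain : HasDerivAt (fun r => f r θ) (fderiv ℝ (uncurry f) (t, θ) (1, 0)) t :=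
    (hf (t, θ)).hasFDerivAt.comp_hasDerivAt (f := fun r : ℝ => (r, θ)) t hpath
  exact (hasDerivAt_pdR hf t θ).unique hchain

lemma uncurry_pdT (hf : Differentiable ℝ (uncurry f)) :
    uncurry (pdT f) = fun p => fderiv ℝ (uncurry f) p (0, 1) := by
  ext ⟨t, θ⟩
  have hpath : HasDerivAt (fun x : ℝ => (t, x)) ((0 : ℝ), (1 : ℝ)) θ :=
    (hasDerivAt_const θ t).prodMk (hasDerivAt_id θ)
  have hchain : HasDerivAt (f t) (fderiv ℝ (uncurry f) (t, θ) (0, 1)) θ :=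
    (hf (t, θ)).hasFDerivAt.comp_hasDerivAt θ hpath
  exact (hasDerivAt_pdT hf t θ).unique hchain

lemma contDiff_pdR {m n : WithTop ℕ∞} (hf : ContDiff ℝ n (uncurry f)) (hmn : m + 1 ≤ n) :
    ContDiff ℝ m (uncurry (pdR f)) := by
  have hn : n ≠ 0 := by rintro rfl; simp at hmn
  rw [uncurry_pdR (hf.differentiable hn)]
  exact (hf.fderiv_right hmn).clm_apply contDiff_const

lemma contDiff_pdT {m n : WithTop ℕ∞} (hf : ContDiff ℝ n (uncurry f)) (hmn : m + 1 ≤ n) :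
    ContDiff ℝ m (uncurry (pdT f)) := by
  have hn : n ≠ 0 := by rintro rfl; simp at hmn
  rw [uncurry_pdT (hf.differentiable hn)]
  exact (hf.fderiv_right hmn).clm_apply contDiff_const

lemma pdR_pdT_comm (hf : ContDiff ℝ 2 (uncurry f)) (t θ : ℝ) :
    pdR (pdT f) t θ = pdT (pdR f) t θ := by
  have hf₁ : Differentiable ℝ (uncurry f) := hf.differentiable two_ne_zero
  have hR : Differentiable ℝ (uncurry (pdR f)) :=
    (contDiff_pdR hf one_add_one_eq_two.le).differentiable one_ne_zero
  have hT : Differentiable ℝ (uncurry (pdT f)) :=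
    (contDiff_pdT hf one_add_one_eq_two.le).differentiable one_ne_zero
  have hf₂ : DifferentiableAt ℝ (fderiv ℝ (uncurry f)) (t, θ) :=
    (hf.fderiv_right one_add_one_eq_two.le).differentiable one_ne_zero _
  have hsymm : IsSymmSndFDerivAt ℝ (uncurry f) (t, θ) :=
    hf.contDiffAt.isSymmSndFDerivAt (by simp)
  change uncurry (pdR (pdT f)) (t, θ) = uncurry (pdT (pdR f)) (t, θ)
  rw [uncurry_pdR hT, uncurry_pdT hR, uncurry_pdT hf₁, uncurry_pdR hf₁]
  beta_reduce
  rw [fderiv_clm_apply hf₂ (by fun_prop), fderiv_clm_apply hf₂ (by fun_prop)]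
  simpa using hsymm (1, 0) (0, 1)

lemma periodic_pdR {T : ℝ} (hf : ∀ t, Periodic (f t) T) (t : ℝ) : Periodic (pdR f t) T :=
  fun θ => by simp only [pdR, hf _ θ]

lemma periodic_pdT {T : ℝ} (hf : ∀ t, Periodic (f t) T) (t : ℝ) : Periodic (pdT f t) T :=
  fun θ => by
    simp only [pdT]
    rw [← deriv_comp_add_const, (hf t).funext]

lemma integral_pdT_eq_zero {T : ℝ} (hf : ContDiff ℝ 1 (uncurry f))
    (hper : ∀ t, Periodic (f t) T) (t : ℝ) : ∫ θ in 0..T, pdT f t θ = 0 := by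
  have hcont : Continuous (pdT f t) :=
    (contDiff_pdT hf (zero_add 1).le).continuous.uncurry_left t
  rw [intervalIntegral.integral_eq_sub_of_hasDerivAt
    (fun θ _ => hasDerivAt_pdT (hf.differentiable one_ne_zero) t θ)
    (hcont.intervalIntegrable _ _), (hper t).eq, sub_self]

lemma hasDerivAt_integral_pdR (hf : ContDiff ℝ 1 (uncurry f)) (a b t : ℝ) :
    HasDerivAt (fun s => ∫ θ in a..b, f s θ) (∫ θ in a..b, pdR f t θ) t := by
  have hcont : Continuous (uncurry f) := hf.continuous
  have hcont' : Continuous (uncurry (pdR f)) := (contDiff_pdR hf (zero_add 1).le).continuous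
  have hK : IsCompact (Metric.closedBall t 1 ×ˢ uIcc a b) :=
    (isCompact_closedBall _ _).prod isCompact_uIcc
  obtain ⟨M, hM⟩ := hK.exists_bound_of_continuousOn hcont'.continuousOn
  exact (intervalIntegral.hasDerivAt_integral_of_dominated_loc_of_deriv_le
    (bound := fun _ => M) (Metric.closedBall_mem_nhds t one_pos)
    (.of_forall fun s => (hcont.uncurry_left s).aestronglyMeasurable)
    ((hcont.uncurry_left t).intervalIntegrable _ _)
    (hcont'.uncurry_left t).aestronglyMeasurable
    (.of_forall fun θ hθ s hs => hM (s, θ) ⟨hs, uIoc_subset_uIcc hθ⟩)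
    intervalIntegrable_const
    (.of_forall fun θ _ s _ => hasDerivAt_pdR (hf.differentiable one_ne_zero) s θ)).2

end PartialDerivatives

section FixedTime

variable {f g φ ρ : ℝ → ℝ} {a b : ℝ}

lemma integral_abs_le_sqrt (hab : a ≤ b) (hf : IntervalIntegrable f volume a b)
    (hf2 : IntervalIntegrable (fun x => f x ^ 2) volume a b) :
    ∫ x in a..b, |f x| ≤ √((b - a) * ∫ x in a..b, f x ^ 2) := by
  rcases hab.eq_or_lt with rfl | hab'
  · simp
  have hba : 0 < b - a := sub_pos.2 hab'
  have jensen : (⨍ x in a..b, |f x|) ^ 2 ≤ ⨍ x in a..b, |f x| ^ 2 := by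
    simp only [uIoc_of_le hab]
    refine (even_two.convexOn_pow (𝕜 := ℝ)).map_set_average_le (f := fun x => |f x|)
      (continuous_pow 2).continuousOn isClosed_univ ?_ ?_
      (by simp) ((intervalIntegrable_iff_integrableOn_Ioc_of_le hab).1 hf.abs) ?_
    · simpa using hab'
    · simp
    · simpa [Function.comp_def] using (intervalIntegrable_iff_integrableOn_Ioc_of_le hab).1 hf2
  simp only [interval_average_eq_div, sq_abs] at jensen
  refine le_sqrt_of_sq_le ?_
  rw [div_pow, div_le_div_iff₀ (by positivity) hba] at jensen
  nlinarith

lemma abs_sub_average_le (hab : a < b) (hf : ContinuousOn f (Icc a b)) {x B : ℝ}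
    (hB : ∀ y ∈ Icc a b, |f x - f y| ≤ B) : |f x - ⨍ y in a..b, f y| ≤ B := by
  have hmem : (⨍ y in a..b, f y) ∈ Metric.closedBall (f x) B := by
    rw [uIoc_of_le hab.le]
    refine (convex_closedBall (f x) B).set_average_mem Metric.isClosed_closedBall
      (by simpa using hab) (by simp) ?_
      ((intervalIntegrable_iff_integrableOn_Ioc_of_le hab.le).1
        (hf.intervalIntegrable_of_Icc hab.le))
    refine (ae_restrict_mem measurableSet_Ioc).mono fun y hy => ?_
    rw [Metric.mem_closedBall', Real.dist_eq]
    exact hB y (Ioc_subset_Icc_self hy)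
  rwa [Metric.mem_closedBall', Real.dist_eq] at hmem

lemma integral_exp_mul_abs_le_sqrt (hab : a ≤ b) (hφ : Continuous φ) (hg : Continuous g) :
    ∫ x in a..b, exp (φ x) * |g x| ≤ √((b - a) * ∫ x in a..b, exp (2 * φ x) * g x ^ 2) := by
  have hcont : Continuous fun x => exp (φ x) * g x := by fun_prop
  simpa only [abs_mul, abs_exp, mul_pow, ← exp_nat_mul, Nat.cast_ofNat] using
    integral_abs_le_sqrt hab (hcont.intervalIntegrable a b)
      ((hcont.pow 2).intervalIntegrable a b)

lemma abs_sub_le_integral_abs_deriv {f' : ℝ → ℝ} (hf : ∀ x ∈ Icc a b, HasDerivAt f (f' x) x)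
    (hf' : ContinuousOn f' (Icc a b)) {x y : ℝ} (hx : x ∈ Icc a b) (hy : y ∈ Icc a b) :
    |f x - f y| ≤ ∫ s in a..b, |f' s| := by
  wlog hyx : y ≤ x generalizing x y
  · rw [abs_sub_comm]
    exact this hy hx (le_of_not_ge hyx)
  have hsub : uIcc y x ⊆ Icc a b := by
    rw [uIcc_of_le hyx]
    exact Icc_subset_Icc hy.1 hx.2
  rw [← intervalIntegral.integral_eq_sub_of_hasDerivAt (fun s hs => hf s (hsub hs))
    (hf'.mono hsub).intervalIntegrable]
  refine (intervalIntegral.abs_integral_le_integral_abs hyx).trans ?_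
  exact intervalIntegral.integral_mono_interval hy.1 hyx hx.2 (.of_forall fun _ => abs_nonneg _)
    (hf'.abs.intervalIntegrable_of_Icc (hx.1.trans hx.2))

variable {f' : ℝ → ℝ} {ω : ℝ}

lemma abs_sub_mul_exp_le (hf : ∀ x, HasDerivAt f (f' x) x) (hf' : Continuous f')
    (hφ : Continuous φ) (hosc : ∀ x ∈ Icc a b, ∀ y ∈ Icc a b, φ x ≤ ω + φ y)
    {x y z : ℝ} (hx : x ∈ Icc a b) (hy : y ∈ Icc a b) (hz : z ∈ Icc a b) :
    |f x - f y| * exp (φ z)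
      ≤ exp ω * √((b - a) * ∫ s in a..b, exp (2 * φ s) * f' s ^ 2) := by
  have hab : a ≤ b := hx.1.trans hx.2
  calc |f x - f y| * exp (φ z)
      ≤ (∫ s in a..b, |f' s|) * exp (φ z) := by
        gcongr
        exact abs_sub_le_integral_abs_deriv (fun s _ => hf s) hf'.continuousOn hx hy
    _ = ∫ s in a..b, |f' s| * exp (φ z) := (intervalIntegral.integral_mul_const _ _).symm
    _ ≤ ∫ s in a..b, exp ω * (exp (φ s) * |f' s|) := by
        refine intervalIntegral.integral_mono_on hab
          (Continuous.intervalIntegrable (by fun_prop) _ _)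
          (Continuous.intervalIntegrable (by fun_prop) _ _) fun s hs => ?_
        rw [mul_comm, ← mul_assoc, ← exp_add]
        gcongr
        exact hosc z hz s hs
    _ = exp ω * ∫ s in a..b, exp (φ s) * |f' s| := intervalIntegral.integral_const_mul _ _
    _ ≤ _ := by
        gcongr
        exact integral_exp_mul_abs_le_sqrt hab hφ hf'

lemma abs_sub_average_mul_exp_le (hab : a < b) (hf : ∀ x, HasDerivAt f (f' x) x)
    (hf' : Continuous f') (hφ : Continuous φ)
    (hosc : ∀ x ∈ Icc a b, ∀ y ∈ Icc a b, φ x ≤ ω + φ y)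
    {x z : ℝ} (hx : x ∈ Icc a b) (hz : z ∈ Icc a b) :
    |f x - ⨍ y in a..b, f y| * exp (φ z)
      ≤ exp ω * √((b - a) * ∫ s in a..b, exp (2 * φ s) * f' s ^ 2) := by
  rw [← le_div_iff₀ (exp_pos _)]
  refine abs_sub_average_le hab (fun s _ => (hf s).continuousAt.continuousWithinAt) fun y hy => ?_
  rw [le_div_iff₀ (exp_pos _)]
  exact abs_sub_mul_exp_le hf hf' hφ hosc hx hy hz

lemma abs_integral_mul_sub_le {m κ : ℝ} (hab : a ≤ b) (hg : Continuous g) (hρ : Continuous ρ)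
    (hρm : ∀ x ∈ Icc a b, m ≤ ρ x ∧ ρ x ≤ κ * m) :
    |(∫ x in a..b, ρ x * g x) - m * ∫ x in a..b, g x| ≤ (κ - 1) * m * ∫ x in a..b, |g x| := by
  have hdiff : (∫ x in a..b, ρ x * g x) - m * ∫ x in a..b, g x
      = ∫ x in a..b, (ρ x - m) * g x := by
    simp only [sub_mul]
    rw [intervalIntegral.integral_sub (Continuous.intervalIntegrable (by fun_prop) _ _)
      (Continuous.intervalIntegrable (by fun_prop) _ _), intervalIntegral.integral_const_mul]
  rw [hdiff, ← intervalIntegral.integral_const_mul]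
  refine (intervalIntegral.abs_integral_le_integral_abs hab).trans <|
    intervalIntegral.integral_mono_on hab (Continuous.intervalIntegrable (by fun_prop) _ _)
      (Continuous.intervalIntegrable (by fun_prop) _ _) fun x hx => ?_
  obtain ⟨hlow, hup⟩ := hρm x hx
  rw [abs_mul, abs_of_nonneg (sub_nonneg.2 hlow)]
  gcongr
  linarith

lemma neg_integral_mul_integral_mul_le {m κ : ℝ} (hab : a ≤ b) (hg : Continuous g)
    (hρ : Continuous ρ) (hm : 0 ≤ m) (hκ : 1 ≤ κ)
    (hρm : ∀ x ∈ Icc a b, m ≤ ρ x ∧ ρ x ≤ κ * m) :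
    -((∫ x in a..b, g x) * ∫ x in a..b, ρ x * g x)
      ≤ (κ - 1) * ((b - a) * ∫ x in a..b, ρ x * g x ^ 2) := by
  set J := ∫ x in a..b, g x
  set Z := ∫ x in a..b, ρ x * g x
  set L := ∫ x in a..b, |g x|
  have : 0 ≤ κ - 1 := sub_nonneg.2 hκ
  have : 0 ≤ b - a := sub_nonneg.2 hab
  have hJL : |J| ≤ L := intervalIntegral.abs_integral_le_integral_abs hab
  have hcross : |J| * |Z - m * J| ≤ L * ((κ - 1) * m * L) := by
    gcongr
    · exact (abs_nonneg _).trans hJL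
    · exact abs_integral_mul_sub_le hab hg hρ hρm
  have hL2 : L ^ 2 ≤ (b - a) * ∫ x in a..b, g x ^ 2 := by
    have hint : 0 ≤ ∫ x in a..b, g x ^ 2 :=
      intervalIntegral.integral_nonneg hab fun _ _ => sq_nonneg _
    exact (le_sqrt ((abs_nonneg _).trans hJL) (by positivity)).1 <|
      integral_abs_le_sqrt hab (hg.intervalIntegrable _ _) ((hg.pow 2).intervalIntegrable _ _)
  have hweight : m * ∫ x in a..b, g x ^ 2 ≤ ∫ x in a..b, ρ x * g x ^ 2 := by
    rw [← intervalIntegral.integral_const_mul]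
    refine intervalIntegral.integral_mono_on hab (Continuous.intervalIntegrable (by fun_prop) _ _)
      (Continuous.intervalIntegrable (by fun_prop) _ _) fun x hx => ?_
    gcongr
    exact (hρm x hx).1
  calc -(J * Z) = -(m * J ^ 2) - J * (Z - m * J) := by ring
    _ ≤ |J| * |Z - m * J| := by
        rw [← abs_mul]
        linarith [neg_abs_le (J * (Z - m * J)), mul_nonneg hm (sq_nonneg J)]
    _ ≤ (κ - 1) * (m * L ^ 2) := hcross.trans_eq (by ring)
    _ ≤ (κ - 1) * ((b - a) * (m * ∫ x in a..b, g x ^ 2)) := by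
        rw [mul_left_comm (b - a)]
        gcongr
    _ ≤ _ := by gcongr

lemma neg_integral_mul_integral_exp_mul_le (hab : a ≤ b) (hφ : Continuous φ) (hg : Continuous g)
    (hosc : ∀ x ∈ Icc a b, ∀ y ∈ Icc a b, φ x ≤ ω + φ y) :
    -((∫ x in a..b, g x) * ∫ x in a..b, exp (2 * φ x) * g x)
      ≤ (exp (2 * ω) - 1) * ((b - a) * ∫ x in a..b, exp (2 * φ x) * g x ^ 2) := by
  obtain ⟨z, hz, hmin⟩ := isCompact_Icc.exists_isMinOn (nonempty_Icc.2 hab) hφ.continuousOn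
  have hω : 0 ≤ ω := by linarith [hosc z hz z hz]
  refine neg_integral_mul_integral_mul_le (m := exp (2 * φ z)) hab hg (by fun_prop)
    (exp_pos _).le (one_le_exp (by positivity)) fun x hx => ⟨?_, ?_⟩
  · exact exp_le_exp.2 (by linarith [isMinOn_iff.1 hmin x hx])
  · rw [← exp_add]
    exact exp_le_exp.2 (by linarith [hosc x hx z hz])

end FixedTime

section Decay

variable {H D : ℝ → ℝ} {a l k δ : ℝ}

lemma le_mul_exp_of_deriv_le (hδ : 0 < δ) (hk : 0 ≤ k) (hD0 : 0 ≤ D a)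
    (hD : ∀ t, a ≤ t → ∃ d, HasDerivAt D d t ∧ d ≤ (-l + k * exp (-δ * t)) * D t)
    {t : ℝ} (ht : a ≤ t) :
    D t ≤ D a * exp (l * a + k / δ * exp (-δ * a)) * exp (-l * t) := by
  choose! d hd hle using hD
  set ψ : ℝ → ℝ := fun s => l * s + k / δ * exp (-δ * s)
  have hψ (s : ℝ) : HasDerivAt ψ (l - k * exp (-δ * s)) s := by
    refine (((hasDerivAt_id s).const_mul l).add
      (((hasDerivAt_id s).const_mul (-δ)).exp.const_mul (k / δ))).congr_deriv ?_
    simp only [id]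
    field_simp
    ring
  have hderiv (s : ℝ) (hs : a ≤ s) : HasDerivAt (fun r => D r * exp (ψ r))
      ((d s + (l - k * exp (-δ * s)) * D s) * exp (ψ s)) s :=
    ((hd s hs).mul (hψ s).exp).congr_deriv (by ring)
  have hanti : AntitoneOn (fun r => D r * exp (ψ r)) (Ici a) :=
    antitoneOn_of_hasDerivWithinAt_nonpos (convex_Ici a)
      (fun s hs => (hderiv s hs).continuousAt.continuousWithinAt)
      (fun s hs => (hderiv s (interior_subset hs)).hasDerivWithinAt)
      fun s hs => mul_nonpos_of_nonpos_of_nonneg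
        (by linarith [hle s (interior_subset hs)]) (exp_pos _).le
  have hψt : 1 ≤ exp (ψ t - l * t) := one_le_exp (by simp only [ψ, add_sub_cancel_left]; positivity)
  have hexp : exp (-l * t) * exp (ψ t) = exp (ψ t - l * t) := by rw [← exp_add]; ring_nf
  refine le_of_mul_le_mul_right ?_ (exp_pos (ψ t))
  calc D t * exp (ψ t) ≤ D a * exp (ψ a) := hanti self_mem_Ici ht ht
    _ ≤ D a * exp (ψ a) * exp (ψ t - l * t) := le_mul_of_one_le_right (by positivity) hψt
    _ = _ := by rw [mul_assoc (D a * _), hexp]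

lemma exists_le_mul_exp_of_antitoneOn {b B : ℝ} (hl : 0 ≤ l) (hH : ∀ t, a ≤ t → 0 ≤ H t)
    (hanti : AntitoneOn H (Ici a)) (hB : 0 ≤ B) (hHB : ∀ t, b ≤ t → H t ≤ B * exp (-l * t)) :
    ∃ B', ∀ t, a ≤ t → H t ≤ B' * exp (-l * t) := by
  have hHa : 0 ≤ H a := hH a le_rfl
  refine ⟨B + H a * exp (l * b), fun t ht => ?_⟩
  rw [add_mul]
  rcases le_total b t with hbt | htb
  · exact (hHB t hbt).trans (le_add_of_nonneg_right (by positivity))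
  · refine le_add_of_nonneg_of_le (by positivity) ((hanti self_mem_Ici ht ht).trans ?_)
    rw [mul_assoc, ← exp_add]
    refine le_mul_of_one_le_right hHa (one_le_exp ?_)
    nlinarith

lemma perturbed_rate_mul_le {h d η : ℝ} (hl : 0 ≤ l) (hη : 0 ≤ η) (hdh : |d - h| ≤ η * h)
    (hle : h ≤ 2 * d) : (-l + η) * h ≤ (-l + 2 * (l + 1) * η) * d :=
  calc (-l + η) * h = -l * d + l * (d - h) + η * h := by ring
    _ ≤ -l * d + l * (η * h) + η * h := by
        gcongr
        exact (le_abs_self _).trans hdh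
    _ = -l * d + (l + 1) * (η * h) := by ring
    _ ≤ -l * d + (l + 1) * (η * (2 * d)) := by gcongr
    _ = _ := by ring

lemma exists_le_mul_exp_of_perturbation {C : ℝ} (hδ : 0 < δ) (hl : 0 ≤ l) (hC : 0 ≤ C)
    (hH : ∀ t, a ≤ t → 0 ≤ H t) (hanti : AntitoneOn H (Ici a))
    (hDH : ∀ t, a ≤ t → |D t - H t| ≤ C * exp (-δ * t) * H t)
    (hD : ∀ t, a ≤ t → ∃ d, HasDerivAt D d t ∧ d ≤ (-l + C * exp (-δ * t)) * H t) :
    ∃ B, ∀ t, a ≤ t → H t ≤ B * exp (-l * t) := by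
  have hsmall : ∀ᶠ t in atTop, C * exp (-δ * t) < 1 / 2 := by
    have hlim : Tendsto (fun t => C * exp (-δ * t)) atTop (𝓝 (C * 0)) :=
      (tendsto_exp_atBot.comp (tendsto_id.const_mul_atTop_of_neg (neg_lt_zero.2 hδ))).const_mul C
    exact hlim.eventually_lt_const (by norm_num)
  obtain ⟨b, hab, hb⟩ : ∃ b, a ≤ b ∧ ∀ t, b ≤ t → C * exp (-δ * t) < 1 / 2 := by
    obtain ⟨b, hb⟩ := eventually_atTop.1 hsmall
    exact ⟨max a b, le_max_left _ _, fun t ht => hb t (le_of_max_le_right ht)⟩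
  have hcomparable (t : ℝ) (ht : b ≤ t) : H t ≤ 2 * D t := by
    nlinarith [hb t ht, hH t (hab.trans ht), neg_le_of_abs_le (hDH t (hab.trans ht))]
  have hDb : 0 ≤ D b := by linarith [hcomparable b le_rfl, hH b hab]
  have hdecay : ∀ t, b ≤ t → ∃ d, HasDerivAt D d t
      ∧ d ≤ (-l + 2 * (l + 1) * C * exp (-δ * t)) * D t := fun t ht => by
    obtain ⟨d, hd, hle⟩ := hD t (hab.trans ht)
    refine ⟨d, hd, hle.trans ?_⟩
    exact (perturbed_rate_mul_le hl (by positivity) (hDH t (hab.trans ht))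
      (hcomparable t ht)).trans_eq (by ring)
  refine exists_le_mul_exp_of_antitoneOn (b := b)
    (B := 2 * (D b * exp (l * b + 2 * (l + 1) * C / δ * exp (-δ * b)))) hl hH hanti
    (by positivity) fun t ht => ?_
  rw [mul_assoc]
  linarith [hcomparable t ht, le_mul_exp_of_deriv_le hδ (by positivity) hDb hdecay ht]

lemma exp_sub_one_le_mul_exp (x : ℝ) : exp x - 1 ≤ x * exp x := by
  have h := mul_le_mul_of_nonneg_right (one_sub_le_exp_neg x) (exp_pos x).le
  rw [← exp_add, neg_add_cancel, exp_zero] at h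
  linarith

lemma abs_le_of_abs_deriv_le {f f' B B' : ℝ → ℝ} (hf : ∀ t, a ≤ t → HasDerivAt f (f' t) t)
    (hB : ∀ t, HasDerivAt B (B' t) t) (ha : |f a| ≤ B a) (hle : ∀ t, a ≤ t → |f' t| ≤ B' t)
    {t : ℝ} (ht : a ≤ t) : |f t| ≤ B t :=
  image_norm_le_of_norm_deriv_right_le_deriv_boundary
    (fun s hs => (hf s hs.1).continuousAt.continuousWithinAt)
    (fun s hs => (hf s hs.1).hasDerivWithinAt) ha hB (fun s hs => hle s hs.1) ⟨ht, le_rfl⟩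

end Decay

/-- The conjugate momentum density `e^{2φ} ∂ₜf` of a wave `f` with logarithmic weight `φ`. -/
noncomputable def momentum (φ f : ℝ → ℝ → ℝ) (t θ : ℝ) : ℝ := exp (2 * φ t θ) * pdR f t θ

/-- The spatial flux `e^{2φ} ∂_θ f` of a wave `f` with logarithmic weight `φ`. -/
noncomputable def flux (φ f : ℝ → ℝ → ℝ) (t θ : ℝ) : ℝ := exp (2 * φ t θ) * pdT f t θ

/-- The Lagrangian density `e^{2φ} ((∂ₜf)² - e^{2t} (∂_θ f)²)` of a wave `f` with logarithmic weight
`φ`; `lagrangian P Q` is also the source in the Gowdy equation for `P`. -/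
noncomputable def lagrangian (φ f : ℝ → ℝ → ℝ) (t θ : ℝ) : ℝ :=
  exp (2 * φ t θ) * (pdR f t θ ^ 2 - exp (2 * t) * pdT f t θ ^ 2)

/-- At time `t`, `f` solves the wave equation with weight `e^{2φ}` and source `S`, in
logarithmic time `t = log R`, where the speed of light is `e^t`. -/
def IsWeightedWaveAt (φ f S : ℝ → ℝ → ℝ) (t : ℝ) : Prop :=
  ∀ θ, pdR (momentum φ f) t θ = exp (2 * t) * pdT (flux φ f) t θ + S t θ

/-- The energy density of a wave `f` with logarithmic weight `φ`, normalised by `e^{-2t}` (that is,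
`e^{2φ} ((∂_R f)² + (∂_θ f)²)` for `R = e^t`). -/
noncomputable def energyDensity (φ f : ℝ → ℝ → ℝ) (t θ : ℝ) : ℝ :=
  exp (-2 * t) * (exp (2 * φ t θ) * pdR f t θ ^ 2) + exp (2 * φ t θ) * pdT f t θ ^ 2

/-- The kinetic energy over one period, normalised by `e^{-2t}` (that is, `∫ e^{2φ} (∂_R f)² dθ` for
`R = e^t`). -/
noncomputable def kinetic (T : ℝ) (φ f : ℝ → ℝ → ℝ) (t : ℝ) : ℝ :=
  exp (-2 * t) * ∫ θ in 0..T, exp (2 * φ t θ) * pdR f t θ ^ 2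

/-- The potential energy over one period, in the normalisation of `kinetic`. -/
noncomputable def potential (T : ℝ) (φ f : ℝ → ℝ → ℝ) (t : ℝ) : ℝ :=
  ∫ θ in 0..T, exp (2 * φ t θ) * pdT f t θ ^ 2

/-- The correction `e^{-2t} ∫ (f - ⨍ f) e^{2φ} ∂ₜf`, a multiple of which is added to the energy: its
derivative trades potential for kinetic energy, of which only the latter is dissipated. -/
noncomputable def correction (T : ℝ) (φ f : ℝ → ℝ → ℝ) (t : ℝ) : ℝ :=
  exp (-2 * t) * ∫ θ in 0..T, (f t θ - ⨍ x in 0..T, f t x) * momentum φ f t θ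

section WeightedWave

variable {T t : ℝ} {φ f S : ℝ → ℝ → ℝ}

lemma contDiff_momentum (hφ : ContDiff ℝ 1 (uncurry φ)) (hf : ContDiff ℝ 2 (uncurry f)) :
    ContDiff ℝ 1 (uncurry (momentum φ f)) :=
  (contDiff_const.mul hφ).exp.mul (contDiff_pdR hf one_add_one_eq_two.le)

lemma contDiff_flux (hφ : ContDiff ℝ 1 (uncurry φ)) (hf : ContDiff ℝ 2 (uncurry f)) :
    ContDiff ℝ 1 (uncurry (flux φ f)) :=
  (contDiff_const.mul hφ).exp.mul (contDiff_pdT hf one_add_one_eq_two.le)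

lemma periodic_flux (hφ : ∀ t, Periodic (φ t) T) (hf : ∀ t, Periodic (f t) T) (t : ℝ) :
    Periodic (flux φ f t) T := fun θ => by
  simp only [flux, hφ t θ, periodic_pdT hf t θ]

lemma contDiff_energyDensity (hφ : ContDiff ℝ 1 (uncurry φ)) (hf : ContDiff ℝ 2 (uncurry f)) :
    ContDiff ℝ 1 (uncurry (energyDensity φ f)) := by
  have hw : ContDiff ℝ 1 fun p : ℝ × ℝ => exp (2 * uncurry φ p) := (contDiff_const.mul hφ).exp
  have hR := contDiff_pdR hf one_add_one_eq_two.le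
  have hT := contDiff_pdT hf one_add_one_eq_two.le
  exact ((contDiff_const.mul contDiff_fst).exp.mul (hw.mul (hR.pow 2))).add (hw.mul (hT.pow 2))

lemma integral_energyDensity (hφ : ContDiff ℝ 1 (uncurry φ)) (hf : ContDiff ℝ 2 (uncurry f)) :
    ∫ θ in 0..T, energyDensity φ f t θ = kinetic T φ f t + potential T φ f t := by
  have hw : Continuous (φ t) := hφ.continuous.uncurry_left t
  have hR : Continuous (pdR f t) :=
    (contDiff_pdR hf one_add_one_eq_two.le).continuous.uncurry_left t
  have hT : Continuous (pdT f t) :=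
    (contDiff_pdT hf one_add_one_eq_two.le).continuous.uncurry_left t
  simp only [energyDensity, kinetic, potential]
  rw [intervalIntegral.integral_add (Continuous.intervalIntegrable (by fun_prop) _ _)
    (Continuous.intervalIntegrable (by fun_prop) _ _), intervalIntegral.integral_const_mul]

lemma pdR_energyDensity (hφ : ContDiff ℝ 1 (uncurry φ)) (hf : ContDiff ℝ 2 (uncurry f))
    (hwave : IsWeightedWaveAt φ f S t) (θ : ℝ) :
    pdR (energyDensity φ f) t θ
      = -2 * (exp (-2 * t) * (exp (2 * φ t θ) * pdR f t θ ^ 2))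
        + 2 * pdT (fun s x => flux φ f s x * pdR f s x) t θ
        + 2 * exp (-2 * t) * (S t θ * pdR f t θ - pdR φ t θ * lagrangian φ f t θ) := by
  have hRd : Differentiable ℝ (uncurry (pdR f)) :=
    (contDiff_pdR hf one_add_one_eq_two.le).differentiable one_ne_zero
  have hTd : Differentiable ℝ (uncurry (pdT f)) :=
    (contDiff_pdT hf one_add_one_eq_two.le).differentiable one_ne_zero
  have hφd : Differentiable ℝ (uncurry φ) := hφ.differentiable one_ne_zero
  have hw : HasDerivAt (fun s => exp (2 * φ s θ)) _ t := ((hasDerivAt_pdR hφd t θ).const_mul 2).exp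
  have hwT : HasDerivAt (fun x => exp (2 * φ t x)) _ θ :=
    ((hasDerivAt_pdT hφd t θ).const_mul 2).exp
  have he : HasDerivAt (fun s : ℝ => exp (-2 * s)) _ t := ((hasDerivAt_id t).const_mul (-2)).exp
  have hmom : pdR (momentum φ f) t θ = _ := (hw.mul (hasDerivAt_pdR hRd t θ)).deriv
  have hflux : HasDerivAt (flux φ f t) _ θ := hwT.mul (hasDerivAt_pdT hTd t θ)
  have hflux' : pdT (flux φ f) t θ = _ := hflux.deriv
  have hprod : pdT (fun s x => flux φ f s x * pdR f s x) t θ = _ :=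
    (hflux.mul (hasDerivAt_pdT hRd t θ)).deriv
  have hdens : pdR (energyDensity φ f) t θ = _ :=
    ((he.mul (hw.mul ((hasDerivAt_pdR hRd t θ).pow 2))).add
      (hw.mul ((hasDerivAt_pdR hTd t θ).pow 2))).deriv
  have hexp : exp (-2 * t) * exp (2 * t) = 1 := by rw [← exp_add]; simp
  have hwave' := hwave θ
  rw [hmom, hflux'] at hwave'
  rw [hdens, hprod]
  simp only [flux, lagrangian, pdR_pdT_comm hf, id, Pi.mul_apply, Pi.pow_apply]
  linear_combination (2 * exp (-2 * t) * pdR f t θ) * hwave'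
    + (2 * exp (2 * φ t θ) * (2 * pdR f t θ * pdT φ t θ * pdT f t θ + pdR f t θ * pdT (pdT f) t θ
      - pdR φ t θ * pdT f t θ ^ 2)) * hexp

lemma contDiff_lagrangian (hφ : ContDiff ℝ 1 (uncurry φ)) (hf : ContDiff ℝ 2 (uncurry f)) :
    ContDiff ℝ 1 (uncurry (lagrangian φ f)) := by
  have hR := contDiff_pdR hf one_add_one_eq_two.le
  have hT := contDiff_pdT hf one_add_one_eq_two.le
  exact (contDiff_const.mul hφ).exp.mul
    ((hR.pow 2).sub ((contDiff_const.mul contDiff_fst).exp.mul (hT.pow 2)))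

lemma exp_mul_abs_lagrangian_le (φ f : ℝ → ℝ → ℝ) (t θ : ℝ) :
    exp (-2 * t) * |lagrangian φ f t θ| ≤ energyDensity φ f t θ := by
  have hexp : exp (-2 * t) * exp (2 * t) = 1 := by rw [← exp_add]; simp
  calc exp (-2 * t) * |lagrangian φ f t θ|
      ≤ exp (-2 * t) * (exp (2 * φ t θ) * (pdR f t θ ^ 2 + exp (2 * t) * pdT f t θ ^ 2)) := by
        rw [lagrangian, abs_mul, abs_exp]
        gcongr
        refine (abs_sub _ _).trans_eq ?_
        rw [abs_of_nonneg (by positivity), abs_of_nonneg (by positivity)]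
    _ = energyDensity φ f t θ := by
        rw [energyDensity]
        linear_combination (exp (2 * φ t θ) * pdT f t θ ^ 2) * hexp

lemma hasDerivAt_kinetic_add_potential (hφ : ContDiff ℝ 1 (uncurry φ))
    (hf : ContDiff ℝ 2 (uncurry f)) (hφper : ∀ t, Periodic (φ t) T)
    (hfper : ∀ t, Periodic (f t) T) (hS : Continuous (S t)) (hwave : IsWeightedWaveAt φ f S t) :
    HasDerivAt (fun s => kinetic T φ f s + potential T φ f s)
      (-2 * kinetic T φ f t + 2 * exp (-2 * t) *
        ∫ θ in 0..T, (S t θ * pdR f t θ - pdR φ t θ * lagrangian φ f t θ)) t := by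
  have hdens := hasDerivAt_integral_pdR (contDiff_energyDensity hφ hf) 0 T t
  simp only [integral_energyDensity hφ hf] at hdens
  refine hdens.congr_deriv ?_
  have hw : Continuous (φ t) := hφ.continuous.uncurry_left t
  have hwR : Continuous (pdR φ t) := (contDiff_pdR hφ (zero_add 1).le).continuous.uncurry_left t
  have hfR := contDiff_pdR hf one_add_one_eq_two.le
  have hR : Continuous (pdR f t) := hfR.continuous.uncurry_left t
  have hL : Continuous (lagrangian φ f t) := (contDiff_lagrangian hφ hf).continuous.uncurry_left t
  have hprod : ContDiff ℝ 1 (uncurry fun s x => flux φ f s x * pdR f s x) :=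
    (contDiff_flux hφ hf).mul hfR
  have hprodT : Continuous (pdT (fun s x => flux φ f s x * pdR f s x) t) :=
    (contDiff_pdT hprod (zero_add 1).le).continuous.uncurry_left t
  have hdiv : ∫ θ in 0..T, pdT (fun s x => flux φ f s x * pdR f s x) t θ = 0 :=
    integral_pdT_eq_zero hprod
      (fun s => (periodic_flux hφper hfper s).mul (periodic_pdR hfper s)) t
  simp only [pdR_energyDensity hφ hf hwave]
  rw [intervalIntegral.integral_add (Continuous.intervalIntegrable (by fun_prop) _ _)
      (Continuous.intervalIntegrable (by fun_prop) _ _),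
    intervalIntegral.integral_add (Continuous.intervalIntegrable (by fun_prop) _ _)
      (Continuous.intervalIntegrable (by fun_prop) _ _)]
  simp only [intervalIntegral.integral_const_mul, hdiv, kinetic, mul_zero, add_zero]

lemma integral_sub_average_mul {a b : ℝ} {f g : ℝ → ℝ} (hf : Continuous f) (hg : Continuous g) :
    ∫ x in a..b, (f x - ⨍ y in a..b, f y) * g x
      = (∫ x in a..b, f x * g x) - (⨍ y in a..b, f y) * ∫ x in a..b, g x := by
  simp only [sub_mul]
  rw [intervalIntegral.integral_sub (Continuous.intervalIntegrable (by fun_prop) _ _)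
    (Continuous.intervalIntegrable (by fun_prop) _ _), intervalIntegral.integral_const_mul]

lemma hasDerivAt_average_pdR (hf : ContDiff ℝ 1 (uncurry f)) (a b t : ℝ) :
    HasDerivAt (fun s => ⨍ x in a..b, f s x) (⨍ x in a..b, pdR f t x) t := by
  simp only [interval_average_eq_div]
  exact (hasDerivAt_integral_pdR hf a b t).div_const _

lemma hasDerivAt_integral_sub_average_mul {g : ℝ → ℝ → ℝ} (hf : ContDiff ℝ 1 (uncurry f))
    (hg : ContDiff ℝ 1 (uncurry g)) (a b t : ℝ) :
    HasDerivAt (fun s => ∫ x in a..b, (f s x - ⨍ y in a..b, f s y) * g s x)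
      ((∫ x in a..b, pdR f t x * g t x) - (⨍ y in a..b, pdR f t y) * (∫ x in a..b, g t x)
        + ∫ x in a..b, (f t x - ⨍ y in a..b, f t y) * pdR g t x) t := by
  have hfc (s : ℝ) : Continuous (f s) := hf.continuous.uncurry_left s
  have hgc (s : ℝ) : Continuous (g s) := hg.continuous.uncurry_left s
  have hfR : Continuous (pdR f t) := (contDiff_pdR hf (zero_add 1).le).continuous.uncurry_left t
  have hgR : Continuous (pdR g t) := (contDiff_pdR hg (zero_add 1).le).continuous.uncurry_left t
  have hleibniz (x : ℝ) : pdR (fun s y => f s y * g s y) t x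
      = pdR f t x * g t x + f t x * pdR g t x :=
    ((hasDerivAt_pdR (hf.differentiable one_ne_zero) t x).mul
      (hasDerivAt_pdR (hg.differentiable one_ne_zero) t x)).deriv
  simp only [integral_sub_average_mul (hfc _) (hgc _), integral_sub_average_mul (hfc t) hgR]
  refine ((hasDerivAt_integral_pdR (f := fun s y => f s y * g s y) (hf.mul hg) a b t).sub
    ((hasDerivAt_average_pdR hf a b t).mul (hasDerivAt_integral_pdR hg a b t))).congr_deriv ?_
  have hsplit : ∫ x in a..b, pdR (fun s y => f s y * g s y) t x
      = (∫ x in a..b, pdR f t x * g t x) + ∫ x in a..b, f t x * pdR g t x := by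
    simp only [hleibniz]
    exact intervalIntegral.integral_add ((hfR.mul (hgc t)).intervalIntegrable _ _)
      (((hfc t).mul hgR).intervalIntegrable _ _)
  linear_combination hsplit

lemma integral_sub_const_mul_pdT_flux (hφ : ContDiff ℝ 1 (uncurry φ))
    (hf : ContDiff ℝ 2 (uncurry f)) (hφper : ∀ t, Periodic (φ t) T)
    (hfper : ∀ t, Periodic (f t) T) (t c : ℝ) :
    ∫ θ in 0..T, (f t θ - c) * pdT (flux φ f) t θ = -potential T φ f t := by
  have hfT : Continuous (pdT f t) :=
    (contDiff_pdT hf one_add_one_eq_two.le).continuous.uncurry_left t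
  have hflux := contDiff_flux hφ hf
  have hfluxT : Continuous (pdT (flux φ f) t) :=
    (contDiff_pdT hflux (zero_add 1).le).continuous.uncurry_left t
  rw [intervalIntegral.integral_mul_deriv_eq_deriv_mul
    (fun θ _ => (hasDerivAt_pdT (hf.differentiable two_ne_zero) t θ).sub_const c)
    (fun θ _ => hasDerivAt_pdT (hflux.differentiable one_ne_zero) t θ)
    (hfT.intervalIntegrable _ _) (hfluxT.intervalIntegrable _ _),
    (hfper t).eq, (periodic_flux hφper hfper t).eq, sub_self, zero_sub, potential]
  congr 1
  refine intervalIntegral.integral_congr fun θ _ => ?_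
  simp only [flux]
  ring

lemma hasDerivAt_correction (hφ : ContDiff ℝ 1 (uncurry φ)) (hf : ContDiff ℝ 2 (uncurry f))
    (hφper : ∀ t, Periodic (φ t) T) (hfper : ∀ t, Periodic (f t) T) (hS : Continuous (S t))
    (hwave : IsWeightedWaveAt φ f S t) :
    HasDerivAt (correction T φ f)
      (-2 * correction T φ f t + kinetic T φ f t - potential T φ f t
        - exp (-2 * t) * ((⨍ θ in 0..T, pdR f t θ) * ∫ θ in 0..T, momentum φ f t θ)
        + exp (-2 * t) * ∫ θ in 0..T, (f t θ - ⨍ x in 0..T, f t x) * S t θ) t := by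
  have hmom := contDiff_momentum hφ hf
  have hfc : Continuous (f t) := hf.continuous.uncurry_left t
  have hfluxT : Continuous (pdT (flux φ f) t) :=
    (contDiff_pdT (contDiff_flux hφ hf) (zero_add 1).le).continuous.uncurry_left t
  have hdecay : HasDerivAt (fun s : ℝ => exp (-2 * s)) (-2 * exp (-2 * t)) t := by
    simpa [mul_comm] using ((hasDerivAt_id t).const_mul (-2)).exp
  have hforce : ∫ θ in 0..T, (f t θ - ⨍ x in 0..T, f t x) * pdR (momentum φ f) t θ
      = -exp (2 * t) * potential T φ f t + ∫ θ in 0..T, (f t θ - ⨍ x in 0..T, f t x) * S t θ := by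
    simp only [hwave _, mul_add, mul_left_comm _ (exp (2 * t))]
    rw [intervalIntegral.integral_add (Continuous.intervalIntegrable (by fun_prop) _ _)
      (Continuous.intervalIntegrable (by fun_prop) _ _), intervalIntegral.integral_const_mul,
      integral_sub_const_mul_pdT_flux hφ hf hφper hfper, neg_mul, mul_neg]
  have hkin : exp (-2 * t) * ∫ θ in 0..T, pdR f t θ * momentum φ f t θ = kinetic T φ f t := by
    simp only [kinetic, momentum, mul_left_comm (pdR f t _), sq]
  have hexp : exp (-2 * t) * exp (2 * t) = 1 := by rw [← exp_add]; simp
  refine (hdecay.mul (hasDerivAt_integral_sub_average_mul (hf.of_le one_le_two) hmom 0 T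
    t)).congr_deriv ?_
  rw [hforce]
  simp only [correction]
  linear_combination hkin - potential T φ f t * hexp

lemma kinetic_nonneg (hT : 0 ≤ T) : 0 ≤ kinetic T φ f t :=
  mul_nonneg (exp_pos _).le <| intervalIntegral.integral_nonneg hT fun _ _ => by positivity

lemma potential_nonneg (hT : 0 ≤ T) : 0 ≤ potential T φ f t :=
  intervalIntegral.integral_nonneg hT fun _ _ => by positivity

lemma integral_exp_mul_pdR_sq (T : ℝ) (φ f : ℝ → ℝ → ℝ) (t : ℝ) :
    ∫ θ in 0..T, exp (2 * φ t θ) * pdR f t θ ^ 2 = exp (2 * t) * kinetic T φ f t := by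
  rw [kinetic, ← mul_assoc, ← exp_add]
  simp

lemma integral_exp_mul_abs_pdR_le (hT : 0 ≤ T) (hφ : Continuous (φ t))
    (hfR : Continuous (pdR f t)) :
    ∫ θ in 0..T, exp (φ t θ) * |pdR f t θ| ≤ exp t * √(T * kinetic T φ f t) := by
  have h := integral_exp_mul_abs_le_sqrt hT hφ hfR
  rwa [sub_zero, integral_exp_mul_pdR_sq, mul_left_comm, two_mul t, exp_add,
    sqrt_mul (by positivity), sqrt_mul_self (exp_pos t).le] at h

variable {ω : ℝ}

lemma abs_integral_sub_average_mul_momentum_le (hT : 0 < T) (hφ : ContDiff ℝ 1 (uncurry φ))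
    (hf : ContDiff ℝ 2 (uncurry f))
    (hosc : ∀ x ∈ Icc 0 T, ∀ y ∈ Icc 0 T, φ t x ≤ ω + φ t y) :
    |∫ θ in 0..T, (f t θ - ⨍ x in 0..T, f t x) * momentum φ f t θ|
      ≤ exp ω * √(T * potential T φ f t) * (exp t * √(T * kinetic T φ f t)) := by
  have hφc : Continuous (φ t) := hφ.continuous.uncurry_left t
  have hfc : Continuous (f t) := hf.continuous.uncurry_left t
  have hfR : Continuous (pdR f t) :=
    (contDiff_pdR hf one_add_one_eq_two.le).continuous.uncurry_left t
  have hfT : Continuous (pdT f t) :=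
    (contDiff_pdT hf one_add_one_eq_two.le).continuous.uncurry_left t
  have hmom : Continuous (momentum φ f t) := (contDiff_momentum hφ hf).continuous.uncurry_left t
  have hpointwise : ∀ θ ∈ Icc 0 T, |(f t θ - ⨍ x in 0..T, f t x) * momentum φ f t θ|
      ≤ exp ω * √(T * potential T φ f t) * (exp (φ t θ) * |pdR f t θ|) := fun θ hθ => by
    have hdev := abs_sub_average_mul_exp_le hT
      (hasDerivAt_pdT (hf.differentiable two_ne_zero) t) hfT hφc hosc hθ hθ
    rw [sub_zero] at hdev
    rw [momentum, two_mul, exp_add, abs_mul, abs_mul, abs_mul, abs_exp, mul_assoc, ← mul_assoc]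
    exact mul_le_mul_of_nonneg_right hdev (by positivity)
  refine ((intervalIntegral.abs_integral_le_integral_abs hT.le).trans <|
    intervalIntegral.integral_mono_on hT.le (Continuous.intervalIntegrable (by fun_prop) _ _)
      (Continuous.intervalIntegrable (by fun_prop) _ _) hpointwise).trans ?_
  rw [intervalIntegral.integral_const_mul]
  gcongr
  exact integral_exp_mul_abs_pdR_le hT.le hφc hfR

lemma abs_correction_le (hT : 0 < T) (hφ : ContDiff ℝ 1 (uncurry φ))
    (hf : ContDiff ℝ 2 (uncurry f))
    (hosc : ∀ x ∈ Icc 0 T, ∀ y ∈ Icc 0 T, φ t x ≤ ω + φ t y) :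
    |correction T φ f t| ≤ exp (-t) * (exp ω * (T * (kinetic T φ f t + potential T φ f t))) := by
  have hAMGM : √(T * potential T φ f t) * √(T * kinetic T φ f t)
      ≤ T * (kinetic T φ f t + potential T φ f t) := by
    have hK : 0 ≤ T * kinetic T φ f t := mul_nonneg hT.le (kinetic_nonneg hT.le)
    have hV : 0 ≤ T * potential T φ f t := mul_nonneg hT.le (potential_nonneg hT.le)
    nlinarith [two_mul_le_add_sq √(T * potential T φ f t) √(T * kinetic T φ f t), sq_sqrt hK,
      sq_sqrt hV]
  have hexp : exp (-2 * t) * exp t = exp (-t) := by rw [← exp_add]; ring_nf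
  rw [correction, abs_mul, abs_exp]
  calc exp (-2 * t) * |∫ θ in 0..T, (f t θ - ⨍ x in 0..T, f t x) * momentum φ f t θ|
      ≤ exp (-2 * t) * (exp ω * √(T * potential T φ f t) * (exp t * √(T * kinetic T φ f t))) := by
        gcongr
        exact abs_integral_sub_average_mul_momentum_le hT hφ hf hosc
    _ = exp (-t) * (exp ω * (√(T * potential T φ f t) * √(T * kinetic T φ f t))) := by
        rw [← hexp]
        ring
    _ ≤ _ := by gcongr

lemma neg_average_pdR_mul_integral_momentum_le (hT : 0 < T) (hφ : Continuous (φ t))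
    (hfR : Continuous (pdR f t))
    (hosc : ∀ x ∈ Icc 0 T, ∀ y ∈ Icc 0 T, φ t x ≤ ω + φ t y) :
    -(exp (-2 * t) * ((⨍ θ in 0..T, pdR f t θ) * ∫ θ in 0..T, momentum φ f t θ))
      ≤ (exp (2 * ω) - 1) * kinetic T φ f t := by
  have h := neg_integral_mul_integral_exp_mul_le hT.le hφ hfR hosc
  rw [sub_zero] at h
  rw [interval_average_eq_div, sub_zero]
  calc -(exp (-2 * t) * ((∫ θ in 0..T, pdR f t θ) / T * ∫ θ in 0..T, momentum φ f t θ))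
      = exp (-2 * t) / T * -((∫ θ in 0..T, pdR f t θ) * ∫ θ in 0..T, momentum φ f t θ) := by ring
    _ ≤ exp (-2 * t) / T * ((exp (2 * ω) - 1)
          * (T * ∫ θ in 0..T, exp (2 * φ t θ) * pdR f t θ ^ 2)) := by gcongr; exact h
    _ = (exp (2 * ω) - 1) * kinetic T φ f t := by
        rw [kinetic]
        field_simp

lemma abs_average_pdR_le (hT : 0 < T) (hφ : Continuous (φ t)) (hfR : Continuous (pdR f t))
    {p : ℝ} (hp : ∀ θ ∈ Icc 0 T, -φ t θ ≤ p) :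
    |⨍ θ in 0..T, pdR f t θ| ≤ exp p * (exp t * √(T * kinetic T φ f t)) / T := by
  rw [interval_average_eq_div, sub_zero, abs_div, abs_of_pos hT]
  gcongr
  calc |∫ θ in 0..T, pdR f t θ| ≤ ∫ θ in 0..T, |pdR f t θ| :=
        intervalIntegral.abs_integral_le_integral_abs hT.le
    _ ≤ ∫ θ in 0..T, exp p * (exp (φ t θ) * |pdR f t θ|) := by
        refine intervalIntegral.integral_mono_on hT.le
          (Continuous.intervalIntegrable (by fun_prop) _ _)
          (Continuous.intervalIntegrable (by fun_prop) _ _) fun θ hθ => ?_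
        rw [← mul_assoc, ← exp_add]
        exact le_mul_of_one_le_left (abs_nonneg _) (one_le_exp (by linarith [hp θ hθ]))
    _ ≤ _ := by
        rw [intervalIntegral.integral_const_mul]
        gcongr
        exact integral_exp_mul_abs_pdR_le hT.le hφ hfR

end WeightedWave

/-- Classical solutions of the Gowdy equations for `t ≥ t₀`, in logarithmic time `t = log R` and in
the unknowns `P = 2U - t` and `Q = A`: the wave map equations into the hyperbolic plane with metric
`dP² + e^{2P} dQ²`. The spatial period is `T`. -/
structure IsLogGowdy (T t₀ : ℝ) (P Q : ℝ → ℝ → ℝ) : Prop where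
  period_pos : 0 < T
  contDiff_P : ContDiff ℝ 2 (uncurry P)
  contDiff_Q : ContDiff ℝ 2 (uncurry Q)
  periodic_P : ∀ t, Periodic (P t) T
  periodic_Q : ∀ t, Periodic (Q t) T
  wave_P : ∀ t, t₀ ≤ t → IsWeightedWaveAt 0 P (lagrangian P Q) t
  wave_Q : ∀ t, t₀ ≤ t → IsWeightedWaveAt P Q 0 t

/-- The total kinetic energy of the pair `(P, Q)`. -/
noncomputable def totalKinetic (T : ℝ) (P Q : ℝ → ℝ → ℝ) (t : ℝ) : ℝ :=
  kinetic T 0 P t + kinetic T P Q t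

/-- The total energy of the pair `(P, Q)`. -/
noncomputable def energy (T : ℝ) (P Q : ℝ → ℝ → ℝ) (t : ℝ) : ℝ :=
  (kinetic T 0 P t + potential T 0 P t) + (kinetic T P Q t + potential T P Q t)

/-- The bound `√(T * energy)` for the spatial oscillation of `P`. -/
noncomputable def oscBound (T : ℝ) (P Q : ℝ → ℝ → ℝ) (t : ℝ) : ℝ := √(T * energy T P Q t)

/-- The modified energy `energy + ε (correction P + M correction Q)`, which for suitable `ε` and `M`
decays exponentially in `t` up to integrable errors. -/
noncomputable def modifiedEnergy (T : ℝ) (P Q : ℝ → ℝ → ℝ) (ε M t : ℝ) : ℝ :=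
  energy T P Q t + ε * (correction T 0 P t + M * correction T P Q t)

lemma contDiff_uncurry_zero {n : WithTop ℕ∞} : ContDiff ℝ n (uncurry (0 : ℝ → ℝ → ℝ)) :=
  contDiff_const

namespace IsLogGowdy

variable {T t₀ t : ℝ} {P Q : ℝ → ℝ → ℝ}

lemma contDiff_weight (s : IsLogGowdy T t₀ P Q) : ContDiff ℝ 1 (uncurry P) :=
  s.contDiff_P.of_le one_le_two

lemma energy_nonneg (s : IsLogGowdy T t₀ P Q) : 0 ≤ energy T P Q t := by
  have hT := s.period_pos.le
  exact add_nonneg (add_nonneg (kinetic_nonneg hT) (potential_nonneg hT))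
    (add_nonneg (kinetic_nonneg hT) (potential_nonneg hT))

lemma hasDerivAt_energy (s : IsLogGowdy T t₀ P Q) (ht : t₀ ≤ t) :
    HasDerivAt (energy T P Q) (-2 * totalKinetic T P Q t) t := by
  have hL : Continuous (lagrangian P Q t) :=
    (contDiff_lagrangian s.contDiff_weight s.contDiff_Q).continuous.uncurry_left t
  have hP := hasDerivAt_kinetic_add_potential contDiff_uncurry_zero s.contDiff_P (fun _ _ => rfl)
    s.periodic_P hL (s.wave_P t ht)
  have hQ := hasDerivAt_kinetic_add_potential s.contDiff_weight s.contDiff_Q s.periodic_P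
    s.periodic_Q continuous_const (s.wave_Q t ht)
  refine (hP.add hQ).congr_deriv ?_
  have hzero (θ : ℝ) : pdR (0 : ℝ → ℝ → ℝ) t θ = 0 := deriv_const t 0
  simp only [hzero, Pi.zero_apply, zero_mul, sub_zero, zero_sub, totalKinetic,
    intervalIntegral.integral_neg, mul_comm (lagrangian P Q t _)]
  ring

lemma energy_antitoneOn (s : IsLogGowdy T t₀ P Q) : AntitoneOn (energy T P Q) (Ici t₀) :=
  antitoneOn_of_hasDerivWithinAt_nonpos (convex_Ici t₀)
    (fun _ ht => (s.hasDerivAt_energy ht).continuousAt.continuousWithinAt)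
    (fun _ ht => (s.hasDerivAt_energy (interior_subset ht)).hasDerivWithinAt)
    fun _ _ => mul_nonpos_of_nonpos_of_nonneg (by norm_num)
      (add_nonneg (kinetic_nonneg s.period_pos.le) (kinetic_nonneg s.period_pos.le))

lemma oscBound_antitoneOn (s : IsLogGowdy T t₀ P Q) : AntitoneOn (oscBound T P Q) (Ici t₀) :=
  fun _ hx _ hy hxy =>
    sqrt_le_sqrt (mul_le_mul_of_nonneg_left (s.energy_antitoneOn hx hy hxy) s.period_pos.le)

lemma kinetic_P_le_energy (s : IsLogGowdy T t₀ P Q) : kinetic T 0 P t ≤ energy T P Q t :=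
  have hT := s.period_pos.le
  (le_add_of_nonneg_right (potential_nonneg hT)).trans
    (le_add_of_nonneg_right (add_nonneg (kinetic_nonneg hT) (potential_nonneg hT)))

lemma potential_P_le_energy (s : IsLogGowdy T t₀ P Q) : potential T 0 P t ≤ energy T P Q t :=
  have hT := s.period_pos.le
  (le_add_of_nonneg_left (kinetic_nonneg hT)).trans
    (le_add_of_nonneg_right (add_nonneg (kinetic_nonneg hT) (potential_nonneg hT)))

lemma kinetic_Q_le_energy (s : IsLogGowdy T t₀ P Q) : kinetic T P Q t ≤ energy T P Q t :=
  have hT := s.period_pos.le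
  (le_add_of_nonneg_right (potential_nonneg hT)).trans
    (le_add_of_nonneg_left (add_nonneg (kinetic_nonneg hT) (potential_nonneg hT)))

lemma potential_Q_le_energy (s : IsLogGowdy T t₀ P Q) : potential T P Q t ≤ energy T P Q t :=
  have hT := s.period_pos.le
  (le_add_of_nonneg_left (kinetic_nonneg hT)).trans
    (le_add_of_nonneg_left (add_nonneg (kinetic_nonneg hT) (potential_nonneg hT)))

lemma sqrt_mul_le_oscBound (s : IsLogGowdy T t₀ P Q) {e : ℝ} (he : e ≤ energy T P Q t) :
    √(T * e) ≤ oscBound T P Q t :=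
  sqrt_le_sqrt (mul_le_mul_of_nonneg_left he s.period_pos.le)

lemma P_le_oscBound_add (s : IsLogGowdy T t₀ P Q) {x y : ℝ} (hx : x ∈ Icc 0 T)
    (hy : y ∈ Icc 0 T) : P t x ≤ oscBound T P Q t + P t y := by
  have hosc := abs_sub_mul_exp_le (ω := 0) (φ := fun _ => 0)
    (hasDerivAt_pdT (s.contDiff_P.differentiable two_ne_zero) t)
    ((contDiff_pdT s.contDiff_P one_add_one_eq_two.le).continuous.uncurry_left t)
    continuous_const (by simp) hx hy hx
  have hle := s.sqrt_mul_le_oscBound (s.potential_P_le_energy (t := t))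
  simp only [potential, Pi.zero_apply, mul_zero, exp_zero, mul_one, one_mul, sub_zero] at hosc hle
  linarith [le_abs_self (P t x - P t y)]

lemma abs_P_sub_average_le (s : IsLogGowdy T t₀ P Q) {x : ℝ} (hx : x ∈ Icc 0 T) :
    |P t x - ⨍ y in 0..T, P t y| ≤ oscBound T P Q t := by
  refine abs_sub_average_le s.period_pos
    (s.contDiff_P.continuous.uncurry_left t).continuousOn fun y hy => abs_sub_le_iff.2 ⟨?_, ?_⟩
  · linarith [s.P_le_oscBound_add (t := t) hx hy]
  · linarith [s.P_le_oscBound_add (t := t) hy hx]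

lemma exp_mul_integral_sub_average_mul_lagrangian_le (s : IsLogGowdy T t₀ P Q) :
    exp (-2 * t) * ∫ θ in 0..T, (P t θ - ⨍ x in 0..T, P t x) * lagrangian P Q t θ
      ≤ oscBound T P Q t * (kinetic T P Q t + potential T P Q t) := by
  have hP : Continuous (P t) := s.contDiff_P.continuous.uncurry_left t
  have hL : Continuous (lagrangian P Q t) :=
    (contDiff_lagrangian s.contDiff_weight s.contDiff_Q).continuous.uncurry_left t
  have he : Continuous (energyDensity P Q t) :=
    (contDiff_energyDensity s.contDiff_weight s.contDiff_Q).continuous.uncurry_left t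
  rw [← integral_energyDensity s.contDiff_weight s.contDiff_Q,
    ← intervalIntegral.integral_const_mul, ← intervalIntegral.integral_const_mul]
  refine intervalIntegral.integral_mono_on s.period_pos.le
    (Continuous.intervalIntegrable (by fun_prop) _ _)
    (Continuous.intervalIntegrable (by fun_prop) _ _) fun θ hθ => ?_
  calc exp (-2 * t) * ((P t θ - ⨍ x in 0..T, P t x) * lagrangian P Q t θ)
      ≤ |P t θ - ⨍ x in 0..T, P t x| * (exp (-2 * t) * |lagrangian P Q t θ|) := by
        rw [mul_left_comm |_|, ← abs_mul]
        gcongr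
        exact le_abs_self _
    _ ≤ oscBound T P Q t * energyDensity P Q t θ := by
        gcongr
        · exact sqrt_nonneg _
        · exact s.abs_P_sub_average_le hθ
        · exact exp_mul_abs_lagrangian_le P Q t θ

lemma exists_hasDerivAt_correction_P_le (s : IsLogGowdy T t₀ P Q) (ht : t₀ ≤ t) :
    ∃ c, HasDerivAt (correction T 0 P) c t ∧ c ≤ -2 * correction T 0 P t + kinetic T 0 P t
      - potential T 0 P t + oscBound T P Q t * (kinetic T P Q t + potential T P Q t) := by
  have hL : Continuous (lagrangian P Q t) :=
    (contDiff_lagrangian s.contDiff_weight s.contDiff_Q).continuous.uncurry_left t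
  have hcross := neg_average_pdR_mul_integral_momentum_le (φ := 0) (ω := 0) s.period_pos
    continuous_const
    ((contDiff_pdR s.contDiff_P one_add_one_eq_two.le).continuous.uncurry_left t) (by simp)
  rw [mul_zero, exp_zero, sub_self, zero_mul] at hcross
  refine ⟨_, hasDerivAt_correction contDiff_uncurry_zero s.contDiff_P (fun _ _ => rfl)
    s.periodic_P hL (s.wave_P t ht), ?_⟩
  linarith [s.exp_mul_integral_sub_average_mul_lagrangian_le (t := t)]

lemma exists_hasDerivAt_correction_Q_le (s : IsLogGowdy T t₀ P Q) (ht : t₀ ≤ t) :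
    ∃ c, HasDerivAt (correction T P Q) c t ∧ c ≤ -2 * correction T P Q t
      + exp (2 * oscBound T P Q t) * kinetic T P Q t - potential T P Q t := by
  have hcross := neg_average_pdR_mul_integral_momentum_le s.period_pos
    (s.contDiff_P.continuous.uncurry_left t)
    ((contDiff_pdR s.contDiff_Q one_add_one_eq_two.le).continuous.uncurry_left t)
    fun _ hx _ hy => s.P_le_oscBound_add hx hy
  refine ⟨_, hasDerivAt_correction s.contDiff_weight s.contDiff_Q s.periodic_P
    s.periodic_Q continuous_const (s.wave_Q t ht), ?_⟩
  simp only [Pi.zero_apply, mul_zero, intervalIntegral.integral_zero]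
  linarith

lemma abs_correction_P_le (s : IsLogGowdy T t₀ P Q) :
    |correction T 0 P t| ≤ exp (-t) * (T * energy T P Q t) := by
  have hT := s.period_pos
  have h := abs_correction_le (ω := 0) (t := t) hT contDiff_uncurry_zero s.contDiff_P (by simp)
  rw [exp_zero, one_mul] at h
  refine h.trans ?_
  gcongr
  exact le_add_of_nonneg_right (add_nonneg (kinetic_nonneg hT.le) (potential_nonneg hT.le))

lemma abs_correction_Q_le (s : IsLogGowdy T t₀ P Q) :
    |correction T P Q t| ≤ exp (-t) * (exp (oscBound T P Q t) * (T * energy T P Q t)) := by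
  have hT := s.period_pos
  refine (abs_correction_le hT s.contDiff_weight s.contDiff_Q
    fun _ hx _ hy => s.P_le_oscBound_add hx hy).trans ?_
  gcongr
  exact le_add_of_nonneg_left (add_nonneg (kinetic_nonneg hT.le) (potential_nonneg hT.le))

lemma abs_modifiedEnergy_sub_energy_le (s : IsLogGowdy T t₀ P Q) (ht : t₀ ≤ t) {ε M : ℝ}
    (hε : 0 ≤ ε) (hM : 0 ≤ M) :
    |modifiedEnergy T P Q ε M t - energy T P Q t|
      ≤ ε * (1 + M * exp (oscBound T P Q t₀)) * T * exp (-t) * energy T P Q t := by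
  have hw : oscBound T P Q t ≤ oscBound T P Q t₀ := s.oscBound_antitoneOn self_mem_Ici ht ht
  have hH : 0 ≤ energy T P Q t := s.energy_nonneg
  have hT := s.period_pos
  calc |modifiedEnergy T P Q ε M t - energy T P Q t|
      = ε * |correction T 0 P t + M * correction T P Q t| := by
        rw [modifiedEnergy, add_sub_cancel_left, abs_mul, abs_of_nonneg hε]
    _ ≤ ε * (|correction T 0 P t| + M * |correction T P Q t|) := by
        gcongr
        exact (abs_add_le _ _).trans_eq (by rw [abs_mul, abs_of_nonneg hM])
    _ ≤ ε * (exp (-t) * (T * energy T P Q t)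
          + M * (exp (-t) * (exp (oscBound T P Q t₀) * (T * energy T P Q t)))) := by
        gcongr
        · exact s.abs_correction_P_le
        · exact s.abs_correction_Q_le.trans (by gcongr)
    _ = _ := by ring

lemma exists_hasDerivAt_modifiedEnergy_le (s : IsLogGowdy T t₀ P Q) (ht : t₀ ≤ t) {ε M : ℝ}
    (hε : 0 ≤ ε) (hM : 0 ≤ M) :
    ∃ d, HasDerivAt (modifiedEnergy T P Q ε M) d t ∧
      d ≤ -2 * totalKinetic T P Q t
        + ε * (kinetic T 0 P t - potential T 0 P t
          + oscBound T P Q t * (kinetic T P Q t + potential T P Q t)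
          + M * (exp (2 * oscBound T P Q t) * kinetic T P Q t - potential T P Q t))
        + 2 * (ε * (1 + M * exp (oscBound T P Q t₀)) * T) * exp (-t) * energy T P Q t := by
  obtain ⟨cP, hcP, hcP_le⟩ := s.exists_hasDerivAt_correction_P_le ht
  obtain ⟨cQ, hcQ, hcQ_le⟩ := s.exists_hasDerivAt_correction_Q_le ht
  refine ⟨_, (s.hasDerivAt_energy ht).add ((hcP.add (hcQ.const_mul M)).const_mul ε), ?_⟩
  have hclose := neg_le_of_abs_le (s.abs_modifiedEnergy_sub_energy_le ht hε hM)
  rw [modifiedEnergy] at hclose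
  have hc : ε * (cP + M * cQ) ≤ ε * (-2 * correction T 0 P t + kinetic T 0 P t
      - potential T 0 P t + oscBound T P Q t * (kinetic T P Q t + potential T P Q t)
      + M * (-2 * correction T P Q t + exp (2 * oscBound T P Q t) * kinetic T P Q t
        - potential T P Q t)) := by gcongr
  linarith

lemma exists_energy_le_mul_exp (s : IsLogGowdy T t₀ P Q) {l ε M C δ : ℝ} (hl : 0 ≤ l)
    (hε : 0 ≤ ε) (hM : 0 ≤ M) (hC : 0 ≤ C) (hδ : 0 < δ) (hδ1 : δ ≤ 1)
    (hrate : ∀ t, t₀ ≤ t → -2 * totalKinetic T P Q t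
        + ε * (kinetic T 0 P t - potential T 0 P t
          + oscBound T P Q t * (kinetic T P Q t + potential T P Q t)
          + M * (exp (2 * oscBound T P Q t) * kinetic T P Q t - potential T P Q t))
      ≤ (-l + C * exp (-δ * t)) * energy T P Q t) :
    ∃ B, ∀ t, t₀ ≤ t → energy T P Q t ≤ B * exp (-l * t) := by
  set κ := ε * (1 + M * exp (oscBound T P Q t₀)) * T
  have hκ0 : 0 ≤ κ := mul_nonneg (by positivity) s.period_pos.le
  have hexp {t : ℝ} (ht : t₀ ≤ t) : exp (-t) ≤ exp (-(1 - δ) * t₀) * exp (-δ * t) := by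
    rw [← exp_add]
    exact exp_le_exp.2 (by nlinarith)
  have herror {t : ℝ} (ht : t₀ ≤ t) : κ * exp (-t) * energy T P Q t
      ≤ κ * exp (-(1 - δ) * t₀) * exp (-δ * t) * energy T P Q t := by
    have := s.energy_nonneg (t := t)
    rw [mul_assoc κ (exp (-(1 - δ) * t₀))]
    gcongr
    exact hexp ht
  have hgap {t : ℝ} : 0 ≤ (κ * exp (-(1 - δ) * t₀) + C) * exp (-δ * t) * energy T P Q t :=
    mul_nonneg (by positivity) s.energy_nonneg
  refine exists_le_mul_exp_of_perturbation (D := modifiedEnergy T P Q ε M)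
    (C := 2 * (κ * exp (-(1 - δ) * t₀)) + C) hδ hl (by positivity) (fun t _ => s.energy_nonneg)
    s.energy_antitoneOn (fun t ht => ?_) fun t ht => ?_
  · linarith [s.abs_modifiedEnergy_sub_energy_le ht hε hM, herror ht, hgap (t := t)]
  · obtain ⟨d, hd, hle⟩ := s.exists_hasDerivAt_modifiedEnergy_le ht hε hM
    exact ⟨d, hd, by linarith [hrate t ht, herror ht]⟩

lemma exists_energy_le_mul_exp_of_pos (s : IsLogGowdy T t₀ P Q) :
    ∃ ε > 0, ε ≤ 1 ∧ ∃ B, ∀ t, t₀ ≤ t → energy T P Q t ≤ B * exp (-ε * t) := by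
  set w₀ := oscBound T P Q t₀
  have hw₀ : 0 ≤ w₀ := sqrt_nonneg _
  -- With `M = 1 + w₀`, the loss `-M * potential T P Q` absorbs the gain `w₀ * potential T P Q` and
  -- leaves `-potential T P Q`; the kinetic energy of `Q` is gained with a factor of at most `K`.
  set K := w₀ + (1 + w₀) * exp (2 * w₀)
  have hK1 : 1 ≤ K := by nlinarith [one_le_exp (mul_nonneg zero_le_two hw₀)]
  have hε : 0 < K⁻¹ := by positivity
  have hε1 : K⁻¹ ≤ 1 := inv_le_one_of_one_le₀ hK1
  refine ⟨K⁻¹, hε, hε1, s.exists_energy_le_mul_exp (ε := K⁻¹)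
    (M := 1 + w₀) (C := 0) hε.le hε.le (by positivity) le_rfl one_pos le_rfl fun t ht => ?_⟩
  have hw : oscBound T P Q t ≤ w₀ := s.oscBound_antitoneOn self_mem_Ici ht ht
  have hkP := kinetic_nonneg (φ := 0) (f := P) (t := t) s.period_pos.le
  have hkQ := kinetic_nonneg (φ := P) (f := Q) (t := t) s.period_pos.le
  have hvQ := potential_nonneg (φ := P) (f := Q) (t := t) s.period_pos.le
  have hbound : kinetic T 0 P t - potential T 0 P t
        + oscBound T P Q t * (kinetic T P Q t + potential T P Q t)
        + (1 + w₀) * (exp (2 * oscBound T P Q t) * kinetic T P Q t - potential T P Q t)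
      ≤ kinetic T 0 P t - potential T 0 P t + w₀ * (kinetic T P Q t + potential T P Q t)
        + (1 + w₀) * (exp (2 * w₀) * kinetic T P Q t - potential T P Q t) := by gcongr
  have hKinv : K⁻¹ * K = 1 := inv_mul_cancel₀ (by positivity)
  rw [totalKinetic, energy]
  linear_combination K⁻¹ * hbound + 2 * mul_nonneg (sub_nonneg.2 hε1) hkP
    + mul_nonneg (sub_nonneg.2 hε1) hkQ + kinetic T P Q t * hKinv

lemma oscBound_le_mul_exp (s : IsLogGowdy T t₀ P Q) {B l : ℝ}
    (hB : energy T P Q t ≤ B * exp (-l * t)) :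
    oscBound T P Q t ≤ √(T * B) * exp (-(l / 2) * t) := by
  have hexp : exp (-l * t) = exp (-(l / 2) * t) ^ 2 := by rw [← exp_nat_mul]; ring_nf
  calc oscBound T P Q t ≤ √(T * B * exp (-(l / 2) * t) ^ 2) :=
        sqrt_le_sqrt (by rw [mul_assoc, ← hexp]; gcongr; exact s.period_pos.le)
    _ = _ := by rw [sqrt_mul' _ (sq_nonneg _), sqrt_sq (exp_pos _).le]

lemma exists_energy_le_mul_exp_neg (s : IsLogGowdy T t₀ P Q) :
    ∃ B, ∀ t, t₀ ≤ t → energy T P Q t ≤ B * exp (-1 * t) := by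
  obtain ⟨ε, hε, hε1, B, hdecay⟩ := s.exists_energy_le_mul_exp_of_pos
  set w₀ := oscBound T P Q t₀
  set W := √(T * B)
  refine s.exists_energy_le_mul_exp (ε := 1) (M := 1) (C := (1 + 2 * exp (2 * w₀)) * W) (δ := ε / 2)
    zero_le_one zero_le_one zero_le_one (by positivity) (by positivity) (by linarith)
    fun t ht => ?_
  set w := oscBound T P Q t
  have hw : w ≤ w₀ := s.oscBound_antitoneOn self_mem_Ici ht ht
  have hw_decay : w ≤ W * exp (-(ε / 2) * t) := s.oscBound_le_mul_exp (hdecay t ht)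
  have hw_nonneg : 0 ≤ w := sqrt_nonneg _
  have hexp : exp (2 * w) - 1 ≤ 2 * exp (2 * w₀) * w := by
    calc exp (2 * w) - 1 ≤ 2 * w * exp (2 * w) := exp_sub_one_le_mul_exp _
      _ ≤ 2 * w * exp (2 * w₀) := by gcongr
      _ = _ := by ring
  have hkP := kinetic_nonneg (φ := 0) (f := P) (t := t) s.period_pos.le
  have hvP := potential_nonneg (φ := 0) (f := P) (t := t) s.period_pos.le
  have hH : 0 ≤ energy T P Q t := s.energy_nonneg
  have herror : w * (kinetic T P Q t + potential T P Q t) + (exp (2 * w) - 1) * kinetic T P Q t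
      ≤ (1 + 2 * exp (2 * w₀)) * W * exp (-(ε / 2) * t) * energy T P Q t :=
    calc _ ≤ w * energy T P Q t + 2 * exp (2 * w₀) * w * energy T P Q t := by
          gcongr
          · exact le_add_of_nonneg_left (add_nonneg hkP hvP)
          · exact kinetic_nonneg s.period_pos.le
          · exact s.kinetic_Q_le_energy
      _ = (1 + 2 * exp (2 * w₀)) * w * energy T P Q t := by ring
      _ ≤ _ := by
          rw [mul_assoc _ W]
          gcongr
  simp only [totalKinetic, energy] at herror ⊢
  linarith

lemma exists_oscBound_le_mul_exp (s : IsLogGowdy T t₀ P Q) :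
    ∃ W, ∀ t, t₀ ≤ t → exp t * oscBound T P Q t ≤ W * exp (t / 2) := by
  obtain ⟨B, hB⟩ := s.exists_energy_le_mul_exp_neg
  refine ⟨√(T * B), fun t ht => ?_⟩
  have hexp : exp (t / 2) = exp t * exp (-(1 / 2) * t) := by rw [← exp_add]; ring_nf
  rw [hexp, mul_left_comm]
  exact mul_le_mul_of_nonneg_left (s.oscBound_le_mul_exp (hB t ht)) (exp_pos t).le

lemma exists_abs_P_le (s : IsLogGowdy T t₀ P Q) {W : ℝ}
    (hW : ∀ t, t₀ ≤ t → exp t * oscBound T P Q t ≤ W * exp (t / 2)) :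
    ∃ c, ∀ t, t₀ ≤ t → ∀ θ ∈ Icc 0 T, |P t θ| ≤ c + 2 * (W / T) * exp (t / 2) := by
  have hT := s.period_pos
  have hrate (t : ℝ) (ht : t₀ ≤ t) : |⨍ θ in 0..T, pdR P t θ| ≤ W / T * exp (t / 2) := by
    refine (abs_average_pdR_le (φ := 0) (p := 0) hT continuous_const
      ((contDiff_pdR s.contDiff_P one_add_one_eq_two.le).continuous.uncurry_left t)
      (by simp)).trans ?_
    rw [exp_zero, one_mul, div_mul_eq_mul_div]
    gcongr ?_ / T
    exact (mul_le_mul_of_nonneg_left (s.sqrt_mul_le_oscBound s.kinetic_P_le_energy)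
      (exp_pos t).le).trans (hW t ht)
  have hW0 : 0 ≤ W / T * exp (t₀ / 2) := (abs_nonneg _).trans (hrate t₀ le_rfl)
  have hmean {t : ℝ} (ht : t₀ ≤ t) : |⨍ θ in 0..T, P t θ|
      ≤ |⨍ θ in 0..T, P t₀ θ| + 2 * (W / T) * exp (t / 2) := by
    refine abs_le_of_abs_deriv_le (f := fun t => ⨍ θ in 0..T, P t θ)
      (B := fun t => |⨍ θ in 0..T, P t₀ θ| + 2 * (W / T) * exp (t / 2))
      (fun t _ => hasDerivAt_average_pdR s.contDiff_weight 0 T t)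
      (fun t => (((hasDerivAt_id t).div_const 2).exp.const_mul _).const_add _)
      (by linarith) (fun t ht => (hrate t ht).trans_eq ?_) ht
    simp only [id]
    ring
  refine ⟨|⨍ θ in 0..T, P t₀ θ| + oscBound T P Q t₀, fun t ht θ hθ => ?_⟩
  have hosc := (s.abs_P_sub_average_le hθ).trans (s.oscBound_antitoneOn self_mem_Ici ht ht)
  linarith [abs_sub_abs_le_abs_sub (P t θ) (⨍ y in 0..T, P t y), hmean ht]

lemma abs_average_Q_le (s : IsLogGowdy T t₀ P Q) {W c : ℝ}
    (hW : ∀ t, t₀ ≤ t → exp t * oscBound T P Q t ≤ W * exp (t / 2))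
    (hP : ∀ t, t₀ ≤ t → ∀ θ ∈ Icc 0 T, |P t θ| ≤ c + 2 * (W / T) * exp (t / 2)) (ht : t₀ ≤ t) :
    |⨍ θ in 0..T, Q t θ| ≤ |⨍ θ in 0..T, Q t₀ θ| + exp (c + 2 * (W / T) * exp (t / 2)) := by
  have hT := s.period_pos
  refine abs_le_of_abs_deriv_le (f := fun t => ⨍ θ in 0..T, Q t θ)
    (B := fun t => |⨍ θ in 0..T, Q t₀ θ| + exp (c + 2 * (W / T) * exp (t / 2)))
    (fun t _ => hasDerivAt_average_pdR (s.contDiff_Q.of_le one_le_two) 0 T t)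
    (fun t => ((((hasDerivAt_id t).div_const 2).exp.const_mul _).const_add _).exp.const_add _)
    (le_add_of_nonneg_right (exp_pos _).le) (fun t ht => ?_) ht
  calc |⨍ θ in 0..T, pdR Q t θ|
      ≤ exp (c + 2 * (W / T) * exp (t / 2)) * (exp t * √(T * kinetic T P Q t)) / T :=
        abs_average_pdR_le hT (s.contDiff_P.continuous.uncurry_left t)
          ((contDiff_pdR s.contDiff_Q one_add_one_eq_two.le).continuous.uncurry_left t)
          fun θ hθ => (neg_le_abs _).trans (hP t ht θ hθ)
    _ ≤ exp (c + 2 * (W / T) * exp (t / 2)) * (W * exp (t / 2)) / T := by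
        gcongr _ * ?_ / T
        exact (mul_le_mul_of_nonneg_left (s.sqrt_mul_le_oscBound s.kinetic_Q_le_energy)
          (exp_pos t).le).trans (hW t ht)
    _ = _ := by
        simp only [id]
        ring

lemma abs_Q_sub_average_mul_exp_le (s : IsLogGowdy T t₀ P Q) (ht : t₀ ≤ t) {θ : ℝ}
    (hθ : θ ∈ Icc 0 T) : |Q t θ - ⨍ x in 0..T, Q t x| * exp (P t θ)
      ≤ exp (oscBound T P Q t₀) * oscBound T P Q t₀ := by
  have hw : oscBound T P Q t ≤ oscBound T P Q t₀ := s.oscBound_antitoneOn self_mem_Ici ht ht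
  have hdev := abs_sub_average_mul_exp_le s.period_pos
    (hasDerivAt_pdT (s.contDiff_Q.differentiable two_ne_zero) t)
    ((contDiff_pdT s.contDiff_Q one_add_one_eq_two.le).continuous.uncurry_left t)
    (s.contDiff_P.continuous.uncurry_left t)
    (fun _ hx _ hy => s.P_le_oscBound_add (t := t) hx hy) hθ hθ
  rw [sub_zero] at hdev
  refine hdev.trans (mul_le_mul (exp_le_exp.2 hw) ?_ (sqrt_nonneg _) (exp_pos _).le)
  exact (s.sqrt_mul_le_oscBound s.potential_Q_le_energy).trans hw

lemma exists_abs_Q_mul_exp_le (s : IsLogGowdy T t₀ P Q) :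
    ∃ c K L, 0 ≤ K ∧ ∀ t, t₀ ≤ t → ∀ θ ∈ Icc 0 T,
      |Q t θ| * exp (P t θ) ≤ K * exp (c + L * exp (t / 2)) := by
  obtain ⟨W, hW⟩ := s.exists_oscBound_le_mul_exp
  obtain ⟨c, hP⟩ := s.exists_abs_P_le hW
  set q := |⨍ θ in 0..T, Q t₀ θ|
  set w := oscBound T P Q t₀
  have hw : 0 ≤ w := sqrt_nonneg _
  refine ⟨2 * c, q + 1 + exp w * w, 4 * (W / T), by positivity, fun t ht θ hθ => ?_⟩
  set p := c + 2 * (W / T) * exp (t / 2) with hp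
  have hPp : |P t θ| ≤ p := hP t ht θ hθ
  have hp1 : 1 ≤ exp p := one_le_exp ((abs_nonneg _).trans hPp)
  have htriangle : |Q t θ| ≤ |⨍ x in 0..T, Q t x| + |Q t θ - ⨍ x in 0..T, Q t x| := by
    linarith [abs_sub_abs_le_abs_sub (Q t θ) (⨍ x in 0..T, Q t x)]
  calc |Q t θ| * exp (P t θ)
      ≤ |⨍ x in 0..T, Q t x| * exp (P t θ)
          + |Q t θ - ⨍ x in 0..T, Q t x| * exp (P t θ) := by
        rw [← add_mul]
        gcongr
    _ ≤ (q + exp p) * exp p + exp w * w := by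
        gcongr ?_ * exp ?_ + ?_
        · exact s.abs_average_Q_le hW hP ht
        · exact (le_abs_self _).trans hPp
        · exact s.abs_Q_sub_average_mul_exp_le ht hθ
    _ ≤ (q * exp p + exp p) * exp p + exp w * w * (exp p * exp p) := by
        gcongr (?_ + _) * _ + ?_
        · exact le_mul_of_one_le_right (abs_nonneg _) hp1
        · exact le_mul_of_one_le_right (by positivity) (one_le_mul_of_one_le_of_one_le hp1 hp1)
    _ = (q + 1 + exp w * w) * exp (2 * c + 4 * (W / T) * exp (t / 2)) := by
        have hexp : exp (2 * c + 4 * (W / T) * exp (t / 2)) = exp p * exp p := by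
          rw [← exp_add, hp]
          ring_nf
        rw [hexp]
        ring

lemma exists_abs_Q_mul_exp_add_le (s : IsLogGowdy T t₀ P Q) :
    ∃ C, 0 < C ∧ ∀ t, t₀ ≤ t → ∀ θ, |Q t θ| * exp (P t θ + t) ≤ C * exp (C * exp (t / 2)) := by
  obtain ⟨c, K, L, hK, hbound⟩ := s.exists_abs_Q_mul_exp_le
  refine ⟨max (max (K * exp c) (L + 2)) 1, by positivity, fun t ht θ => ?_⟩
  have hper : Periodic (fun θ => |Q t θ| * exp (P t θ + t)) T := fun θ => by
    simp only [s.periodic_P t θ, s.periodic_Q t θ]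
  obtain ⟨x, hx, hθx⟩ := hper.exists_mem_Ico₀ s.period_pos θ
  have ht_le : t ≤ 2 * exp (t / 2) := by linarith [add_one_le_exp (t / 2)]
  calc |Q t θ| * exp (P t θ + t) = |Q t x| * exp (P t x) * exp t := by
        rw [hθx, exp_add, mul_assoc]
    _ ≤ K * exp (c + L * exp (t / 2)) * exp (2 * exp (t / 2)) := by
        gcongr ?_ * exp ?_
        exact hbound t ht x (Ico_subset_Icc_self hx)
    _ = K * exp c * exp ((L + 2) * exp (t / 2)) := by
        rw [add_mul, exp_add, exp_add]
        ring
    _ ≤ _ := by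
        gcongr
        · exact (le_max_left _ _).trans (le_max_left _ _)
        · exact (le_max_right _ _).trans (le_max_left _ _)

end IsLogGowdy

section LogTime

variable {U A : ℝ → ℝ → ℝ} {t : ℝ}

/-- The amplitude `P = 2U - log R` as a function of `t = log R`. -/
noncomputable def logP (U : ℝ → ℝ → ℝ) (t θ : ℝ) : ℝ := 2 * U (exp t) θ - t

/-- The twist potential `Q = A` as a function of `t = log R`. -/
noncomputable def logQ (A : ℝ → ℝ → ℝ) (t θ : ℝ) : ℝ := A (exp t) θ

lemma pdR_logP (hU : Differentiable ℝ (uncurry U)) (t θ : ℝ) :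
    pdR (logP U) t θ = 2 * (exp t * pdR U (exp t) θ) - 1 := by
  rw [mul_comm (exp t)]
  exact ((((hasDerivAt_pdR hU (exp t) θ).comp t (hasDerivAt_exp t)).const_mul 2).sub
    (hasDerivAt_id t)).deriv

lemma pdT_logP (hU : Differentiable ℝ (uncurry U)) (t θ : ℝ) :
    pdT (logP U) t θ = 2 * pdT U (exp t) θ :=
  (((hasDerivAt_pdT hU (exp t) θ).const_mul 2).sub_const t).deriv

lemma pdR_logQ (hA : Differentiable ℝ (uncurry A)) (t θ : ℝ) :
    pdR (logQ A) t θ = exp t * pdR A (exp t) θ := by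
  rw [mul_comm]
  exact ((hasDerivAt_pdR hA (exp t) θ).comp t (hasDerivAt_exp t)).deriv

lemma exp_two_mul_logP (U : ℝ → ℝ → ℝ) (t θ : ℝ) :
    exp (2 * logP U t θ) = exp (4 * U (exp t) θ) / exp t ^ 2 := by
  rw [← exp_nat_mul, ← exp_sub, logP]
  push_cast
  ring_nf

lemma contDiff_logP {n : WithTop ℕ∞} (hU : ContDiff ℝ n (uncurry U)) :
    ContDiff ℝ n (uncurry (logP U)) :=
  (contDiff_const.mul (hU.comp (f := fun x : ℝ × ℝ => (exp x.1, x.2)) (by fun_prop))).sub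
    contDiff_fst

lemma contDiff_logQ {n : WithTop ℕ∞} (hA : ContDiff ℝ n (uncurry A)) :
    ContDiff ℝ n (uncurry (logQ A)) :=
  hA.comp (f := fun x : ℝ × ℝ => (exp x.1, x.2)) (by fun_prop)

lemma lagrangian_logP_logQ (hA : Differentiable ℝ (uncurry A)) (t θ : ℝ) :
    lagrangian (logP U) (logQ A) t θ
      = exp (4 * U (exp t) θ) * (pdR A (exp t) θ ^ 2 - pdT A (exp t) θ ^ 2) := by
  rw [lagrangian, exp_two_mul_logP, pdR_logQ hA, two_mul t, exp_add]
  change _ * (_ - _ * pdT A (exp t) θ ^ 2) = _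
  field_simp

lemma pdR_momentum_logP (hU : ContDiff ℝ 2 (uncurry U)) (t θ : ℝ) :
    pdR (momentum 0 (logP U)) t θ = 2 * exp t * deriv (fun r => r * pdR U r θ) (exp t) := by
  have hUR : Differentiable ℝ (uncurry (pdR U)) :=
    (contDiff_pdR hU one_add_one_eq_two.le).differentiable one_ne_zero
  have hmomentum : momentum 0 (logP U) = fun s x => 2 * (exp s * pdR U (exp s) x) - 1 := by
    ext s x
    simp [momentum, pdR_logP (hU.differentiable two_ne_zero)]
  have hd : DifferentiableAt ℝ (fun r => r * pdR U r θ) (exp t) :=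
    differentiableAt_id.mul (hasDerivAt_pdR hUR (exp t) θ).differentiableAt
  rw [hmomentum]
  refine (((hd.hasDerivAt.comp t (hasDerivAt_exp t)).const_mul 2).sub_const 1).deriv.trans ?_
  ring

lemma exp_mul_pdT_flux_logP (hU : ContDiff ℝ 2 (uncurry U)) (t θ : ℝ) :
    exp (2 * t) * pdT (flux 0 (logP U)) t θ
      = 2 * exp t * deriv (fun x => exp t * pdT U (exp t) x) θ := by
  have hUT : Differentiable ℝ (uncurry (pdT U)) :=
    (contDiff_pdT hU one_add_one_eq_two.le).differentiable one_ne_zero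
  have hflux : flux 0 (logP U) = fun s x => 2 * pdT U (exp s) x := by
    ext s x
    simp [flux, pdT_logP (hU.differentiable two_ne_zero)]
  rw [hflux, ((hasDerivAt_pdT hUT (exp t) θ).const_mul _).deriv, pdT,
    ((hasDerivAt_pdT hUT (exp t) θ).const_mul 2).deriv, two_mul t, exp_add]
  ring

lemma isWeightedWaveAt_logP (hU : ContDiff ℝ 2 (uncurry U)) (hA : Differentiable ℝ (uncurry A))
    (eqU : ∀ θ, deriv (fun r => r * pdR U r θ) (exp t) - deriv (fun x => exp t * pdT U (exp t) x) θ
      = exp (4 * U (exp t) θ) / (2 * exp t) * (pdR A (exp t) θ ^ 2 - pdT A (exp t) θ ^ 2)) :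
    IsWeightedWaveAt 0 (logP U) (lagrangian (logP U) (logQ A)) t := by
  intro θ
  rw [pdR_momentum_logP hU, exp_mul_pdT_flux_logP hU, lagrangian_logP_logQ hA,
    ← sub_eq_iff_eq_add', ← mul_sub, eqU]
  field_simp

lemma pdR_momentum_logQ (hU : Differentiable ℝ (uncurry U)) (hA : ContDiff ℝ 2 (uncurry A))
    (t θ : ℝ) : pdR (momentum (logP U) (logQ A)) t θ
      = exp t * exp (4 * U (exp t) θ) * (deriv (fun r => r⁻¹ * pdR A r θ) (exp t)
        + 4 / exp t * (pdR U (exp t) θ * pdR A (exp t) θ)) := by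
  have hAR : Differentiable ℝ (uncurry (pdR A)) :=
    (contDiff_pdR hA one_add_one_eq_two.le).differentiable one_ne_zero
  have hmomentum : momentum (logP U) (logQ A)
      = fun s x => exp (4 * U (exp s) x) * ((exp s)⁻¹ * pdR A (exp s) x) := by
    ext s x
    rw [momentum, exp_two_mul_logP, pdR_logQ (hA.differentiable two_ne_zero)]
    field_simp
  have hd : DifferentiableAt ℝ (fun r => r⁻¹ * pdR A r θ) (exp t) :=
    (differentiableAt_inv (exp_ne_zero t)).mul (hasDerivAt_pdR hAR (exp t) θ).differentiableAt
  rw [hmomentum]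
  refine ((((hasDerivAt_pdR hU (exp t) θ).const_mul 4).exp.mul hd.hasDerivAt).comp t
    (hasDerivAt_exp t)).deriv.trans ?_
  ring

lemma exp_mul_pdT_flux_logQ (hU : Differentiable ℝ (uncurry U)) (hA : ContDiff ℝ 2 (uncurry A))
    (t θ : ℝ) : exp (2 * t) * pdT (flux (logP U) (logQ A)) t θ
      = exp t * exp (4 * U (exp t) θ) * (deriv (fun x => (exp t)⁻¹ * pdT A (exp t) x) θ
        + 4 / exp t * (pdT U (exp t) θ * pdT A (exp t) θ)) := by
  have hAT : Differentiable ℝ (uncurry (pdT A)) :=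
    (contDiff_pdT hA one_add_one_eq_two.le).differentiable one_ne_zero
  have hflux : flux (logP U) (logQ A)
      = fun s x => (exp s)⁻¹ * (exp (4 * U (exp s) x) * ((exp s)⁻¹ * pdT A (exp s) x)) := by
    ext s x
    rw [flux, exp_two_mul_logP]
    change _ * pdT A (exp s) x = _
    field_simp
  have hd : DifferentiableAt ℝ (fun x => (exp t)⁻¹ * pdT A (exp t) x) θ :=
    ((hasDerivAt_pdT hAT (exp t) θ).const_mul _).differentiableAt
  have hderiv : pdT (flux (logP U) (logQ A)) t θ
      = (exp t)⁻¹ * (exp (4 * U (exp t) θ) * (4 * pdT U (exp t) θ) * ((exp t)⁻¹ * pdT A (exp t) θ)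
        + exp (4 * U (exp t) θ) * deriv (fun x => (exp t)⁻¹ * pdT A (exp t) x) θ) := by
    rw [hflux]
    exact ((((hasDerivAt_pdT hU (exp t) θ).const_mul 4).exp.mul hd.hasDerivAt).const_mul _).deriv
  rw [hderiv, two_mul t, exp_add]
  field_simp
  ring

lemma isWeightedWaveAt_logQ (hU : Differentiable ℝ (uncurry U)) (hA : ContDiff ℝ 2 (uncurry A))
    (eqA : ∀ θ, deriv (fun r => r⁻¹ * pdR A r θ) (exp t)
        - deriv (fun x => (exp t)⁻¹ * pdT A (exp t) x) θ
      = 4 / exp t * (-(pdR U (exp t) θ * pdR A (exp t) θ) + pdT U (exp t) θ * pdT A (exp t) θ)) :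
    IsWeightedWaveAt (logP U) (logQ A) 0 t := by
  intro θ
  rw [pdR_momentum_logQ hU hA, exp_mul_pdT_flux_logQ hU hA]
  simp only [Pi.zero_apply]
  linear_combination exp t * exp (4 * U (exp t) θ) * eqA θ

lemma isLogGowdy_logP_logQ {T R₀ : ℝ} (hT : 0 < T) (hR₀ : 0 < R₀)
    (hU : ContDiff ℝ 2 (uncurry U)) (hA : ContDiff ℝ 2 (uncurry A))
    (hUper : ∀ R, Periodic (U R) T) (hAper : ∀ R, Periodic (A R) T)
    (eqU : ∀ R, R₀ ≤ R → ∀ θ, deriv (fun r => r * pdR U r θ) R - deriv (fun x => R * pdT U R x) θ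
      = exp (4 * U R θ) / (2 * R) * (pdR A R θ ^ 2 - pdT A R θ ^ 2))
    (eqA : ∀ R, R₀ ≤ R → ∀ θ,
      deriv (fun r => r⁻¹ * pdR A r θ) R - deriv (fun x => R⁻¹ * pdT A R x) θ
        = 4 / R * (-(pdR U R θ * pdR A R θ) + pdT U R θ * pdT A R θ)) :
    IsLogGowdy T (log R₀) (logP U) (logQ A) where
  period_pos := hT
  contDiff_P := contDiff_logP hU
  contDiff_Q := contDiff_logQ hA
  periodic_P t θ := by simp only [logP, hUper (exp t) θ]
  periodic_Q t := hAper (exp t)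
  wave_P t ht := isWeightedWaveAt_logP hU (hA.differentiable two_ne_zero)
    (eqU (exp t) ((log_le_iff_le_exp hR₀).1 ht))
  wave_Q t ht := isWeightedWaveAt_logQ (hU.differentiable two_ne_zero) hA
    (eqA (exp t) ((log_le_iff_le_exp hR₀).1 ht))

end LogTime

end Gowdy

theorem stmt13_general
    {T : ℝ} (hT : 0 < T) {R₀ : ℝ} (hR₀ : 0 < R₀)
    {U A : ℝ → ℝ → ℝ}
    (hU : ContDiff ℝ 2 (Function.uncurry U))
    (hA : ContDiff ℝ 2 (Function.uncurry A))
    (hUper : ∀ R θ, U R (θ + T) = U R θ)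
    (hAper : ∀ R θ, A R (θ + T) = A R θ)
    (eqU : ∀ R, R₀ ≤ R → ∀ θ : ℝ,
      deriv (fun r => r * pdR U r θ) R - deriv (fun t => R * pdT U R t) θ
        = exp (4 * U R θ) / (2 * R) * ((pdR A R θ) ^ 2 - (pdT A R θ) ^ 2))
    (eqA : ∀ R, R₀ ≤ R → ∀ θ : ℝ,
      deriv (fun r => r⁻¹ * pdR A r θ) R - deriv (fun t => R⁻¹ * pdT A R t) θ
        = 4 / R * (-(pdR U R θ * pdR A R θ) + pdT U R θ * pdT A R θ)) :
    ∃ C : ℝ, 0 < C ∧ ∀ R, R₀ ≤ R → ∀ θ : ℝ,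
      |A R θ * exp (2 * U R θ)| ≤ C * exp (C * √R) := by
  obtain ⟨C, hC, hbound⟩ :=
    (Gowdy.isLogGowdy_logP_logQ hT hR₀ hU hA hUper hAper eqU eqA).exists_abs_Q_mul_exp_add_le
  refine ⟨C, hC, fun R hR θ => ?_⟩
  have hlog : exp (log R) = R := exp_log (hR₀.trans_le hR)
  have h := hbound (log R) (log_le_log hR₀ hR) θ
  rwa [Gowdy.logP, Gowdy.logQ, sub_add_cancel, exp_half, hlog, ← abs_exp, ← abs_mul] at h

theorem stmt13
    (R₀ : ℝ) (hR₀ : 0 < R₀)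
    (U A : ℝ → ℝ → ℝ)
    (hU : ContDiff ℝ (⊤ : ℕ∞) (Function.uncurry U))
    (hA : ContDiff ℝ (⊤ : ℕ∞) (Function.uncurry A))
    (hUper : ∀ R θ, U R (θ + 2 * π) = U R θ)
    (hAper : ∀ R θ, A R (θ + 2 * π) = A R θ)
    (eqU : ∀ R, R₀ ≤ R → ∀ θ : ℝ,
      deriv (fun r => r * pdR U r θ) R - deriv (fun t => R * pdT U R t) θ
        = exp (4 * U R θ) / (2 * R) * ((pdR A R θ) ^ 2 - (pdT A R θ) ^ 2))
    (eqA : ∀ R, R₀ ≤ R → ∀ θ : ℝ,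
      deriv (fun r => r⁻¹ * pdR A r θ) R - deriv (fun t => R⁻¹ * pdT A R t) θ
        = 4 / R * (-(pdR U R θ * pdR A R θ) + pdT U R θ * pdT A R θ))
 :
    ∃ C : ℝ, 0 < C ∧ ∀ R, R₀ ≤ R → ∀ θ : ℝ,
      |A R θ * exp (2 * U R θ)| ≤ C * exp (C * Real.sqrt R) :=
  stmt13_general two_pi_pos hR₀ (mod_cast contDiff_infty.1 hU 2) (mod_cast contDiff_infty.1 hA 2)
    hUper hAper eqU eqA
end

section
/- For any fixed real numbers J_X and J_Y there exists a constant C > 0, depending only on the solution and on J_X, J_Y, such that for all R ≥ R₀ and θ ∈ ℝ: | (R^{−2} A(R,θ)² e^{2U(R,θ)} + e^{−2U(R,θ)}) J_X − A(R,θ) e^{2U(R,θ)} R^{−2} J_Y | ≤ C e^{C R^{1/2}} and | −A(R,θ) e^{2U(R,θ)} R^{−2} J_X + R^{−2} e^{2U(R,θ)} J_Y | ≤ C e^{C R^{1/2}}. -/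
open Real MeasureTheory Set

/-!
Up to the factor `R`, the Gowdy metric on the symmetry orbits is a positive definite matrix of
determinant one, that is, a point `X(R, θ)` of the hyperbolic plane, realised as a sheet of the
hyperboloid `det = 1` in the space of symmetric matrices. The Gowdy equations say that `X` solves
`X_RR + X_R / R - X_θθ = (|X_R|² - |X_θ|²) X`. The quantities to be bounded are combinations of the
entries of `X / R`, so everything reduces to a bound on the height `⟨X, e⟩`, half the trace.

Let `K` and `Z` be the integrals of `|X_R|²` and `|X_θ|²` over a circle of constant `R`. The energy
`K + Z` satisfies `(K + Z)' = -2 K / R`, so the images of the circles have bounded length. Adding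
to the energy a multiple of `⟨∫ X_R, ∫ X⟩ / R` replaces the dissipation `2 K / R` by `(K + Z) / R`,
up to errors absorbed by an integrating factor; hence `K + Z = O(1 / R)`.

The logarithm of the height is Lipschitz for the hyperbolic distance. Its mean over a circle thus
has `R`-derivative at most `(√R K + T / √R) / (2 T) = O(1 / √R)`, where `T` is the period, and
grows like `√R`; its oscillation over a circle is bounded by the energy.
-/

open Filter Topology Interval
open scoped ContDiff

/-! ### Directional derivatives -/

section DirDeriv

variable {V F G H : Type*} [NormedAddCommGroup V] [NormedSpace ℝ V]
  [NormedAddCommGroup F] [NormedSpace ℝ F] [NormedAddCommGroup G] [NormedSpace ℝ G]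
  [NormedAddCommGroup H] [NormedSpace ℝ H]

/-- The derivative of `f` along the constant vector field `v`, again a function of the base point,
so that mixed second derivatives are `dirDeriv v (dirDeriv w f)`. -/
noncomputable def dirDeriv (v : V) (f : V → F) (p : V) : F := fderiv ℝ f p v

theorem hasDerivAt_dirDeriv_comp {f : V → F} {γ : ℝ → V} {v : V} {s : ℝ}
    (hf : DifferentiableAt ℝ f (γ s)) (hγ : HasDerivAt γ v s) :
    HasDerivAt (fun t => f (γ t)) (dirDeriv v f (γ s)) s :=
  hf.hasFDerivAt.comp_hasDerivAt s hγ

theorem contDiffAt_dirDeriv {f : V → F} {p : V} {m n : WithTop ℕ∞} (v : V)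
    (hf : ContDiffAt ℝ n f p) (hmn : m + 1 ≤ n) : ContDiffAt ℝ m (dirDeriv v f) p :=
  (hf.fderiv_right hmn).clm_apply contDiffAt_const

theorem dirDeriv_dirDeriv_eq {f : V → F} {p : V} (v w : V) (hf : ContDiffAt ℝ 2 f p) :
    dirDeriv v (dirDeriv w f) p = fderiv ℝ (fderiv ℝ f) p v w := by
  have hdf : DifferentiableAt ℝ (fderiv ℝ f) p :=
    (hf.fderiv_right (m := 1) (by norm_num)).differentiableAt one_ne_zero
  change fderiv ℝ (fun q => fderiv ℝ f q w) p v = _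
  simp [fderiv_clm_apply hdf (differentiableAt_const w)]

theorem dirDeriv_comm {f : V → F} {p : V} (v w : V) (hf : ContDiffAt ℝ 2 f p) :
    dirDeriv v (dirDeriv w f) p = dirDeriv w (dirDeriv v f) p := by
  rw [dirDeriv_dirDeriv_eq v w hf, dirDeriv_dirDeriv_eq w v hf]
  exact hf.isSymmSndFDerivAt (by simp) v w

theorem dirDeriv_bilin (B : F →L[ℝ] G →L[ℝ] H) {f : V → F} {g : V → G} {p : V} (v : V)
    (hf : DifferentiableAt ℝ f p) (hg : DifferentiableAt ℝ g p) :
    dirDeriv v (fun q => B (f q) (g q)) p =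
      B (f p) (dirDeriv v g p) + B (dirDeriv v f p) (g p) := by
  simp only [dirDeriv, B.fderiv_of_bilinear hf hg]
  rfl

theorem dirDeriv_add_period {f : V → F} {c : V} (v : V) (hf : ∀ p, f (p + c) = f p) (p : V) :
    dirDeriv v f (p + c) = dirDeriv v f p := by
  rw [dirDeriv, dirDeriv, ← fderiv_comp_add_right, funext hf]

end DirDeriv

local notation "∂R" => dirDeriv ((1, 0) : ℝ × ℝ)
local notation "∂θ" => dirDeriv ((0, 1) : ℝ × ℝ)

section Coordinates

variable {F : Type*} [NormedAddCommGroup F] [NormedSpace ℝ F]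

theorem hasDerivAt_fst {f : ℝ × ℝ → F} {R θ : ℝ} (hf : DifferentiableAt ℝ f (R, θ)) :
    HasDerivAt (fun r => f (r, θ)) (∂R f (R, θ)) R :=
  hasDerivAt_dirDeriv_comp hf ((hasDerivAt_id R).prodMk (hasDerivAt_const R θ))

theorem hasDerivAt_snd {f : ℝ × ℝ → F} {R θ : ℝ} (hf : DifferentiableAt ℝ f (R, θ)) :
    HasDerivAt (fun t => f (R, t)) (∂θ f (R, θ)) θ :=
  hasDerivAt_dirDeriv_comp hf ((hasDerivAt_const θ R).prodMk (hasDerivAt_id θ))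

end Coordinates

/-! ### The hyperboloid of a Lorentzian form -/

section Hyperboloid

variable {E : Type*} [NormedAddCommGroup E] [NormedSpace ℝ E]

/-- A symmetric form of Lorentzian signature `(+, -, …, -)`, expressed by the reverse
Cauchy–Schwarz inequality for timelike vectors. Degenerate and negative semidefinite forms are
allowed. -/
structure IsLorentzian (B : E →L[ℝ] E →L[ℝ] ℝ) : Prop where
  symm : ∀ x y, B x y = B y x
  reverse_cauchy_schwarz : ∀ x y, 0 < B x x → B x x * B y y ≤ B x y ^ 2

/-- The sheet of the unit hyperboloid on which the height `x ↦ B x e` is positive. If `B` is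
Lorentzian and `B e e = 1`, it is the hyperbolic space through `e`, and `B x y` is the hyperbolic
cosine of the distance from `x` to `y`. -/
def hyperboloid (B : E →L[ℝ] E →L[ℝ] ℝ) (e : E) : Set E := {x | B x x = 1 ∧ 0 < B x e}

variable {B : E →L[ℝ] E →L[ℝ] ℝ} {e x y a : E}

theorem mem_hyperboloid_self (he : B e e = 1) : e ∈ hyperboloid B e :=
  ⟨he, he.symm ▸ one_pos⟩

namespace IsLorentzian

theorem apply_self_le_sq (hB : IsLorentzian B) (hx : B x x = 1) (v : E) : B v v ≤ B x v ^ 2 := by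
  simpa [hx] using hB.reverse_cauchy_schwarz x v (hx.symm ▸ one_pos)

theorem apply_self_nonpos (hB : IsLorentzian B) (hx : B x x = 1) (ha : B x a = 0) : B a a ≤ 0 := by
  simpa [ha] using hB.apply_self_le_sq hx a

theorem one_le_apply (hB : IsLorentzian B) (he : B e e = 1) (hx : x ∈ hyperboloid B e)
    (hy : y ∈ hyperboloid B e) : 1 ≤ B x y := by
  obtain ⟨hxx, hxe⟩ := hx
  obtain ⟨hyy, hye⟩ := hy
  have horth : B e (B y e • x - B x e • y) = 0 := by
    simp [hB.symm e, mul_comm]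
  have hspace := hB.apply_self_nonpos he horth
  simp only [map_sub, map_smul, sub_apply, smul_apply, smul_eq_mul, hxx, hyy, hB.symm y x] at hspace
  nlinarith [sq_nonneg (B x e - B y e), mul_pos hxe hye]

/-- The Cauchy–Schwarz inequality of the form `v ↦ B x v ^ 2 - B v v`, which is nonnegative. -/
theorem apply_sq_le_of_tangent (hB : IsLorentzian B) (hx : B x x = 1) (ha : B x a = 0)
    (hy : B y y = 1) : B a y ^ 2 ≤ -B a a * (B x y ^ 2 - 1) := by
  let Q : LinearMap.BilinForm ℝ E := LinearMap.mk₂ ℝ (fun v w => B x v * B x w - B v w)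
    (fun _ _ _ => by simp; ring) (fun _ _ _ => by simp; ring)
    (fun _ _ _ => by simp; ring) (fun _ _ _ => by simp; ring)
  have hQ_nonneg : ∀ v, 0 ≤ Q v v := fun v => by
    simpa [Q, ← sq] using hB.apply_self_le_sq hx v
  have hQ_symm : LinearMap.IsSymm Q := ⟨fun v w => by simp [Q, hB.symm v w, mul_comm]⟩
  simpa [Q, ha, hy, sq] using Q.apply_sq_le_of_symm hQ_nonneg hQ_symm a y

theorem div_apply_sq_le_of_tangent (hB : IsLorentzian B) (hx : B x x = 1) (ha : B x a = 0)
    (hy : B y y = 1) : (B a y / B x y) ^ 2 ≤ -B a a := by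
  have haa := neg_nonneg.mpr (hB.apply_self_nonpos hx ha)
  rw [div_pow]
  exact div_le_of_le_mul₀ (sq_nonneg _) haa (by linarith [hB.apply_sq_le_of_tangent hx ha hy])

theorem apply_sq_le_of_tangent_of_apply_le (hB : IsLorentzian B) (he : B e e = 1)
    (hx : x ∈ hyperboloid B e) (hy : y ∈ hyperboloid B e) (ha : B x a = 0) {L M : ℝ}
    (hL : B x y ≤ L) (hM : B x y ≤ M) : B a y ^ 2 ≤ -B a a * ((L + 1) * (M - 1)) := by
  have hone := hB.one_le_apply he hx hy
  calc B a y ^ 2 ≤ -B a a * (B x y ^ 2 - 1) := hB.apply_sq_le_of_tangent hx.1 ha hy.1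
    _ ≤ -B a a * ((L + 1) * (M - 1)) :=
        mul_le_mul_of_nonneg_left (by nlinarith) (neg_nonneg.mpr (hB.apply_self_nonpos hx.1 ha))

end IsLorentzian

end Hyperboloid

/-! ### Integral inequalities -/

theorem abs_le_half_add_of_sq_le_mul {x a b : ℝ} (ha : 0 ≤ a) (hb : 0 ≤ b) (h : x ^ 2 ≤ a * b) :
    |x| ≤ (a + b) / 2 :=
  abs_le_of_sq_le_sq (by nlinarith [sq_nonneg (a - b)]) (by positivity)

theorem sub_le_integral_of_abs_deriv_le {f f' h : ℝ → ℝ} {T s t : ℝ}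
    (hf : ∀ r, HasDerivAt f (f' r) r) (hf' : Continuous f') (hh : Continuous h)
    (hle : ∀ r ∈ Icc 0 T, |f' r| ≤ h r) (hs : s ∈ Icc 0 T) (ht : t ∈ Icc 0 T) :
    f s - f t ≤ ∫ r in 0..T, h r := by
  have hT : 0 ≤ T := hs.1.trans hs.2
  have hh_nonneg : ∀ r ∈ Icc 0 T, 0 ≤ h r := fun r hr => (abs_nonneg _).trans (hle r hr)
  have hsub : Ι t s ⊆ Ι 0 T := by
    rw [uIoc, uIoc_of_le hT]
    exact Ioc_subset_Ioc (le_min ht.1 hs.1) (max_le ht.2 hs.2)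
  have hIcc : Ι 0 T ⊆ Icc 0 T := uIoc_of_le hT ▸ Ioc_subset_Icc_self
  calc f s - f t = ∫ r in t..s, f' r :=
        (intervalIntegral.integral_eq_sub_of_hasDerivAt (fun r _ => hf r)
          (hf'.intervalIntegrable t s)).symm
    _ ≤ |∫ r in t..s, h r| := (Real.le_norm_self _).trans <|
        intervalIntegral.norm_integral_le_abs_of_norm_le
          (ae_restrict_of_forall_mem measurableSet_uIoc fun r hr => hle r (hIcc (hsub hr)))
          (hh.intervalIntegrable t s)
    _ ≤ |∫ r in 0..T, h r| := intervalIntegral.abs_integral_mono_interval hsub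
        (ae_restrict_of_forall_mem measurableSet_uIoc fun r hr => hh_nonneg r (hIcc hr))
        (hh.intervalIntegrable 0 T)
    _ = ∫ r in 0..T, h r :=
        abs_of_nonneg (intervalIntegral.integral_nonneg hT hh_nonneg)

theorem sq_integral_le {f : ℝ → ℝ} {T : ℝ} (hT : 0 < T) (hf : Continuous f) :
    (∫ s in 0..T, f s) ^ 2 ≤ T * ∫ s in 0..T, f s ^ 2 := by
  set I := ∫ s in 0..T, f s with hI
  have hvar : ∫ s in 0..T, (T * f s - I) ^ 2 = T * (T * (∫ s in 0..T, f s ^ 2) - I ^ 2) := by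
    have hint : ∀ g : ℝ → ℝ, Continuous g → IntervalIntegrable g volume 0 T :=
      fun g hg => hg.intervalIntegrable 0 T
    calc ∫ s in 0..T, (T * f s - I) ^ 2
        = ∫ s in 0..T, (T ^ 2 * f s ^ 2 - 2 * T * I * f s + I ^ 2) := by
          congr 1 with s; ring
      _ = T ^ 2 * (∫ s in 0..T, f s ^ 2) - 2 * T * I * I + T * I ^ 2 := by
          rw [intervalIntegral.integral_add (hint _ (by fun_prop)) (hint _ (by fun_prop)),
            intervalIntegral.integral_sub (hint _ (by fun_prop)) (hint _ (by fun_prop)),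
            intervalIntegral.integral_const_mul, intervalIntegral.integral_const_mul,
            intervalIntegral.integral_const, ← hI, sub_zero, smul_eq_mul]
      _ = _ := by ring
  have hnonneg : 0 ≤ ∫ s in 0..T, (T * f s - I) ^ 2 :=
    intervalIntegral.integral_nonneg hT.le fun s _ => sq_nonneg _
  exact sub_nonneg.mp (nonneg_of_mul_nonneg_right (hvar ▸ hnonneg) hT)

theorem apply_integral_integral_le {E : Type*} [NormedAddCommGroup E] [NormedSpace ℝ E]
    [CompleteSpace E] (B : E →L[ℝ] E →L[ℝ] ℝ) {f g : ℝ → E} {h : ℝ → ℝ} {T : ℝ} (hT : 0 ≤ T)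
    (hf : Continuous f) (hg : Continuous g) (hh : Continuous h)
    (hle : ∀ s ∈ Icc 0 T, ∀ t ∈ Icc 0 T, B (f s) (g t) ≤ h s) :
    B (∫ s in 0..T, f s) (∫ t in 0..T, g t) ≤ T * ∫ s in 0..T, h s := by
  have hinner : ∀ s ∈ Icc 0 T, B (f s) (∫ t in 0..T, g t) ≤ T * h s := fun s hs =>
    calc B (f s) (∫ t in 0..T, g t) = ∫ t in 0..T, B (f s) (g t) :=
          ((B (f s)).intervalIntegral_comp_comm (hg.intervalIntegrable 0 T)).symm
      _ ≤ ∫ _ in 0..T, h s := intervalIntegral.integral_mono_on hT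
          (Continuous.intervalIntegrable (by fun_prop) 0 T) intervalIntegrable_const (hle s hs)
      _ = T * h s := by simp
  calc B (∫ s in 0..T, f s) (∫ t in 0..T, g t)
      = ∫ s in 0..T, B (f s) (∫ t in 0..T, g t) :=
        ((B.flip _).intervalIntegral_comp_comm (hf.intervalIntegrable 0 T)).symm
    _ ≤ ∫ s in 0..T, T * h s := intervalIntegral.integral_mono_on hT
        (Continuous.intervalIntegrable (by fun_prop) 0 T)
        (Continuous.intervalIntegrable (by fun_prop) 0 T) hinner
    _ = T * ∫ s in 0..T, h s := intervalIntegral.integral_const_mul _ _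

/-! ### Curves of finite energy in the hyperboloid -/

section Curve

variable {E : Type*} [NormedAddCommGroup E] [NormedSpace ℝ E] {B : E →L[ℝ] E →L[ℝ] ℝ} {e : E}
  {y y' : ℝ → E} {T s t : ℝ}

theorem IsLorentzian.apply_velocity_eq_zero (hB : IsLorentzian B) {v : E}
    (hunit : ∀ r, B (y r) (y r) = 1) (hy : HasDerivAt y v s) : B (y s) v = 0 := by
  have hderiv := B.hasDerivAt_of_bilinear (fun _ => hy) fun _ => hy
  simp only [hunit, hB.symm v] at hderiv
  linarith [hderiv.unique (hasDerivAt_const s (1 : ℝ))]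

theorem IsLorentzian.log_apply_sub_log_apply_le (hB : IsLorentzian B) (he : B e e = 1)
    (hy : ∀ r, HasDerivAt y (y' r) r) (hy' : Continuous y') (hmem : ∀ r, y r ∈ hyperboloid B e)
    {x : E} (hx : x ∈ hyperboloid B e) (hs : s ∈ Icc 0 T) (ht : t ∈ Icc 0 T) :
    log (B (y s) x) - log (B (y t) x) ≤ (T + ∫ r in 0..T, -B (y' r) (y' r)) / 2 := by
  have hy_cont : Continuous y := continuous_iff_continuousAt.mpr fun r => (hy r).continuousAt
  have hone : ∀ r, 1 ≤ B (y r) x := fun r => hB.one_le_apply he (hmem r) hx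
  have hpos : ∀ r, 0 < B (y r) x := fun r => one_pos.trans_le (hone r)
  have hderiv : ∀ r, HasDerivAt (fun r => log (B (y r) x)) (B (y' r) x / B (y r) x) r := fun r =>
    ((B.flip x).hasFDerivAt.comp_hasDerivAt r (hy r)).log (hpos r).ne'
  have hle : ∀ r, |B (y' r) x / B (y r) x| ≤ (1 + -B (y' r) (y' r)) / 2 := fun r => by
    have htan := hB.apply_velocity_eq_zero (fun r => (hmem r).1) (hy r)
    refine abs_le_half_add_of_sq_le_mul zero_le_one
      (neg_nonneg.mpr (hB.apply_self_nonpos (hmem r).1 htan)) ?_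
    rw [one_mul]
    exact hB.div_apply_sq_le_of_tangent (hmem r).1 htan hx.1
  calc log (B (y s) x) - log (B (y t) x)
      ≤ ∫ r in 0..T, (1 + -B (y' r) (y' r)) / 2 :=
        sub_le_integral_of_abs_deriv_le (f := fun r => log (B (y r) x)) hderiv
          (Continuous.div (by fun_prop) (by fun_prop) fun r => (hpos r).ne') (by fun_prop)
          (fun r _ => hle r) hs ht
    _ = (T + ∫ r in 0..T, -B (y' r) (y' r)) / 2 := by
        rw [intervalIntegral.integral_div, intervalIntegral.integral_add intervalIntegrable_const
          (Continuous.intervalIntegrable (by fun_prop) 0 T)]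
        simp

theorem IsLorentzian.apply_le_exp (hB : IsLorentzian B) (he : B e e = 1)
    (hy : ∀ r, HasDerivAt y (y' r) r) (hy' : Continuous y') (hmem : ∀ r, y r ∈ hyperboloid B e)
    (hs : s ∈ Icc 0 T) (ht : t ∈ Icc 0 T) :
    B (y s) (y t) ≤ exp ((T + ∫ r in 0..T, -B (y' r) (y' r)) / 2) := by
  have hlog := hB.log_apply_sub_log_apply_le he hy hy' hmem (hmem t) hs ht
  rw [(hmem t).1, log_one, sub_zero] at hlog
  exact (log_le_iff_le_exp (one_pos.trans_le (hB.one_le_apply he (hmem s) (hmem t)))).mp hlog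

theorem IsLorentzian.apply_sub_one_le_mul_energy (hB : IsLorentzian B) (he : B e e = 1)
    (hT : 0 < T) (hy : ∀ r, HasDerivAt y (y' r) r) (hy' : Continuous y')
    (hmem : ∀ r, y r ∈ hyperboloid B e) {L : ℝ}
    (hL : ∀ s ∈ Icc 0 T, ∀ t ∈ Icc 0 T, B (y s) (y t) ≤ L) (hs : s ∈ Icc 0 T) (ht : t ∈ Icc 0 T) :
    B (y s) (y t) - 1 ≤ T * (L + 1) * ∫ r in 0..T, -B (y' r) (y' r) := by
  have hy_cont : Continuous y := continuous_iff_continuousAt.mpr fun r => (hy r).continuousAt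
  obtain ⟨m, hm, hmax⟩ := isCompact_Icc.exists_isMaxOn ⟨t, ht⟩
    (show ContinuousOn (fun r => B (y r) (y t)) (Icc 0 T) by fun_prop)
  set M := B (y m) (y t)
  have hM : ∀ r ∈ Icc 0 T, B (y r) (y t) ≤ M := fun r hr => hmax hr
  have hM_one : 1 ≤ M := hB.one_le_apply he (hmem m) (hmem t)
  have hL_pos : 0 < L := by linarith [hL m hm t ht]
  have hderiv : ∀ r, HasDerivAt (fun r => B (y r) (y t)) (B (y' r) (y t)) r := fun r =>
    (B.flip (y t)).hasFDerivAt.comp_hasDerivAt r (hy r)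
  have hle : ∀ r ∈ Icc 0 T,
      |B (y' r) (y t)| ≤ (T * (L + 1) * -B (y' r) (y' r) + (M - 1) / T) / 2 := fun r hr => by
    have htan := hB.apply_velocity_eq_zero (fun r => (hmem r).1) (hy r)
    refine abs_le_half_add_of_sq_le_mul
      (mul_nonneg (by positivity) (neg_nonneg.mpr (hB.apply_self_nonpos (hmem r).1 htan)))
      (div_nonneg (sub_nonneg.mpr hM_one) hT.le) ?_
    calc B (y' r) (y t) ^ 2 ≤ -B (y' r) (y' r) * ((L + 1) * (M - 1)) :=
          hB.apply_sq_le_of_tangent_of_apply_le he (hmem r) (hmem t) htan (hL r hr t ht) (hM r hr)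
      _ = _ := by field_simp
  have hM_sub := sub_le_integral_of_abs_deriv_le (f := fun r => B (y r) (y t)) hderiv
    (by fun_prop) (by fun_prop) hle hm ht
  have hint : IntervalIntegrable (fun r => T * (L + 1) * -B (y' r) (y' r)) volume 0 T :=
    Continuous.intervalIntegrable (by fun_prop) 0 T
  rw [intervalIntegral.integral_div, intervalIntegral.integral_add hint intervalIntegrable_const,
    intervalIntegral.integral_const_mul, intervalIntegral.integral_const, sub_zero, smul_eq_mul,
    mul_div_cancel₀ _ hT.ne', (hmem t).1] at hM_sub
  linarith [hM s hs]

end Curve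

/-! ### Integrals over time slices -/

theorem continuous_slice {F : Type*} [TopologicalSpace F] {f : ℝ × ℝ → F} {R : ℝ}
    (hf : ∀ θ, ContinuousAt f (R, θ)) : Continuous fun θ => f (R, θ) :=
  continuous_iff_continuousAt.mpr fun θ => (hf θ).comp (by fun_prop)

section SliceIntegral

variable {F : Type*} [NormedAddCommGroup F] [NormedSpace ℝ F] {f : ℝ × ℝ → F} {T R : ℝ}

/-- The integral of `f` over the circle of circumference `T` at time `R`. -/
noncomputable def sliceIntegral (T : ℝ) (f : ℝ × ℝ → F) (R : ℝ) : F := ∫ θ in 0..T, f (R, θ)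

theorem continuous_slice_dirDeriv (v : ℝ × ℝ) (hf : ∀ θ, ContDiffAt ℝ 1 f (R, θ)) :
    Continuous fun θ => dirDeriv v f (R, θ) :=
  continuous_slice fun θ => (contDiffAt_dirDeriv v (hf θ) (m := 0) (by simp)).continuousAt

theorem eventually_contDiffAt_and_norm_dirDeriv_le (T : ℝ) (hf : ∀ θ, ContDiffAt ℝ 1 f (R, θ)) :
    ∀ᶠ r in 𝓝 R, ∀ θ ∈ [[0, T]],
      ContDiffAt ℝ 1 f (r, θ) ∧ ‖∂R f (r, θ)‖ ≤ ‖∂R f (R, θ)‖ + 1 := by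
  refine isCompact_uIcc.eventually_forall_of_forall_eventually fun θ _ => ?_
  refine ((hf θ).eventually (by simp)).and ?_
  have hcont : ContinuousAt (∂R f) (R, θ) :=
    (contDiffAt_dirDeriv _ (hf θ) (m := 0) (by simp)).continuousAt
  have hcont_slice : ContinuousAt (fun q : ℝ × ℝ => ∂R f (R, q.2)) (R, θ) :=
    ContinuousAt.comp (x := (R, θ)) (g := ∂R f) (f := fun q : ℝ × ℝ => (R, q.2)) hcont (by fun_prop)
  have hlt : ‖∂R f (R, θ)‖ < ‖∂R f (R, θ)‖ + 1 := lt_add_one _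
  filter_upwards [hcont.norm.eventually_lt (hcont_slice.norm.add_const 1) hlt] with q hq
  exact hq.le

theorem hasDerivAt_sliceIntegral (T : ℝ) (hf : ∀ θ, ContDiffAt ℝ 1 f (R, θ)) :
    HasDerivAt (sliceIntegral T f) (sliceIntegral T (∂R f) R) R := by
  have hnear := eventually_contDiffAt_and_norm_dirDeriv_le T hf
  have hf_cont : Continuous fun θ => f (R, θ) := continuous_slice fun θ => (hf θ).continuousAt
  refine (intervalIntegral.hasDerivAt_integral_of_dominated_loc_of_deriv_le
    (F := fun r θ => f (r, θ)) (F' := fun r θ => ∂R f (r, θ))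
    (bound := fun θ => ‖∂R f (R, θ)‖ + 1) hnear ?_ (hf_cont.intervalIntegrable 0 T)
    (continuous_slice_dirDeriv _ hf).aestronglyMeasurable
    (ae_of_all _ fun θ hθ r hr => (hr θ (uIoc_subset_uIcc hθ)).2)
    (((continuous_slice_dirDeriv _ hf).norm.add continuous_const).intervalIntegrable 0 T)
    (ae_of_all _ fun θ hθ r hr => ?_)).2
  · filter_upwards [hnear] with r hr
    refine ContinuousOn.aestronglyMeasurable (fun θ hθ => ?_) measurableSet_uIoc
    exact ((hr θ (uIoc_subset_uIcc hθ)).1.continuousAt.comp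
      (f := fun t => (r, t)) (by fun_prop)).continuousWithinAt
  · exact hasDerivAt_fst ((hr θ (uIoc_subset_uIcc hθ)).1.differentiableAt one_ne_zero)

theorem sliceIntegral_dirDeriv_eq_zero [CompleteSpace F] (hf : ∀ θ, ContDiffAt ℝ 1 f (R, θ))
    (hper : ∀ θ, f (R, θ + T) = f (R, θ)) : sliceIntegral T (∂θ f) R = 0 := by
  have hftc := intervalIntegral.integral_eq_sub_of_hasDerivAt
    (fun θ _ => hasDerivAt_snd ((hf θ).differentiableAt one_ne_zero))
    ((continuous_slice_dirDeriv _ hf).intervalIntegrable 0 T)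
  have hends : f (R, T) = f (R, 0) := by simpa using hper 0
  rwa [hends, sub_self] at hftc

end SliceIntegral

/-! ### Periodic wave maps and their energy -/

section WaveMap

variable {E : Type*} [NormedAddCommGroup E] [NormedSpace ℝ E]

/-- The energy density of a map into the hyperboloid in the direction `v`. Tangent vectors of the
hyperboloid are spacelike, whence the sign. -/
noncomputable def energyDensity (B : E →L[ℝ] E →L[ℝ] ℝ) (X : ℝ × ℝ → E) (v p : ℝ × ℝ) : ℝ :=
  -B (dirDeriv v X p) (dirDeriv v X p)

/-- `X` satisfies, at times `p.1 ≥ R₀`, the equation `X_RR + X_R / R - X_θθ = (|X_R|² - |X_θ|²) X`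
of a wave map into the hyperboloid, and has period `T` in `θ`. -/
structure IsPeriodicWaveMap (B : E →L[ℝ] E →L[ℝ] ℝ) (e : E) (T R₀ : ℝ) (X : ℝ × ℝ → E) : Prop where
  mem_hyperboloid : ∀ p, X p ∈ hyperboloid B e
  periodic : ∀ p, X (p + (0, T)) = X p
  contDiffAt : ∀ p, R₀ ≤ p.1 → ContDiffAt ℝ 2 X p
  wave_eq : ∀ p, R₀ ≤ p.1 → ∂R (∂R X) p - ∂θ (∂θ X) p + p.1⁻¹ • ∂R X p =
    (energyDensity B X (1, 0) p - energyDensity B X (0, 1) p) • X p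

/-- The part of the energy on the slice at time `R` carried by the `R`-derivative. -/
noncomputable def kineticEnergy (B : E →L[ℝ] E →L[ℝ] ℝ) (T : ℝ) (X : ℝ × ℝ → E) : ℝ → ℝ :=
  sliceIntegral T (energyDensity B X (1, 0))

/-- The part of the energy on the slice at time `R` carried by the `θ`-derivative. -/
noncomputable def potentialEnergy (B : E →L[ℝ] E →L[ℝ] ℝ) (T : ℝ) (X : ℝ × ℝ → E) : ℝ → ℝ :=
  sliceIntegral T (energyDensity B X (0, 1))

/-- The energy of a map into the hyperboloid on the slice at time `R`. -/
noncomputable def energy (B : E →L[ℝ] E →L[ℝ] ℝ) (T : ℝ) (X : ℝ × ℝ → E) (R : ℝ) : ℝ :=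
  kineticEnergy B T X R + potentialEnergy B T X R

namespace IsPeriodicWaveMap

variable {B : E →L[ℝ] E →L[ℝ] ℝ} {e : E} {T R₀ R : ℝ} {X : ℝ × ℝ → E} {p : ℝ × ℝ}

theorem differentiableAt (hX : IsPeriodicWaveMap B e T R₀ X) (hp : R₀ ≤ p.1) :
    DifferentiableAt ℝ X p :=
  (hX.contDiffAt p hp).differentiableAt two_ne_zero

theorem contDiffAt_dirDeriv (hX : IsPeriodicWaveMap B e T R₀ X) (v : ℝ × ℝ) (hp : R₀ ≤ p.1) :
    ContDiffAt ℝ 1 (dirDeriv v X) p :=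
  _root_.contDiffAt_dirDeriv v (hX.contDiffAt p hp) (by norm_num)

theorem differentiableAt_dirDeriv (hX : IsPeriodicWaveMap B e T R₀ X) (v : ℝ × ℝ)
    (hp : R₀ ≤ p.1) : DifferentiableAt ℝ (dirDeriv v X) p :=
  (hX.contDiffAt_dirDeriv v hp).differentiableAt one_ne_zero

theorem contDiffAt_apply_dirDeriv (hX : IsPeriodicWaveMap B e T R₀ X) (v w : ℝ × ℝ)
    (hp : R₀ ≤ p.1) : ContDiffAt ℝ 1 (fun q => B (dirDeriv v X q) (dirDeriv w X q)) p :=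
  (contDiffAt_const.clm_apply (hX.contDiffAt_dirDeriv v hp)).clm_apply
    (hX.contDiffAt_dirDeriv w hp)

theorem contDiffAt_energyDensity (hX : IsPeriodicWaveMap B e T R₀ X) (v : ℝ × ℝ)
    (hp : R₀ ≤ p.1) : ContDiffAt ℝ 1 (energyDensity B X v) p :=
  (hX.contDiffAt_apply_dirDeriv v v hp).neg

theorem continuous_slice_energyDensity (hX : IsPeriodicWaveMap B e T R₀ X) (v : ℝ × ℝ)
    (hR : R₀ ≤ R) : Continuous fun θ => energyDensity B X v (R, θ) :=
  continuous_slice fun _ => (hX.contDiffAt_energyDensity v hR).continuousAt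

theorem continuous_slice_dirDeriv (hX : IsPeriodicWaveMap B e T R₀ X) (v : ℝ × ℝ)
    (hR : R₀ ≤ R) : Continuous fun θ => dirDeriv v X (R, θ) :=
  continuous_slice fun _ => (hX.contDiffAt_dirDeriv v hR).continuousAt

theorem hasDerivAt_slice (hX : IsPeriodicWaveMap B e T R₀ X) (hR : R₀ ≤ R) (θ : ℝ) :
    HasDerivAt (fun θ => X (R, θ)) (∂θ X (R, θ)) θ :=
  hasDerivAt_snd (hX.differentiableAt hR)

theorem continuous_slice (hX : IsPeriodicWaveMap B e T R₀ X) (hR : R₀ ≤ R) :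
    Continuous fun θ => X (R, θ) :=
  continuous_iff_continuousAt.mpr fun θ => (hX.hasDerivAt_slice hR θ).continuousAt

theorem apply_dirDeriv_eq_zero (hB : IsLorentzian B) (hX : IsPeriodicWaveMap B e T R₀ X)
    (v : ℝ × ℝ) (hp : R₀ ≤ p.1) : B (X p) (dirDeriv v X p) = 0 := by
  have hbilin := dirDeriv_bilin B v (hX.differentiableAt hp) (hX.differentiableAt hp)
  have hconst : dirDeriv v (fun _ : ℝ × ℝ => (1 : ℝ)) p = 0 := by simp [dirDeriv]
  simp only [(hX.mem_hyperboloid _).1, hB.symm (dirDeriv v X p)] at hbilin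
  linarith

theorem energyDensity_nonneg (hB : IsLorentzian B) (hX : IsPeriodicWaveMap B e T R₀ X)
    (v : ℝ × ℝ) (hp : R₀ ≤ p.1) : 0 ≤ energyDensity B X v p :=
  neg_nonneg.mpr <|
    hB.apply_self_nonpos (hX.mem_hyperboloid p).1 (hX.apply_dirDeriv_eq_zero hB v hp)

theorem kineticEnergy_nonneg (hB : IsLorentzian B) (hX : IsPeriodicWaveMap B e T R₀ X)
    (hT : 0 ≤ T) (hR : R₀ ≤ R) : 0 ≤ kineticEnergy B T X R :=
  intervalIntegral.integral_nonneg hT fun _ _ => hX.energyDensity_nonneg hB _ hR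

theorem potentialEnergy_nonneg (hB : IsLorentzian B) (hX : IsPeriodicWaveMap B e T R₀ X)
    (hT : 0 ≤ T) (hR : R₀ ≤ R) : 0 ≤ potentialEnergy B T X R :=
  intervalIntegral.integral_nonneg hT fun _ _ => hX.energyDensity_nonneg hB _ hR

theorem dirDeriv_energyDensity (hB : IsLorentzian B) (hX : IsPeriodicWaveMap B e T R₀ X)
    (v w : ℝ × ℝ) (hp : R₀ ≤ p.1) : dirDeriv v (energyDensity B X w) p =
      -(2 * B (dirDeriv w X p) (dirDeriv v (dirDeriv w X) p)) := by
  have hw := hX.differentiableAt_dirDeriv w hp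
  have hbilin := dirDeriv_bilin B v hw hw
  rw [hB.symm (dirDeriv v (dirDeriv w X) p), ← two_mul] at hbilin
  rw [← hbilin]
  exact DFunLike.congr_fun (fderiv_fun_neg ..) v

theorem dirDeriv_energyDensity_add (hB : IsLorentzian B) (hX : IsPeriodicWaveMap B e T R₀ X)
    (hp : R₀ ≤ p.1) :
    ∂R (energyDensity B X (1, 0)) p + ∂R (energyDensity B X (0, 1)) p =
      -(2 * ∂θ (fun q => B (∂R X q) (∂θ X q)) p) - 2 * p.1⁻¹ * energyDensity B X (1, 0) p := by
  have hR := hX.differentiableAt_dirDeriv (1, 0) hp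
  have hθ := hX.differentiableAt_dirDeriv (0, 1) hp
  have hwave := congrArg (B (∂R X p)) (hX.wave_eq p hp)
  simp only [map_add, map_sub, map_smul, smul_eq_mul, hB.symm (∂R X p) (X p),
    hX.apply_dirDeriv_eq_zero hB _ hp, mul_zero] at hwave
  rw [hX.dirDeriv_energyDensity hB _ _ hp, hX.dirDeriv_energyDensity hB _ _ hp,
    dirDeriv_bilin B _ hR hθ, dirDeriv_comm (1, 0) (0, 1) (hX.contDiffAt p hp),
    hB.symm (∂θ (∂R X) p), energyDensity]
  linear_combination -2 * hwave

theorem sliceIntegral_dirDeriv_flux_eq_zero (hX : IsPeriodicWaveMap B e T R₀ X) (hR : R₀ ≤ R) :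
    sliceIntegral T (∂θ fun q => B (∂R X q) (∂θ X q)) R = 0 := by
  refine sliceIntegral_dirDeriv_eq_zero (fun _ => hX.contDiffAt_apply_dirDeriv _ _ hR) fun θ => ?_
  have hshift : ((R, θ + T) : ℝ × ℝ) = (R, θ) + (0, T) := by simp
  simp only [hshift, dirDeriv_add_period _ hX.periodic]

theorem hasDerivAt_energy (hB : IsLorentzian B) (hX : IsPeriodicWaveMap B e T R₀ X)
    (hR : R₀ ≤ R) : HasDerivAt (energy B T X) (-(2 * R⁻¹ * kineticEnergy B T X R)) R := by
  have hdens : ∀ v θ, ContDiffAt ℝ 1 (energyDensity B X v) (R, θ) :=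
    fun v _ => hX.contDiffAt_energyDensity v hR
  have hint : ∀ {f : ℝ × ℝ → ℝ} (v : ℝ × ℝ), (∀ θ, ContDiffAt ℝ 1 f (R, θ)) →
      IntervalIntegrable (fun θ => dirDeriv v f (R, θ)) volume 0 T :=
    fun v hf => (_root_.continuous_slice_dirDeriv v hf).intervalIntegrable 0 T
  have hslice : sliceIntegral T (∂R (energyDensity B X (1, 0))) R +
      sliceIntegral T (∂R (energyDensity B X (0, 1))) R = -(2 * R⁻¹ * kineticEnergy B T X R) :=
    calc _ = ∫ θ in 0..T, (-(2 * ∂θ (fun q => B (∂R X q) (∂θ X q)) (R, θ)) -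
            2 * R⁻¹ * energyDensity B X (1, 0) (R, θ)) := by
          rw [sliceIntegral, sliceIntegral,
            ← intervalIntegral.integral_add (hint _ (hdens _)) (hint _ (hdens _))]
          congr 1 with θ
          exact hX.dirDeriv_energyDensity_add hB hR
      _ = -(2 * sliceIntegral T (∂θ fun q => B (∂R X q) (∂θ X q)) R) -
            2 * R⁻¹ * kineticEnergy B T X R := by
          rw [intervalIntegral.integral_sub, intervalIntegral.integral_neg,
            intervalIntegral.integral_const_mul, intervalIntegral.integral_const_mul]
          · rfl
          · exact ((hint _ fun _ => hX.contDiffAt_apply_dirDeriv _ _ hR).const_mul 2).neg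
          · exact ((hX.continuous_slice_energyDensity _ hR).intervalIntegrable 0 T).const_mul _
      _ = _ := by rw [hX.sliceIntegral_dirDeriv_flux_eq_zero hR]; ring
  exact hslice ▸ (hasDerivAt_sliceIntegral T (hdens _)).add (hasDerivAt_sliceIntegral T (hdens _))

theorem energy_le_energy_initial (hB : IsLorentzian B) (hX : IsPeriodicWaveMap B e T R₀ X)
    (hT : 0 ≤ T) (hR₀ : 0 < R₀) (hR : R₀ ≤ R) : energy B T X R ≤ energy B T X R₀ := by
  refine antitoneOn_of_hasDerivWithinAt_nonpos (D := Ici R₀)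
    (f' := fun r => -(2 * r⁻¹ * kineticEnergy B T X r)) (convex_Ici R₀)
    (fun r hr => (hX.hasDerivAt_energy hB hr).continuousAt.continuousWithinAt)
    (fun r hr => (hX.hasDerivAt_energy hB (interior_subset hr)).hasDerivWithinAt)
    (fun r hr => ?_) self_mem_Ici hR hR
  have hr : R₀ ≤ r := interior_subset hr
  have hK := hX.kineticEnergy_nonneg hB hT hr
  have hr_pos := hR₀.trans_le hr
  exact neg_nonpos.mpr (by positivity)

theorem potentialEnergy_le_energy_initial (hB : IsLorentzian B) (hX : IsPeriodicWaveMap B e T R₀ X)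
    (hT : 0 ≤ T) (hR₀ : 0 < R₀) (hR : R₀ ≤ R) : potentialEnergy B T X R ≤ energy B T X R₀ :=
  (le_add_of_nonneg_left (hX.kineticEnergy_nonneg hB hT hR)).trans
    (hX.energy_le_energy_initial hB hT hR₀ hR)

theorem apply_le_exp (hB : IsLorentzian B) (he : B e e = 1) (hX : IsPeriodicWaveMap B e T R₀ X)
    (hR₀ : 0 < R₀) (hR : R₀ ≤ R) {s t : ℝ} (hs : s ∈ Icc 0 T) (ht : t ∈ Icc 0 T) :
    B (X (R, s)) (X (R, t)) ≤ exp ((T + energy B T X R₀) / 2) := by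
  refine (hB.apply_le_exp he (hX.hasDerivAt_slice hR) (hX.continuous_slice_dirDeriv _ hR)
    (fun _ => hX.mem_hyperboloid _) hs ht).trans ?_
  gcongr
  exact hX.potentialEnergy_le_energy_initial hB (hs.1.trans hs.2) hR₀ hR

theorem exists_apply_le_and_apply_sq_le (hB : IsLorentzian B) (he : B e e = 1)
    (hX : IsPeriodicWaveMap B e T R₀ X) (hT : 0 < T) (hR₀ : 0 < R₀) :
    ∃ C, 0 < C ∧ ∀ R, R₀ ≤ R → ∀ s ∈ Icc 0 T, ∀ t ∈ Icc 0 T,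
      B (X (R, s)) (X (R, t)) ≤ 1 + C * potentialEnergy B T X R ∧
      B (∂R X (R, s)) (X (R, t)) ^ 2 ≤
        energyDensity B X (1, 0) (R, s) * (C * potentialEnergy B T X R) := by
  set L := exp ((T + energy B T X R₀) / 2)
  have hL_pos : 0 < L := exp_pos _
  refine ⟨T * (L + 1) ^ 2, by positivity, fun R hR s hs t ht => ?_⟩
  have hZ := hX.potentialEnergy_nonneg hB hT.le hR
  have hL : ∀ s ∈ Icc 0 T, ∀ t ∈ Icc 0 T, B (X (R, s)) (X (R, t)) ≤ L :=
    fun s hs t ht => hX.apply_le_exp hB he hR₀ hR hs ht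
  have hM : B (X (R, s)) (X (R, t)) - 1 ≤ T * (L + 1) * potentialEnergy B T X R :=
    hB.apply_sub_one_le_mul_energy he hT (hX.hasDerivAt_slice hR)
      (hX.continuous_slice_dirDeriv _ hR) (fun _ => hX.mem_hyperboloid _) hL hs ht
  constructor
  · have hle : T * (L + 1) ≤ T * (L + 1) ^ 2 := by gcongr; nlinarith
    linarith [mul_le_mul_of_nonneg_right hle hZ]
  · refine (hB.apply_sq_le_of_tangent_of_apply_le he (hX.mem_hyperboloid _) (hX.mem_hyperboloid _)
      (hX.apply_dirDeriv_eq_zero hB _ hR) (hL s hs t ht) (sub_le_iff_le_add'.mp hM)).trans_eq ?_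
    rw [energyDensity]
    ring

end IsPeriodicWaveMap

end WaveMap

/-! ### The correction to the energy -/

section Correction

variable {E : Type*} [NormedAddCommGroup E] [NormedSpace ℝ E]

/-- The correction `⟨∫ X_R, ∫ X⟩`, whose `R`-derivative is approximately `T (K - Z)`. Added to the
energy it spreads the dissipation, which acts on `K` only, over `K` and `Z`. -/
noncomputable def correction (B : E →L[ℝ] E →L[ℝ] ℝ) (T : ℝ) (X : ℝ × ℝ → E) (R : ℝ) : ℝ :=
  B (sliceIntegral T (∂R X) R) (sliceIntegral T X R)

namespace IsPeriodicWaveMap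

variable {B : E →L[ℝ] E →L[ℝ] ℝ} {e : E} {T R₀ R : ℝ} {X : ℝ × ℝ → E}

theorem hasDerivAt_correction (hX : IsPeriodicWaveMap B e T R₀ X) (hR : R₀ ≤ R) :
    HasDerivAt (correction B T X) (B (sliceIntegral T (∂R X) R) (sliceIntegral T (∂R X) R) +
      B (sliceIntegral T (∂R (∂R X)) R) (sliceIntegral T X R)) R :=
  B.hasDerivAt_of_bilinear
    (fun _ => hasDerivAt_sliceIntegral T fun _ => hX.contDiffAt_dirDeriv _ hR)
    fun _ => hasDerivAt_sliceIntegral T fun _ => (hX.contDiffAt _ hR).of_le one_le_two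

variable [CompleteSpace E]

theorem sliceIntegral_dirDeriv_dirDeriv (hX : IsPeriodicWaveMap B e T R₀ X) (hR : R₀ ≤ R) :
    sliceIntegral T (∂R (∂R X)) R =
      sliceIntegral T
        (fun p => (energyDensity B X (1, 0) p - energyDensity B X (0, 1) p) • X p) R -
      R⁻¹ • sliceIntegral T (∂R X) R := by
  have hXR : ∀ v θ, ContDiffAt ℝ 1 (dirDeriv v X) (R, θ) := fun v _ => hX.contDiffAt_dirDeriv v hR
  have hXθθ : sliceIntegral T (∂θ (∂θ X)) R = 0 := by
    refine sliceIntegral_dirDeriv_eq_zero (hXR _) fun θ => ?_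
    simpa using dirDeriv_add_period (0, 1) hX.periodic (R, θ)
  have hwave : ∀ θ, (energyDensity B X (1, 0) (R, θ) - energyDensity B X (0, 1) (R, θ)) • X (R, θ) =
      ∂R (∂R X) (R, θ) - ∂θ (∂θ X) (R, θ) + R⁻¹ • ∂R X (R, θ) :=
    fun θ => (hX.wave_eq (R, θ) hR).symm
  have hint : ∀ v, IntervalIntegrable (fun θ => dirDeriv v (dirDeriv v X) (R, θ)) volume 0 T :=
    fun v => (_root_.continuous_slice_dirDeriv v (hXR v)).intervalIntegrable 0 T
  have hintR : IntervalIntegrable (fun θ => R⁻¹ • ∂R X (R, θ)) volume 0 T :=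
    ((hX.continuous_slice_dirDeriv _ hR).const_smul R⁻¹).intervalIntegrable 0 T
  rw [eq_sub_iff_add_eq]
  calc _ = sliceIntegral T (∂R (∂R X)) R - sliceIntegral T (∂θ (∂θ X)) R +
          R⁻¹ • sliceIntegral T (∂R X) R := by rw [hXθθ, sub_zero]
    _ = _ := by
      simp only [sliceIntegral, hwave]
      rw [intervalIntegral.integral_add ((hint _).sub (hint _)) hintR,
        intervalIntegral.integral_sub (hint _) (hint _), intervalIntegral.integral_smul]

theorem abs_correction_le (hB : IsLorentzian B) (hX : IsPeriodicWaveMap B e T R₀ X)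
    (hT : 0 ≤ T) (hR : R₀ ≤ R) {m : ℝ} (hm : 0 ≤ m)
    (hsq : ∀ s ∈ Icc 0 T, ∀ t ∈ Icc 0 T,
      B (∂R X (R, s)) (X (R, t)) ^ 2 ≤ energyDensity B X (1, 0) (R, s) * m) :
    |correction B T X R| ≤ T * ((kineticEnergy B T X R + T * m) / 2) := by
  have hXR := hX.continuous_slice_dirDeriv (1, 0) hR
  have hk := hX.continuous_slice_energyDensity (1, 0) hR
  have habs : ∀ s ∈ Icc 0 T, ∀ t ∈ Icc 0 T,
      |B (∂R X (R, s)) (X (R, t))| ≤ (energyDensity B X (1, 0) (R, s) + m) / 2 := fun s hs t ht =>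
    abs_le_half_add_of_sq_le_mul (hX.energyDensity_nonneg hB _ hR) hm (hsq s hs t ht)
  have hint : ∫ s in 0..T, (energyDensity B X (1, 0) (R, s) + m) / 2 =
      (kineticEnergy B T X R + T * m) / 2 := by
    rw [intervalIntegral.integral_div, intervalIntegral.integral_add
      (hk.intervalIntegrable 0 T) intervalIntegrable_const]
    simp [kineticEnergy, sliceIntegral]
  rw [← hint, abs_le']
  constructor
  · exact apply_integral_integral_le B hT hXR (hX.continuous_slice hR) (by fun_prop)
      fun s hs t ht => (abs_le'.mp (habs s hs t ht)).1
  · have hneg := apply_integral_integral_le (-B) hT hXR (hX.continuous_slice hR) (by fun_prop)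
      fun s hs t ht => (abs_le'.mp (habs s hs t ht)).2
    exact hneg

theorem apply_sliceIntegral_dirDeriv_le (hB : IsLorentzian B) (hX : IsPeriodicWaveMap B e T R₀ X)
    (hT : 0 < T) (hR : R₀ ≤ R) {m : ℝ}
    (hsq : ∀ s ∈ Icc 0 T, ∀ t ∈ Icc 0 T,
      B (∂R X (R, s)) (X (R, t)) ^ 2 ≤ energyDensity B X (1, 0) (R, s) * m) :
    B (sliceIntegral T (∂R X) R) (sliceIntegral T (∂R X) R) ≤ T * (kineticEnergy B T X R * m) := by
  have hXR := hX.continuous_slice_dirDeriv (1, 0) hR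
  have hk := hX.continuous_slice_energyDensity (1, 0) hR
  calc B (sliceIntegral T (∂R X) R) (sliceIntegral T (∂R X) R)
      ≤ B (X (R, 0)) (sliceIntegral T (∂R X) R) ^ 2 :=
        hB.apply_self_le_sq (hX.mem_hyperboloid _).1 _
    _ = (∫ s in 0..T, B (X (R, 0)) (∂R X (R, s))) ^ 2 := by
        rw [sliceIntegral,
          (B (X (R, 0))).intervalIntegral_comp_comm (hXR.intervalIntegrable 0 T)]
    _ ≤ T * ∫ s in 0..T, B (X (R, 0)) (∂R X (R, s)) ^ 2 := sq_integral_le hT (by fun_prop)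
    _ ≤ T * ∫ s in 0..T, energyDensity B X (1, 0) (R, s) * m := by
        gcongr
        refine intervalIntegral.integral_mono_on hT.le
          (Continuous.intervalIntegrable (by fun_prop) 0 T)
          (Continuous.intervalIntegrable (by fun_prop) 0 T) fun s hs => ?_
        rw [hB.symm]
        exact hsq s hs 0 (left_mem_Icc.mpr hT.le)
    _ = T * (kineticEnergy B T X R * m) := by
        rw [intervalIntegral.integral_mul_const, kineticEnergy, sliceIntegral]

theorem apply_sliceIntegral_smul_le (hB : IsLorentzian B) (he : B e e = 1)
    (hX : IsPeriodicWaveMap B e T R₀ X) (hT : 0 ≤ T) (hR : R₀ ≤ R) {M : ℝ}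
    (hM : ∀ s ∈ Icc 0 T, ∀ t ∈ Icc 0 T, B (X (R, s)) (X (R, t)) ≤ M) :
    B (sliceIntegral T
        (fun p => (energyDensity B X (1, 0) p - energyDensity B X (0, 1) p) • X p) R)
      (sliceIntegral T X R) ≤ T * (kineticEnergy B T X R * M - potentialEnergy B T X R) := by
  have hk := hX.continuous_slice_energyDensity (1, 0) hR
  have hz := hX.continuous_slice_energyDensity (0, 1) hR
  have hX_cont := hX.continuous_slice hR
  have hle := apply_integral_integral_le B hT
    (f := fun s => (energyDensity B X (1, 0) (R, s) - energyDensity B X (0, 1) (R, s)) • X (R, s))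
    (h := fun s => energyDensity B X (1, 0) (R, s) * M - energyDensity B X (0, 1) (R, s))
    ((hk.sub hz).smul hX_cont) hX_cont (by fun_prop) fun s hs t ht => ?_
  · rwa [intervalIntegral.integral_sub ((hk.intervalIntegrable 0 T).mul_const M)
      (hz.intervalIntegrable 0 T), intervalIntegral.integral_mul_const] at hle
  · have hone := hB.one_le_apply he (hX.mem_hyperboloid (R, s)) (hX.mem_hyperboloid (R, t))
    have hk_nonneg := hX.energyDensity_nonneg hB (1, 0) (p := (R, s)) hR
    have hz_nonneg := hX.energyDensity_nonneg hB (0, 1) (p := (R, s)) hR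
    rw [map_smul, smul_apply, smul_eq_mul]
    nlinarith [hM s hs t ht]

theorem exists_correction_bounds (hB : IsLorentzian B) (he : B e e = 1)
    (hX : IsPeriodicWaveMap B e T R₀ X) (hT : 0 < T) (hR₀ : 0 < R₀) :
    ∃ C, 0 < C ∧ ∀ R, R₀ ≤ R → |correction B T X R| ≤ C * energy B T X R ∧
      deriv (correction B T X) R + R⁻¹ * correction B T X R ≤
        T * (kineticEnergy B T X R - potentialEnergy B T X R) +
          C * (energy B T X R * kineticEnergy B T X R) := by
  obtain ⟨c, hc, hbound⟩ := hX.exists_apply_le_and_apply_sq_le hB he hT hR₀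
  refine ⟨T * (1 + T * c + 2 * c), by positivity, fun R hR => ?_⟩
  have hsq := fun s hs t ht => (hbound R hR s hs t ht).2
  have hK := hX.kineticEnergy_nonneg hB hT.le hR
  have hZ := hX.potentialEnergy_nonneg hB hT.le hR
  have hΓ := hX.abs_correction_le hB hT.le hR (mul_nonneg hc.le hZ) hsq
  have hvel := hX.apply_sliceIntegral_dirDeriv_le hB hT hR hsq
  have hacc := hX.apply_sliceIntegral_smul_le hB he hT.le hR fun s hs t ht =>
    (hbound R hR s hs t ht).1
  rw [(hX.hasDerivAt_correction hR).deriv, hX.sliceIntegral_dirDeriv_dirDeriv hR, map_sub, map_smul,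
    sub_apply, smul_apply, smul_eq_mul, ← correction, energy]
  set K := kineticEnergy B T X R
  set Z := potentialEnergy B T X R
  constructor
  · refine hΓ.trans ?_
    rw [mul_assoc]
    gcongr
    nlinarith [mul_nonneg (mul_nonneg hT.le hc.le) hK, mul_nonneg (mul_nonneg hT.le hc.le) hZ,
      mul_nonneg hc.le hK, mul_nonneg hc.le hZ]
  · have hslack : 0 ≤ T * (1 + T * c) * (K * Z) + T * (1 + T * c + 2 * c) * (K * K) := by
      positivity
    linarith

end IsPeriodicWaveMap

end Correction

/-! ### Decay of the energy -/

theorem antitoneOn_mul_exp {f f' g g' : ℝ → ℝ} {a : ℝ} (hf : ∀ r, a ≤ r → HasDerivAt f (f' r) r)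
    (hg : ∀ r, a ≤ r → HasDerivAt g (g' r) r) (hle : ∀ r, a ≤ r → f' r + f r * g' r ≤ 0) :
    AntitoneOn (fun r => f r * exp (g r)) (Ici a) := by
  have hderiv : ∀ r, a ≤ r →
      HasDerivAt (fun r => f r * exp (g r)) ((f' r + f r * g' r) * exp (g r)) r := fun r hr =>
    ((hf r hr).mul (hg r hr).exp).congr_deriv (by ring)
  refine antitoneOn_of_hasDerivWithinAt_nonpos (convex_Ici a)
    (fun r hr => (hderiv r hr).continuousAt.continuousWithinAt)
    (fun r hr => (hderiv r (interior_subset hr)).hasDerivWithinAt) fun r hr => ?_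
  exact mul_nonpos_of_nonpos_of_nonneg (hle r (interior_subset hr)) (exp_pos _).le

section EnergyDecay

variable {E K H H' : ℝ → ℝ} {a C : ℝ}

theorem le_two_mul_of_abs_sub_le {x y r : ℝ} (hr : 0 < r) (hCr : 2 * C ≤ r) (hx : 0 ≤ x)
    (h : |y - x| ≤ C * x / r) : x ≤ 2 * y := by
  have hhalf : C * x / r ≤ x / 2 := by
    rw [div_le_div_iff₀ hr two_pos]
    nlinarith
  linarith [neg_abs_le (y - x)]

theorem antitoneOn_corrected_energy (ha : 0 < a) (hC : 0 < C) (haC : 2 * C ≤ a)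
    (hE : ∀ r, a ≤ r → 0 ≤ E r) (hK : ∀ r, a ≤ r → 0 ≤ K r)
    (hE' : ∀ r, a ≤ r → HasDerivAt E (-(2 * r⁻¹ * K r)) r)
    (hH' : ∀ r, a ≤ r → HasDerivAt H (H' r) r)
    (hHE : ∀ r, a ≤ r → |H r - E r| ≤ C * E r / r)
    (hle : ∀ r, a ≤ r → r * H' r ≤ -E r + C * (E r * K r) + C * E r / r) :
    AntitoneOn (fun r => r * H r * exp (C * E r + 4 * C * r⁻¹)) (Ici a) := by
  have hpos : ∀ r, a ≤ r → 0 < r := fun r hr => ha.trans_le hr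
  refine antitoneOn_mul_exp (f' := fun r => 1 * H r + r * H' r)
    (g' := fun r => C * -(2 * r⁻¹ * K r) + 4 * C * -(r ^ 2)⁻¹)
    (fun r hr => (hasDerivAt_id r).mul (hH' r hr))
    (fun r hr => ((hE' r hr).const_mul C).add ((hasDerivAt_inv (hpos r hr).ne').const_mul _))
    fun r hr => ?_
  have hr_pos := hpos r hr
  have hEH : E r ≤ 2 * H r :=
    le_two_mul_of_abs_sub_le hr_pos (haC.trans hr) (hE r hr) (hHE r hr)
  have hgain : 0 ≤ (C * K r + 2 * (C / r)) * (2 * H r - E r) :=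
    mul_nonneg (add_nonneg (mul_nonneg hC.le (hK r hr)) (by positivity)) (sub_nonneg.mpr hEH)
  calc 1 * H r + r * H' r + r * H r * (C * -(2 * r⁻¹ * K r) + 4 * C * -(r ^ 2)⁻¹)
      = H r + r * H' r - H r * (2 * (C * K r) + 4 * (C / r)) := by field_simp; ring
    _ ≤ E r + C * E r / r + (-E r + C * (E r * K r) + C * E r / r) -
          H r * (2 * (C * K r) + 4 * (C / r)) := by
        linarith [hle r hr, le_abs_self (H r - E r), hHE r hr]
    _ = -((C * K r + 2 * (C / r)) * (2 * H r - E r)) := by ring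
    _ ≤ 0 := neg_nonpos.mpr hgain

theorem exists_le_div_of_corrected_energy (ha : 0 < a) (hC : 0 < C)
    (hE : ∀ r, a ≤ r → 0 ≤ E r) (hK : ∀ r, a ≤ r → 0 ≤ K r)
    (hE' : ∀ r, a ≤ r → HasDerivAt E (-(2 * r⁻¹ * K r)) r)
    (hH' : ∀ r, a ≤ r → HasDerivAt H (H' r) r)
    (hHE : ∀ r, a ≤ r → |H r - E r| ≤ C * E r / r)
    (hle : ∀ r, a ≤ r → r * H' r ≤ -E r + C * (E r * K r) + C * E r / r) :
    ∃ D, 0 < D ∧ ∀ r, a ≤ r → E r ≤ D / r := by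
  set m := max a (2 * C)
  have ham : a ≤ m := le_max_left _ _
  have hm_pos : 0 < m := ha.trans_le ham
  have hanti := antitoneOn_corrected_energy hm_pos hC (le_max_right _ _)
    (fun r hr => hE r (ham.trans hr)) (fun r hr => hK r (ham.trans hr))
    (fun r hr => hE' r (ham.trans hr)) (fun r hr => hH' r (ham.trans hr))
    (fun r hr => hHE r (ham.trans hr)) fun r hr => hle r (ham.trans hr)
  obtain ⟨D₁, hD₁⟩ := isCompact_Icc.exists_bound_of_continuousOn (s := Icc a m)
    (f := fun r => r * E r)
    fun r hr => (continuousAt_id.mul (hE' r hr.1).continuousAt).continuousWithinAt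
  set D₂ := 2 * (m * H m * exp (C * E m + 4 * C * m⁻¹))
  have hEH : ∀ r, m ≤ r → E r ≤ 2 * H r := fun r hr =>
    le_two_mul_of_abs_sub_le (hm_pos.trans_le hr) ((le_max_right _ _).trans hr)
      (hE r (ham.trans hr)) (hHE r (ham.trans hr))
  have hH : ∀ r, m ≤ r → 0 ≤ H r := fun r hr => by linarith [hEH r hr, hE r (ham.trans hr)]
  have hD₂ : 0 ≤ D₂ := by have := hH m le_rfl; positivity
  refine ⟨max D₁ D₂ + 1, by positivity, fun r hr => ?_⟩
  have hr_pos := ha.trans_le hr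
  rw [le_div_iff₀' hr_pos]
  refine le_add_of_le_of_nonneg ?_ zero_le_one
  rcases le_total r m with hrm | hmr
  · exact (le_abs_self _).trans ((hD₁ r ⟨hr, hrm⟩).trans (le_max_left _ _))
  · have hexp : 1 ≤ exp (C * E r + 4 * C * r⁻¹) :=
      one_le_exp (by have := hE r hr; positivity)
    calc r * E r ≤ 2 * (r * H r) := by nlinarith [hEH r hmr]
      _ ≤ 2 * (r * H r * exp (C * E r + 4 * C * r⁻¹)) := by
          have hrH := le_mul_of_one_le_right (mul_nonneg hr_pos.le (hH r hmr)) hexp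
          linarith
      _ ≤ D₂ := mul_le_mul_of_nonneg_left (hanti self_mem_Ici hmr hmr) zero_le_two
      _ ≤ max D₁ D₂ := le_max_right _ _

end EnergyDecay

/-! ### Growth of the height -/

namespace IsPeriodicWaveMap

variable {E : Type*} [NormedAddCommGroup E] [NormedSpace ℝ E] {B : E →L[ℝ] E →L[ℝ] ℝ} {e : E}
  {T R₀ R : ℝ} {X : ℝ × ℝ → E} {p : ℝ × ℝ}

theorem exists_energy_le_div [CompleteSpace E] (hB : IsLorentzian B) (he : B e e = 1)
    (hX : IsPeriodicWaveMap B e T R₀ X) (hT : 0 < T) (hR₀ : 0 < R₀) :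
    ∃ D, 0 < D ∧ ∀ R, R₀ ≤ R → energy B T X R ≤ D / R := by
  obtain ⟨c, hc, hcorr⟩ := hX.exists_correction_bounds hB he hT hR₀
  have hK := fun r hr => hX.kineticEnergy_nonneg hB hT.le (R := r) hr
  have hZ := fun r hr => hX.potentialEnergy_nonneg hB hT.le (R := r) hr
  have hE : ∀ r, R₀ ≤ r → 0 ≤ energy B T X r := fun r hr => add_nonneg (hK r hr) (hZ r hr)
  have hE' := fun r hr => hX.hasDerivAt_energy hB (R := r) hr
  refine exists_le_div_of_corrected_energy (C := 2 * c / T)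
    (H := fun r => energy B T X r + correction B T X r / (T * r)) hR₀ (by positivity) hE hK hE'
    (fun r hr => (hE' r hr).add <| (hX.hasDerivAt_correction hr).differentiableAt.hasDerivAt.fun_div
      ((hasDerivAt_id r).const_mul T) (mul_pos hT (hR₀.trans_le hr)).ne')
    (fun r hr => ?_) fun r hr => ?_
  all_goals
    have hr_pos := hR₀.trans_le hr
    obtain ⟨hΓ, hΓ'⟩ := hcorr r hr
  · rw [add_sub_cancel_left, abs_div, abs_of_pos (mul_pos hT hr_pos)]
    calc |correction B T X r| / (T * r) ≤ 2 * (c * energy B T X r) / (T * r) := by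
          gcongr
          linarith [abs_nonneg (correction B T X r)]
      _ = 2 * c / T * energy B T X r / r := by field_simp
  · have hKr := hK r hr
    have hEr := hE r hr
    calc _ = -(2 * kineticEnergy B T X r) + (deriv (correction B T X) r +
            r⁻¹ * correction B T X r) / T + 2 / (T * r) * -correction B T X r := by
          field_simp
          ring
      _ ≤ -(2 * kineticEnergy B T X r) + (T * (kineticEnergy B T X r - potentialEnergy B T X r) +
            c * (energy B T X r * kineticEnergy B T X r)) / T +
            2 / (T * r) * (c * energy B T X r) :=
          add_le_add (add_le_add_right ((div_le_div_iff_of_pos_right hT).mpr hΓ') _)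
            (mul_le_mul_of_nonneg_left ((neg_le_abs _).trans hΓ) (by positivity))
      _ = -energy B T X r + c / T * (energy B T X r * kineticEnergy B T X r) +
            2 * c / T * energy B T X r / r := by
          rw [energy]
          field_simp
          ring
      _ ≤ _ := by
          gcongr
          linarith

theorem contDiffAt_log_apply (hX : IsPeriodicWaveMap B e T R₀ X) (hp : R₀ ≤ p.1) :
    ContDiffAt ℝ 1 (fun q => log (B (X q) e)) p :=
  ((contDiffAt_const.clm_apply ((hX.contDiffAt p hp).of_le one_le_two)).clm_apply
    contDiffAt_const).log (hX.mem_hyperboloid p).2.ne'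

theorem abs_dirDeriv_log_apply_le (hB : IsLorentzian B) (he : B e e = 1)
    (hX : IsPeriodicWaveMap B e T R₀ X) (v : ℝ × ℝ) (hp : R₀ ≤ p.1) {r : ℝ} (hr : 0 < r) :
    |dirDeriv v (fun q => log (B (X q) e)) p| ≤ (r * energyDensity B X v p + r⁻¹) / 2 := by
  have hderiv : dirDeriv v (fun q => log (B (X q) e)) p = B (dirDeriv v X p) e / B (X p) e := by
    have hXe : HasFDerivAt (fun q => B (X q) e) ((B.flip e).comp (fderiv ℝ X p)) p :=
      (B.flip e).hasFDerivAt.comp p (hX.differentiableAt hp).hasFDerivAt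
    simp [dirDeriv, (hXe.log (hX.mem_hyperboloid p).2.ne').fderiv, inv_mul_eq_div]
  refine abs_le_half_add_of_sq_le_mul (mul_nonneg hr.le (hX.energyDensity_nonneg hB v hp))
    (inv_pos.mpr hr).le ?_
  calc _ ≤ energyDensity B X v p := hderiv ▸ hB.div_apply_sq_le_of_tangent
        (hX.mem_hyperboloid p).1 (hX.apply_dirDeriv_eq_zero hB v hp) he
    _ = _ := by field_simp

theorem sliceIntegral_dirDeriv_log_apply_le (hB : IsLorentzian B) (he : B e e = 1)
    (hX : IsPeriodicWaveMap B e T R₀ X) (hT : 0 ≤ T) (hR : R₀ ≤ R) {r : ℝ} (hr : 0 < r) :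
    sliceIntegral T (∂R fun q => log (B (X q) e)) R ≤ (r * kineticEnergy B T X R + T * r⁻¹) / 2 :=
  calc sliceIntegral T (∂R fun q => log (B (X q) e)) R
      ≤ ∫ θ in 0..T, (r * energyDensity B X (1, 0) (R, θ) + r⁻¹) / 2 :=
        intervalIntegral.integral_mono_on hT
          ((_root_.continuous_slice_dirDeriv _ fun _ =>
            hX.contDiffAt_log_apply hR).intervalIntegrable 0 T)
          (Continuous.intervalIntegrable
            (by have := hX.continuous_slice_energyDensity (1, 0) hR; fun_prop) 0 T)
          fun θ _ => (le_abs_self _).trans (hX.abs_dirDeriv_log_apply_le hB he _ hR hr)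
    _ = (r * kineticEnergy B T X R + T * r⁻¹) / 2 := by
        rw [intervalIntegral.integral_div, intervalIntegral.integral_add
          (((hX.continuous_slice_energyDensity _ hR).intervalIntegrable 0 T).const_mul r)
          intervalIntegrable_const, intervalIntegral.integral_const_mul]
        simp [kineticEnergy, sliceIntegral]

theorem exists_sliceIntegral_log_apply_le [CompleteSpace E] (hB : IsLorentzian B) (he : B e e = 1)
    (hX : IsPeriodicWaveMap B e T R₀ X) (hT : 0 < T) (hR₀ : 0 < R₀) :
    ∃ c, 0 < c ∧ ∀ R, R₀ ≤ R → sliceIntegral T (fun q => log (B (X q) e)) R ≤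
      sliceIntegral T (fun q => log (B (X q) e)) R₀ + c * √R := by
  obtain ⟨D, hD, hdecay⟩ := hX.exists_energy_le_div hB he hT hR₀
  have hderiv : ∀ R, R₀ ≤ R → HasDerivAt
      (fun R => sliceIntegral T (fun q => log (B (X q) e)) R - (D + T) * √R)
      (sliceIntegral T (∂R fun q => log (B (X q) e)) R - (D + T) * (1 / (2 * √R))) R :=
    fun R hR => (hasDerivAt_sliceIntegral T fun _ => hX.contDiffAt_log_apply hR).sub
      ((hasDerivAt_sqrt (hR₀.trans_le hR).ne').const_mul _)
  have hanti := antitoneOn_of_hasDerivWithinAt_nonpos (convex_Ici R₀)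
    (fun R hR => (hderiv R hR).continuousAt.continuousWithinAt)
    (fun R hR => (hderiv R (interior_subset hR)).hasDerivWithinAt) fun R hR => ?_
  · refine ⟨D + T, by positivity, fun R hR => ?_⟩
    have hle := hanti self_mem_Ici hR hR
    have hpos : 0 ≤ (D + T) * √R₀ := by positivity
    linarith
  · have hR' : R₀ ≤ R := interior_subset hR
    have hR_pos := hR₀.trans_le hR'
    have hZ := hX.potentialEnergy_nonneg hB hT.le hR'
    rw [sub_nonpos]
    calc sliceIntegral T (∂R fun q => log (B (X q) e)) R
        ≤ (√R * kineticEnergy B T X R + T * (√R)⁻¹) / 2 :=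
          hX.sliceIntegral_dirDeriv_log_apply_le hB he hT.le hR' (sqrt_pos.mpr hR_pos)
      _ ≤ (√R * (D / R) + T * (√R)⁻¹) / 2 := by
          gcongr
          exact (le_add_of_nonneg_right hZ).trans (hdecay R hR')
      _ = (D + T) * (1 / (2 * √R)) := by
          nth_rw 2 [← mul_self_sqrt hR_pos.le]
          field_simp

theorem log_apply_le (hB : IsLorentzian B) (he : B e e = 1) (hX : IsPeriodicWaveMap B e T R₀ X)
    (hT : 0 < T) (hR₀ : 0 < R₀) (hR : R₀ ≤ R) {θ : ℝ} (hθ : θ ∈ Icc 0 T) :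
    log (B (X (R, θ)) e) ≤
      sliceIntegral T (fun q => log (B (X q) e)) R / T + (T + energy B T X R₀) / 2 := by
  set osc := (T + energy B T X R₀) / 2
  have hosc : ∀ t ∈ Icc 0 T, log (B (X (R, θ)) e) - osc ≤ log (B (X (R, t)) e) := fun t ht => by
    have hsub := hB.log_apply_sub_log_apply_le he (hX.hasDerivAt_slice hR)
      (hX.continuous_slice_dirDeriv _ hR) (fun _ => hX.mem_hyperboloid _)
      (mem_hyperboloid_self he) hθ ht
    have hZ := hX.potentialEnergy_le_energy_initial hB hT.le hR₀ hR
    rw [potentialEnergy, sliceIntegral] at hZ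
    simp only [energyDensity] at hZ
    simp only [osc]
    linarith
  have hmean := intervalIntegral.integral_mono_on (μ := volume) hT.le intervalIntegrable_const
    ((_root_.continuous_slice fun _ =>
      (hX.contDiffAt_log_apply hR).continuousAt).intervalIntegrable 0 T) hosc
  rw [intervalIntegral.integral_const, sub_zero, smul_eq_mul] at hmean
  rw [← sub_le_iff_le_add, le_div_iff₀' hT]
  exact hmean

theorem exists_apply_le_mul_exp_sqrt [CompleteSpace E] (hB : IsLorentzian B) (he : B e e = 1)
    (hX : IsPeriodicWaveMap B e T R₀ X) (hT : 0 < T) (hR₀ : 0 < R₀) :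
    ∃ C, 0 < C ∧ ∀ p, R₀ ≤ p.1 → B (X p) e ≤ C * exp (C * √p.1) := by
  obtain ⟨c, hc, hgrowth⟩ := hX.exists_sliceIntegral_log_apply_le hB he hT hR₀
  set a := sliceIntegral T (fun q => log (B (X q) e)) R₀ / T + (T + energy B T X R₀) / 2
  have hfund : ∀ R, R₀ ≤ R → ∀ θ ∈ Ico 0 T, B (X (R, θ)) e ≤ exp a * exp (c / T * √R) :=
    fun R hR θ hθ => by
      rw [← exp_add, ← log_le_iff_le_exp (hX.mem_hyperboloid _).2]
      have hmean := (div_le_div_iff_of_pos_right hT).mpr (hgrowth R hR)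
      have hlog := hX.log_apply_le hB he hT hR₀ hR (Ico_subset_Icc_self hθ)
      rw [add_div, mul_div_right_comm] at hmean
      simp only [a]
      linarith
  refine ⟨exp a + c / T, by positivity, fun ⟨R, θ⟩ hR => ?_⟩
  have hper : Function.Periodic (fun θ => X (R, θ)) T := fun θ => by
    simpa using hX.periodic (R, θ)
  obtain ⟨t, ht, hXt⟩ := hper.exists_mem_Ico₀ hT θ
  rw [show X (R, θ) = X (R, t) from hXt]
  refine (hfund R hR t ht).trans ?_
  gcongr
  · linarith [div_pos hc hT]
  · linarith [exp_pos a]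

end IsPeriodicWaveMap

/-! ### Unimodular symmetric matrices -/

/-- The polarisation of the determinant of the symmetric matrix with rows `(x, z)` and `(z, y)`,
encoded as `(x, y, z)`. -/
noncomputable def detForm : (ℝ × ℝ × ℝ) →L[ℝ] (ℝ × ℝ × ℝ) →L[ℝ] ℝ :=
  LinearMap.toContinuousBilinearMap <| LinearMap.mk₂ ℝ
    (fun a b => (a.1 * b.2.1 + a.2.1 * b.1) / 2 - a.2.2 * b.2.2)
    (fun _ _ _ => by simp; ring) (fun _ _ _ => by simp; ring)
    (fun _ _ _ => by simp; ring) (fun _ _ _ => by simp; ring)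

theorem detForm_apply (a b : ℝ × ℝ × ℝ) :
    detForm a b = (a.1 * b.2.1 + a.2.1 * b.1) / 2 - a.2.2 * b.2.2 := rfl

theorem exp_mul_exp_neg (x : ℝ) : exp x * exp (-x) = 1 := by
  rw [← exp_add, add_neg_cancel, exp_zero]

theorem exp_two_mul (x : ℝ) : exp (2 * x) = exp x ^ 2 := by
  rw [two_mul, exp_add, sq]

theorem isLorentzian_detForm : IsLorentzian detForm where
  symm a b := by simp only [detForm_apply]; ring
  reverse_cauchy_schwarz := by
    rintro ⟨x, y, z⟩ ⟨x', y', z'⟩ hpos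
    simp only [detForm_apply] at hpos ⊢
    have hx : 0 < x ^ 2 := pow_two_pos_of_ne_zero fun hx => by
      rw [hx] at hpos
      linarith [sq_nonneg z]
    refine le_of_mul_le_mul_left ?_ hx
    linarith [sq_nonneg (x * ((x * y' + y * x') / 2 - z * z') - x' * (x * y - z ^ 2)),
      mul_nonneg hpos.le (sq_nonneg (x * z' - x' * z))]

/-- The unimodular matrix of the quadratic form `e^P (dx + a dy)² + e^{-P} dy²`, encoded as in
`detForm`. -/
noncomputable def unimodular (P a : ℝ) : ℝ × ℝ × ℝ :=
  (exp P, exp (-P) + a ^ 2 * exp P, a * exp P)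

/-- The velocity of `unimodular P a` when `P` and `a` have velocities `P'` and `a'`. -/
noncomputable def unimodularVelocity (P a P' a' : ℝ) : ℝ × ℝ × ℝ :=
  (P' * exp P, -P' * exp (-P) + (a ^ 2 * P' + 2 * a * a') * exp P, (a * P' + a') * exp P)

/-- The acceleration of `unimodular P a` when `P` and `a` have velocities `P'` and `a'` and
accelerations `P''` and `a''`. -/
noncomputable def unimodularAcceleration (P a P' a' P'' a'' : ℝ) : ℝ × ℝ × ℝ :=
  ((P'' + P' ^ 2) * exp P,
    (P' ^ 2 - P'') * exp (-P) +
      (a ^ 2 * (P'' + P' ^ 2) + 4 * a * a' * P' + 2 * a * a'' + 2 * a' ^ 2) * exp P,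
    (a * (P'' + P' ^ 2) + 2 * a' * P' + a'') * exp P)

theorem unimodular_mem_hyperboloid (P a : ℝ) : unimodular P a ∈ hyperboloid detForm (1, 1, 0) := by
  constructor
  · simp only [detForm_apply, unimodular]
    linear_combination exp_mul_exp_neg P
  · simp only [detForm_apply, unimodular, mul_one, mul_zero, sub_zero]
    positivity

theorem detForm_unimodularVelocity (P a P' a' : ℝ) :
    detForm (unimodularVelocity P a P' a') (unimodularVelocity P a P' a') =
      -(P' ^ 2 + exp (2 * P) * a' ^ 2) := by
  simp only [detForm_apply, unimodularVelocity, exp_two_mul]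
  linear_combination -P' ^ 2 * exp_mul_exp_neg P

theorem hasDerivAt_unimodular {P a : ℝ → ℝ} {P' a' s : ℝ} (hP : HasDerivAt P P' s)
    (ha : HasDerivAt a a' s) : HasDerivAt (fun t => unimodular (P t) (a t))
      (unimodularVelocity (P s) (a s) P' a') s := by
  refine (hP.exp.prodMk ((hP.neg.exp.add ((ha.pow 2).mul hP.exp)).prodMk
    (ha.mul hP.exp))).congr_deriv ?_
  simp only [unimodularVelocity, Prod.mk.injEq]
  refine ⟨?_, ?_, ?_⟩ <;> norm_num <;> ring

theorem hasDerivAt_unimodularVelocity {P a P' a' : ℝ → ℝ} {P'' a'' s : ℝ}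
    (hP : HasDerivAt P (P' s) s) (ha : HasDerivAt a (a' s) s) (hP' : HasDerivAt P' P'' s)
    (ha' : HasDerivAt a' a'' s) :
    HasDerivAt (fun t => unimodularVelocity (P t) (a t) (P' t) (a' t))
      (unimodularAcceleration (P s) (a s) (P' s) (a' s) P'' a'') s := by
  refine ((hP'.mul hP.exp).prodMk (((hP'.neg.mul hP.neg.exp).add
    ((((ha.pow 2).mul hP').add ((ha.const_mul 2).mul ha')).mul hP.exp)).prodMk
    (((ha.mul hP').add ha').mul hP.exp))).congr_deriv ?_
  simp only [unimodularAcceleration, Prod.mk.injEq]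
  refine ⟨?_, ?_, ?_⟩ <;> norm_num <;> ring

section UnimodularMap

variable {V : Type*} [NormedAddCommGroup V] [NormedSpace ℝ V] {P a : V → ℝ} {p : V}

theorem contDiffAt_unimodular {n : WithTop ℕ∞} (hP : ContDiffAt ℝ n P p)
    (ha : ContDiffAt ℝ n a p) : ContDiffAt ℝ n (fun q => unimodular (P q) (a q)) p :=
  hP.exp.prodMk ((hP.neg.exp.add ((ha.pow 2).mul hP.exp)).prodMk (ha.mul hP.exp))

theorem dirDeriv_unimodular (v : V) (hP : ContDiffAt ℝ 1 P p) (ha : ContDiffAt ℝ 1 a p) :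
    dirDeriv v (fun q => unimodular (P q) (a q)) p =
      unimodularVelocity (P p) (a p) (dirDeriv v P p) (dirDeriv v a p) := by
  have hline := hasDerivAt_unimodular
    ((hP.differentiableAt one_ne_zero).hasFDerivAt.hasLineDerivAt v)
    ((ha.differentiableAt one_ne_zero).hasFDerivAt.hasLineDerivAt v)
  simp only [zero_smul, add_zero] at hline
  exact (((contDiffAt_unimodular hP ha).differentiableAt one_ne_zero).hasFDerivAt.hasLineDerivAt
    v).unique hline

theorem dirDeriv_dirDeriv_unimodular (v : V) (hP : ContDiffAt ℝ 2 P p) (ha : ContDiffAt ℝ 2 a p) :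
    dirDeriv v (dirDeriv v fun q => unimodular (P q) (a q)) p =
      unimodularAcceleration (P p) (a p) (dirDeriv v P p) (dirDeriv v a p)
        (dirDeriv v (dirDeriv v P) p) (dirDeriv v (dirDeriv v a) p) := by
  have hvel : dirDeriv v (fun q => unimodular (P q) (a q)) =ᶠ[𝓝 p]
      fun q => unimodularVelocity (P q) (a q) (dirDeriv v P q) (dirDeriv v a q) := by
    filter_upwards [hP.eventually (by simp), ha.eventually (by simp)] with q hPq haq
    exact dirDeriv_unimodular v (hPq.of_le one_le_two) (haq.of_le one_le_two)
  have hline : ∀ {f : V → ℝ}, ContDiffAt ℝ 1 f p → HasLineDerivAt ℝ f (dirDeriv v f p) p v :=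
    fun hf => (hf.differentiableAt one_ne_zero).hasFDerivAt.hasLineDerivAt v
  have hacc : HasLineDerivAt ℝ
      (fun q => unimodularVelocity (P q) (a q) (dirDeriv v P q) (dirDeriv v a q)) _ p v :=
    hasDerivAt_unimodularVelocity (P' := fun t => dirDeriv v P (p + t • v))
      (a' := fun t => dirDeriv v a (p + t • v))
    (by simpa [HasLineDerivAt] using hline (hP.of_le one_le_two))
      (by simpa [HasLineDerivAt] using hline (ha.of_le one_le_two))
    (hline (contDiffAt_dirDeriv v hP (by norm_num)))
    (hline (contDiffAt_dirDeriv v ha (by norm_num)))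
  simp only [zero_smul, add_zero] at hacc
  have hX := contDiffAt_dirDeriv v (contDiffAt_unimodular hP ha) (m := 1) (by norm_num)
  exact ((hX.differentiableAt one_ne_zero).hasFDerivAt.hasLineDerivAt v).unique
    (hacc.congr_of_eventuallyEq hvel)

end UnimodularMap

theorem isPeriodicWaveMap_unimodular {P a : ℝ × ℝ → ℝ} {T R₀ : ℝ}
    (hPper : ∀ p, P (p + (0, T)) = P p) (haper : ∀ p, a (p + (0, T)) = a p)
    (hP : ∀ p, R₀ ≤ p.1 → ContDiffAt ℝ 2 P p) (ha : ∀ p, R₀ ≤ p.1 → ContDiffAt ℝ 2 a p)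
    (eqP : ∀ p, R₀ ≤ p.1 → ∂R (∂R P) p - ∂θ (∂θ P) p + p.1⁻¹ * ∂R P p =
      exp (2 * P p) * (∂R a p ^ 2 - ∂θ a p ^ 2))
    (eqa : ∀ p, R₀ ≤ p.1 → ∂R (∂R a) p - ∂θ (∂θ a) p + p.1⁻¹ * ∂R a p =
      -2 * (∂R P p * ∂R a p - ∂θ P p * ∂θ a p)) :
    IsPeriodicWaveMap detForm (1, 1, 0) T R₀ fun q => unimodular (P q) (a q) where
  mem_hyperboloid p := unimodular_mem_hyperboloid _ _
  periodic p := by rw [hPper, haper]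
  contDiffAt p hp := contDiffAt_unimodular (hP p hp) (ha p hp)
  wave_eq p hp := by
    have hP1 := (hP p hp).of_le one_le_two
    have ha1 := (ha p hp).of_le one_le_two
    simp only [energyDensity, dirDeriv_dirDeriv_unimodular _ (hP p hp) (ha p hp),
      dirDeriv_unimodular _ hP1 ha1, detForm_unimodularVelocity]
    have eqP := eqP p hp
    have eqa := eqa p hp
    rw [exp_two_mul] at eqP ⊢
    simp only [unimodularAcceleration, unimodularVelocity, unimodular, Prod.smul_mk, Prod.mk_add_mk,
      Prod.mk_sub_mk, smul_eq_mul, Prod.mk.injEq]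
    refine ⟨?_, ?_, ?_⟩
    · linear_combination exp (P p) * eqP
    · linear_combination (a p ^ 2 * exp (P p) - exp (-P p)) * eqP + 2 * a p * exp (P p) * eqa -
        2 * exp (P p) * (∂R a p ^ 2 - ∂θ a p ^ 2) * exp_mul_exp_neg (P p)
    · linear_combination a p * exp (P p) * eqP + exp (P p) * eqa

theorem abs_unimodular_mul_le (P a J J' : ℝ) :
    |(unimodular P a).2.1 * J - (unimodular P a).2.2 * J'| ≤
        2 * detForm (unimodular P a) (1, 1, 0) * (|J| + |J'|) ∧
      |-(unimodular P a).2.2 * J + (unimodular P a).1 * J'| ≤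
        2 * detForm (unimodular P a) (1, 1, 0) * (|J| + |J'|) := by
  have hx : 0 < (unimodular P a).1 := exp_pos P
  have hy : 0 ≤ (unimodular P a).2.1 := by rw [unimodular]; positivity
  have hdet := (unimodular_mem_hyperboloid P a).1
  rw [detForm_apply] at hdet ⊢
  generalize unimodular P a = x at *
  obtain ⟨x, y, z⟩ := x
  simp only at *
  have hz : |z| ≤ (x + y) / 2 :=
    abs_le_half_add_of_sq_le_mul hx.le hy (by linarith)
  have hbound : ∀ u v : ℝ, |u| ≤ x + y → |v| ≤ x + y →
      |u * J + v * J'| ≤ 2 * ((x * 1 + y * 1) / 2 - z * 0) * (|J| + |J'|) := fun u v hu hv =>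
    calc |u * J + v * J'| ≤ |u| * |J| + |v| * |J'| := by
          simpa only [abs_mul] using abs_add_le (u * J) (v * J')
      _ ≤ (x + y) * |J| + (x + y) * |J'| := by gcongr
      _ = 2 * ((x * 1 + y * 1) / 2 - z * 0) * (|J| + |J'|) := by ring
  have hz' : |-z| ≤ x + y := by rw [abs_neg]; linarith
  rw [sub_eq_add_neg, ← neg_mul]
  exact ⟨hbound _ _ (by rw [abs_of_nonneg hy]; linarith) hz',
    hbound _ _ hz' (by rw [abs_of_pos hx]; linarith)⟩

/-! ### The Gowdy equations -/

section Gowdy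

variable {f U A : ℝ → ℝ → ℝ} {R θ : ℝ}

theorem differentiableAt_uncurry_dirDeriv (hf : ContDiff ℝ 2 (Function.uncurry f)) (v p : ℝ × ℝ) :
    DifferentiableAt ℝ (dirDeriv v (Function.uncurry f)) p :=
  (contDiffAt_dirDeriv v hf.contDiffAt (m := 1) (by norm_num)).differentiableAt one_ne_zero

theorem pdR_eq_dirDeriv (hf : Differentiable ℝ (Function.uncurry f)) (R θ : ℝ) :
    pdR f R θ = ∂R (Function.uncurry f) (R, θ) :=
  (hasDerivAt_fst (hf (R, θ))).deriv

theorem pdT_eq_dirDeriv (hf : Differentiable ℝ (Function.uncurry f)) (R θ : ℝ) :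
    pdT f R θ = ∂θ (Function.uncurry f) (R, θ) :=
  (hasDerivAt_snd (hf (R, θ))).deriv

theorem deriv_mul_pdR (hf : ContDiff ℝ 2 (Function.uncurry f)) {w : ℝ → ℝ} {w' : ℝ}
    (hw : HasDerivAt w w' R) (θ : ℝ) : deriv (fun r => w r * pdR f r θ) R =
      w' * ∂R (Function.uncurry f) (R, θ) + w R * ∂R (∂R (Function.uncurry f)) (R, θ) := by
  simp only [pdR_eq_dirDeriv (hf.differentiable two_ne_zero)]
  exact (hw.mul (hasDerivAt_fst (differentiableAt_uncurry_dirDeriv hf _ _))).deriv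

theorem deriv_mul_pdT (hf : ContDiff ℝ 2 (Function.uncurry f)) (c R θ : ℝ) :
    deriv (fun t => c * pdT f R t) θ = c * ∂θ (∂θ (Function.uncurry f)) (R, θ) := by
  simp only [pdT_eq_dirDeriv (hf.differentiable two_ne_zero)]
  exact ((hasDerivAt_snd (differentiableAt_uncurry_dirDeriv hf _ _)).const_mul c).deriv

/-- The function `P` for which the Gowdy metric on the symmetry orbits is
`R (e^P (dx + A dy)² + e^{-P} dy²)`. -/
noncomputable def orbitP (U : ℝ → ℝ → ℝ) (p : ℝ × ℝ) : ℝ := 2 * Function.uncurry U p - log p.1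

theorem contDiffAt_orbitP {p : ℝ × ℝ} (hU : ContDiff ℝ 2 (Function.uncurry U)) (hp : 0 < p.1) :
    ContDiffAt ℝ 2 (orbitP U) p :=
  (contDiffAt_const.mul hU.contDiffAt).sub (contDiffAt_fst.log hp.ne')

theorem dirDeriv_orbitP {p : ℝ × ℝ} (hU : Differentiable ℝ (Function.uncurry U)) (hp : 0 < p.1)
    (v : ℝ × ℝ) : dirDeriv v (orbitP U) p = 2 * dirDeriv v (Function.uncurry U) p - v.1 / p.1 := by
  have hlog := (hasFDerivAt_fst (𝕜 := ℝ) (p := p)).log hp.ne'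
  have hP : HasFDerivAt (orbitP U) _ p := ((hU p).hasFDerivAt.const_mul 2).fun_sub hlog
  rw [dirDeriv, hP.fderiv]
  simp [dirDeriv, inv_mul_eq_div]

theorem dirDeriv_dirDeriv_orbitP {p : ℝ × ℝ} (hU : ContDiff ℝ 2 (Function.uncurry U))
    (hp : 0 < p.1) (v : ℝ × ℝ) : dirDeriv v (dirDeriv v (orbitP U)) p =
      2 * dirDeriv v (dirDeriv v (Function.uncurry U)) p + (v.1 / p.1) ^ 2 := by
  have hnear : dirDeriv v (orbitP U) =ᶠ[𝓝 p]
      fun q => 2 * dirDeriv v (Function.uncurry U) q - v.1 * q.1⁻¹ := by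
    filter_upwards [continuousAt_fst.eventually (lt_mem_nhds hp)] with q hq
    exact dirDeriv_orbitP (hU.differentiable two_ne_zero) hq v
  have hinv : HasFDerivAt (fun q : ℝ × ℝ => q.1⁻¹) _ p :=
    (hasDerivAt_inv hp.ne').comp_hasFDerivAt p (hasFDerivAt_fst (𝕜 := ℝ))
  have hP := ((differentiableAt_uncurry_dirDeriv hU v p).hasFDerivAt.const_mul 2).fun_sub
    (hinv.const_mul v.1)
  rw [dirDeriv, hnear.fderiv_eq, hP.fderiv]
  simp [dirDeriv]
  field_simp

theorem exp_two_mul_orbitP {p : ℝ × ℝ} (hp : 0 < p.1) :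
    exp (2 * orbitP U p) = exp (4 * Function.uncurry U p) / p.1 ^ 2 := by
  have hlog : 2 * orbitP U p = 4 * Function.uncurry U p - 2 * log p.1 := by rw [orbitP]; ring
  rw [hlog, exp_sub, exp_two_mul, exp_log hp]

theorem orbitP_wave_eq (hU : ContDiff ℝ 2 (Function.uncurry U))
    (hA : Differentiable ℝ (Function.uncurry A)) (hR : 0 < R)
    (eqU : deriv (fun r => r * pdR U r θ) R - deriv (fun t => R * pdT U R t) θ
      = exp (4 * U R θ) / (2 * R) * ((pdR A R θ) ^ 2 - (pdT A R θ) ^ 2)) :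
    ∂R (∂R (orbitP U)) (R, θ) - ∂θ (∂θ (orbitP U)) (R, θ) + R⁻¹ * ∂R (orbitP U) (R, θ) =
      exp (2 * orbitP U (R, θ)) *
        (∂R (Function.uncurry A) (R, θ) ^ 2 - ∂θ (Function.uncurry A) (R, θ) ^ 2) := by
  rw [deriv_mul_pdR (w := fun r => r) hU (hasDerivAt_id R), deriv_mul_pdT hU,
    pdR_eq_dirDeriv hA, pdT_eq_dirDeriv hA] at eqU
  rw [dirDeriv_dirDeriv_orbitP hU hR, dirDeriv_dirDeriv_orbitP hU hR,
    dirDeriv_orbitP (hU.differentiable two_ne_zero) hR, exp_two_mul_orbitP hR,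
    Function.uncurry_apply_pair]
  linear_combination (norm := (field_simp; ring)) 2 / R * eqU

theorem uncurry_wave_eq (hU : Differentiable ℝ (Function.uncurry U))
    (hA : ContDiff ℝ 2 (Function.uncurry A)) (hR : 0 < R)
    (eqA : deriv (fun r => r⁻¹ * pdR A r θ) R - deriv (fun t => R⁻¹ * pdT A R t) θ
      = 4 / R * (-(pdR U R θ * pdR A R θ) + pdT U R θ * pdT A R θ)) :
    ∂R (∂R (Function.uncurry A)) (R, θ) - ∂θ (∂θ (Function.uncurry A)) (R, θ) +
        R⁻¹ * ∂R (Function.uncurry A) (R, θ) =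
      -2 * (∂R (orbitP U) (R, θ) * ∂R (Function.uncurry A) (R, θ) -
        ∂θ (orbitP U) (R, θ) * ∂θ (Function.uncurry A) (R, θ)) := by
  have hA1 := hA.differentiable two_ne_zero
  rw [deriv_mul_pdR hA (hasDerivAt_inv hR.ne'), deriv_mul_pdT hA, pdR_eq_dirDeriv hU,
    pdT_eq_dirDeriv hU, pdR_eq_dirDeriv hA1, pdT_eq_dirDeriv hA1] at eqA
  rw [dirDeriv_orbitP hU hR, dirDeriv_orbitP hU hR]
  linear_combination (norm := (field_simp; ring)) R * eqA

theorem unimodular_orbitP (hR : 0 < R) (θ a : ℝ) : unimodular (orbitP U (R, θ)) a =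
    (exp (2 * U R θ) / R, R * exp (-(2 * U R θ)) + a ^ 2 * (exp (2 * U R θ) / R),
      a * (exp (2 * U R θ) / R)) := by
  have hexp : exp (orbitP U (R, θ)) = exp (2 * U R θ) / R := by
    rw [orbitP, Function.uncurry_apply_pair, exp_sub, exp_log hR]
  rw [unimodular, exp_neg, hexp, exp_neg, inv_div, div_eq_mul_inv R]

theorem abs_angularMomentum_velocity_le (hR : 0 < R) (θ JX JY : ℝ) :
    |((A R θ) ^ 2 * exp (2 * U R θ) / R ^ 2 + exp (-(2 * U R θ))) * JX
        - A R θ * exp (2 * U R θ) / R ^ 2 * JY| ≤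
      2 * detForm (unimodular (orbitP U (R, θ)) (A R θ)) (1, 1, 0) * (|JX| + |JY|) / R ∧
    |-(A R θ * exp (2 * U R θ) / R ^ 2) * JX + exp (2 * U R θ) / R ^ 2 * JY| ≤
      2 * detForm (unimodular (orbitP U (R, θ)) (A R θ)) (1, 1, 0) * (|JX| + |JY|) / R := by
  have hentries := abs_unimodular_mul_le (orbitP U (R, θ)) (A R θ) JX JY
  rw [unimodular_orbitP hR] at hentries ⊢
  have hscale : ∀ {u v b : ℝ}, v = u / R → |u| ≤ b → |v| ≤ b / R := by
    rintro u _ b rfl hu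
    rw [abs_div, abs_of_pos hR]
    gcongr
  exact ⟨hscale (by field_simp; ring) hentries.1, hscale (by field_simp) hentries.2⟩

end Gowdy

theorem stmt16_general {T : ℝ} (hT : 0 < T)
    (R₀ : ℝ) (hR₀ : 0 < R₀)
    (U A : ℝ → ℝ → ℝ)
    (hU : ContDiff ℝ 2 (Function.uncurry U))
    (hA : ContDiff ℝ 2 (Function.uncurry A))
    (hUper : ∀ R θ, U R (θ + T) = U R θ)
    (hAper : ∀ R θ, A R (θ + T) = A R θ)
    (eqU : ∀ R, R₀ ≤ R → ∀ θ : ℝ,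
      deriv (fun r => r * pdR U r θ) R - deriv (fun t => R * pdT U R t) θ
        = exp (4 * U R θ) / (2 * R) * ((pdR A R θ) ^ 2 - (pdT A R θ) ^ 2))
    (eqA : ∀ R, R₀ ≤ R → ∀ θ : ℝ,
      deriv (fun r => r⁻¹ * pdR A r θ) R - deriv (fun t => R⁻¹ * pdT A R t) θ
        = 4 / R * (-(pdR U R θ * pdR A R θ) + pdT U R θ * pdT A R θ))
    (JX JY : ℝ) :
    ∃ C : ℝ, 0 < C ∧ ∀ R, R₀ ≤ R → ∀ θ : ℝ,
      |((A R θ) ^ 2 * exp (2 * U R θ) / R ^ 2 + exp (-(2 * U R θ))) * JX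
        - A R θ * exp (2 * U R θ) / R ^ 2 * JY| ≤ C * exp (C * Real.sqrt R)
      ∧ |-(A R θ * exp (2 * U R θ) / R ^ 2) * JX
        + exp (2 * U R θ) / R ^ 2 * JY| ≤ C * exp (C * Real.sqrt R) := by
  have hX : IsPeriodicWaveMap detForm (1, 1, 0) T R₀
      fun p => unimodular (orbitP U p) (Function.uncurry A p) :=
    isPeriodicWaveMap_unimodular (fun p => by simp [orbitP, Function.uncurry, hUper])
      (fun p => by simp [Function.uncurry, hAper])
      (fun p hp => contDiffAt_orbitP hU (hR₀.trans_le hp)) (fun _ _ => hA.contDiffAt)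
      (fun p hp => orbitP_wave_eq hU (hA.differentiable two_ne_zero) (hR₀.trans_le hp)
        (eqU p.1 hp p.2))
      fun p hp => uncurry_wave_eq (hU.differentiable two_ne_zero) hA (hR₀.trans_le hp)
        (eqA p.1 hp p.2)
  obtain ⟨C, hC, hgrowth⟩ := hX.exists_apply_le_mul_exp_sqrt isLorentzian_detForm
    (by simp [detForm_apply]) hT hR₀
  set K := C + 2 * C * (|JX| + |JY|) / R₀
  have hCK : C ≤ K := le_add_of_nonneg_right (by positivity)
  have hbound : ∀ R, R₀ ≤ R → ∀ θ : ℝ,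
      2 * detForm (unimodular (orbitP U (R, θ)) (A R θ)) (1, 1, 0) * (|JX| + |JY|) / R ≤
        K * exp (K * √R) := fun R hR θ =>
    calc 2 * detForm (unimodular (orbitP U (R, θ)) (A R θ)) (1, 1, 0) * (|JX| + |JY|) / R
        ≤ 2 * (C * exp (C * √R)) * (|JX| + |JY|) / R₀ := by gcongr; exact hgrowth (R, θ) hR
      _ = 2 * C * (|JX| + |JY|) / R₀ * exp (C * √R) := by ring
      _ ≤ K * exp (K * √R) := by gcongr; exact le_add_of_nonneg_left hC.le
  refine ⟨K, hC.trans_le hCK, fun R hR θ => ?_⟩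
  have hvelocity := abs_angularMomentum_velocity_le (U := U) (A := A) (hR₀.trans_le hR) θ JX JY
  exact ⟨hvelocity.1.trans (hbound R hR θ), hvelocity.2.trans (hbound R hR θ)⟩

theorem stmt16
    (R₀ : ℝ) (hR₀ : 0 < R₀)
    (U A : ℝ → ℝ → ℝ)
    (hU : ContDiff ℝ (⊤ : ℕ∞) (Function.uncurry U))
    (hA : ContDiff ℝ (⊤ : ℕ∞) (Function.uncurry A))
    (hUper : ∀ R θ, U R (θ + 2 * π) = U R θ)
    (hAper : ∀ R θ, A R (θ + 2 * π) = A R θ)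
    (eqU : ∀ R, R₀ ≤ R → ∀ θ : ℝ,
      deriv (fun r => r * pdR U r θ) R - deriv (fun t => R * pdT U R t) θ
        = exp (4 * U R θ) / (2 * R) * ((pdR A R θ) ^ 2 - (pdT A R θ) ^ 2))
    (eqA : ∀ R, R₀ ≤ R → ∀ θ : ℝ,
      deriv (fun r => r⁻¹ * pdR A r θ) R - deriv (fun t => R⁻¹ * pdT A R t) θ
        = 4 / R * (-(pdR U R θ * pdR A R θ) + pdT U R θ * pdT A R θ))
    (JX JY : ℝ) :
    ∃ C : ℝ, 0 < C ∧ ∀ R, R₀ ≤ R → ∀ θ : ℝ,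
      |((A R θ) ^ 2 * exp (2 * U R θ) / R ^ 2 + exp (-(2 * U R θ))) * JX
        - A R θ * exp (2 * U R θ) / R ^ 2 * JY| ≤ C * exp (C * Real.sqrt R)
      ∧ |-(A R θ * exp (2 * U R θ) / R ^ 2) * JX
        + exp (2 * U R θ) / R ^ 2 * JY| ≤ C * exp (C * Real.sqrt R) := by
  exact stmt16_general two_pi_pos R₀ hR₀ U A (hU.of_le (by norm_cast))
    (hA.of_le (by norm_cast)) hUper hAper eqU eqA JX JY
end

section
/- Let ξ = (ξ^R, ξ^θ, ξ^X, ξ^Y) : (s₀,s₁) → ℝ⁴ be a C² curve with ξ^R(s) ≥ R₀, ξ̇^R(s) > 0 and |ξ̇^θ(s)| ≤ ξ̇^R(s) for all s, satisfying the R-component of the geodesic equation: ξ̈^R(s) = −(∂_R η − ∂_R U)(ξ^R(s),ξ^θ(s)) ((ξ̇^R(s))² + (ξ̇^θ(s))²) − 2 (∂_θ η − ∂_θ U)(ξ^R(s),ξ^θ(s)) ξ̇^R(s) ξ̇^θ(s) + T(s), where T(s) := (1/2) e^{−2(η−U)(ξ^R(s),ξ^θ(s))} [ ∂_R(e^{2U})(ξ^R(s),ξ^θ(s))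 (ξ̇^X(s))² + 2 ∂_R(A e^{2U})(ξ^R(s),ξ^θ(s)) ξ̇^X(s) ξ̇^Y(s) + ∂_R(A² e^{2U} + R² e^{−2U})(ξ^R(s),ξ^θ(s)) (ξ̇^Y(s))² ]. Then for all s ∈ (s₀,s₁): (d/ds) [ (ξ^R(s))^{−1/2} ξ̇^R(s) ] ≤ (ξ^R(s))^{−1/2} T(s). -/
open Real MeasureTheory Set

/-!
In the null directions `∂_R ± ∂_θ` the constraints read
`η_R ± η_θ = R ((U_R ± U_θ)² + e^{4U} / (4R²) (A_R ± A_θ)²)`, hence `η_R ± η_θ ≥ R (U_R ± U_θ)²`.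
Completing the square bounds both null components of `∂(η - U)` below by `-1 / (4R)`. The `R`- and
`θ`-directions therefore contribute at most `((ξ̇^R)² + (ξ̇^θ)²) / (4 ξ^R) ≤ (ξ̇^R)² / (2 ξ^R)` to
`ξ̈^R`, and this is exactly the amount removed by differentiating the factor `(ξ^R)^{-1/2}`.
-/

section Algebra

variable {K : Type*} [Field K] [LinearOrder K] [IsStrictOrderedRing K]

theorem sub_mul_sq_le {R : K} (hR : 0 < R) (x : K) : x - R * x ^ 2 ≤ 1 / (4 * R) := by
  have complete_square : 1 / (4 * R) - (x - R * x ^ 2) = R * (x - 1 / (2 * R)) ^ 2 := by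
    field_simp
    ring
  rw [← sub_nonneg, complete_square]
  positivity

theorem abs_sub_le_of_mul_sq_le {R u v e f : K} (hR : 0 < R)
    (hadd : R * (u + v) ^ 2 ≤ e + f) (hsub : R * (u - v) ^ 2 ≤ e - f) :
    |f - v| ≤ e - u + 1 / (4 * R) :=
  abs_le.2 ⟨by linarith [sub_mul_sq_le hR (u + v)], by linarith [sub_mul_sq_le hR (u - v)]⟩

theorem neg_quadratic_le_of_abs_le {α β c : K} (h : |β| ≤ α + c) (p q : K) :
    -(α * (p ^ 2 + q ^ 2)) - 2 * β * p * q ≤ c * (p ^ 2 + q ^ 2) := by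
  obtain ⟨hlower, hupper⟩ := abs_le.1 h
  have hplus : 0 ≤ (α + c + β) * (p + q) ^ 2 := mul_nonneg (by linarith) (sq_nonneg _)
  have hminus : 0 ≤ (α + c - β) * (p - q) ^ 2 := mul_nonneg (by linarith) (sq_nonneg _)
  have null_form : c * (p ^ 2 + q ^ 2) - (-(α * (p ^ 2 + q ^ 2)) - 2 * β * p * q)
      = ((α + c + β) * (p + q) ^ 2 + (α + c - β) * (p - q) ^ 2) / 2 := by ring
  rw [← sub_nonneg, null_form]
  linarith

theorem neg_quadratic_le_sq_div {R α β p q : K} (hR : 0 < R)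
    (hβ : |β| ≤ α + 1 / (4 * R)) (hq : |q| ≤ p) :
    -(α * (p ^ 2 + q ^ 2)) - 2 * β * p * q ≤ p ^ 2 / (2 * R) := by
  have hsq : q ^ 2 ≤ p ^ 2 := sq_le_sq.2 (hq.trans (le_abs_self p))
  calc -(α * (p ^ 2 + q ^ 2)) - 2 * β * p * q
      ≤ 1 / (4 * R) * (p ^ 2 + q ^ 2) := neg_quadratic_le_of_abs_le hβ p q
    _ ≤ 1 / (4 * R) * (p ^ 2 + p ^ 2) := by gcongr
    _ = p ^ 2 / (2 * R) := by ring

theorem mul_add_sq_le_energy_add_momentum {R w : K} (hR : 0 ≤ R) (hw : 0 ≤ w) (u v a b : K) :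
    R * (u + v) ^ 2 ≤ R * (u ^ 2 + v ^ 2 + w / (4 * R ^ 2) * (a ^ 2 + b ^ 2))
      + R * (2 * u * v + w / (2 * R ^ 2) * (a * b)) :=
  calc R * (u + v) ^ 2
      ≤ R * (u + v) ^ 2 + R * (w / (4 * R ^ 2) * (a + b) ^ 2) :=
        le_add_of_nonneg_right (by positivity)
    _ = _ := by ring

theorem mul_sub_sq_le_energy_sub_momentum {R w : K} (hR : 0 ≤ R) (hw : 0 ≤ w) (u v a b : K) :
    R * (u - v) ^ 2 ≤ R * (u ^ 2 + v ^ 2 + w / (4 * R ^ 2) * (a ^ 2 + b ^ 2))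
      - R * (2 * u * v + w / (2 * R ^ 2) * (a * b)) := by
  convert mul_add_sq_le_energy_add_momentum hR hw u (-v) a (-b) using 1 <;> ring

end Algebra

theorem abs_pdT_sub_le_of_constraints {U A η : ℝ → ℝ → ℝ} {R θ : ℝ} (hR : 0 < R)
    (conR : pdR η R θ = R * ((pdR U R θ) ^ 2 + (pdT U R θ) ^ 2
      + exp (4 * U R θ) / (4 * R ^ 2) * ((pdR A R θ) ^ 2 + (pdT A R θ) ^ 2)))
    (conT : pdT η R θ = R * (2 * pdR U R θ * pdT U R θ
      + exp (4 * U R θ) / (2 * R ^ 2) * (pdR A R θ * pdT A R θ))) :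
    |pdT η R θ - pdT U R θ| ≤ pdR η R θ - pdR U R θ + 1 / (4 * R) := by
  apply abs_sub_le_of_mul_sq_le hR <;> rw [conR, conT]
  · exact mul_add_sq_le_energy_add_momentum hR.le (exp_pos _).le ..
  · exact mul_sub_sq_le_energy_sub_momentum hR.le (exp_pos _).le ..

theorem hasDerivAt_div_sqrt {f v : ℝ → ℝ} {w s : ℝ} (hf : HasDerivAt f (v s) s)
    (hv : HasDerivAt v w s) (hpos : 0 < f s) :
    HasDerivAt (fun t => v t / √(f t)) ((w - v s ^ 2 / (2 * f s)) / √(f s)) s := by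
  have hsqrt : 0 < √(f s) := sqrt_pos.2 hpos
  refine (hv.div (hf.sqrt hpos.ne') hsqrt.ne').congr_deriv ?_
  calc (w * √(f s) - v s * (v s / (2 * √(f s)))) / √(f s) ^ 2
      = (w - v s ^ 2 / (2 * √(f s) ^ 2)) / √(f s) := by field_simp
    _ = (w - v s ^ 2 / (2 * f s)) / √(f s) := by rw [sq_sqrt hpos.le]

/-- `α` and `β` stand for the Christoffel symbols `Γ^R_RR = Γ^R_θθ` and `Γ^R_Rθ` along the curve,
which for the Gowdy metric are `∂_R (η - U)` and `∂_θ (η - U)`; `q` stands for `ξ̇^θ`. -/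
theorem stmt17_general {S : Set ℝ} (hS : IsOpen S) {ξR q α β T : ℝ → ℝ}
    (hξR : ContDiffOn ℝ 2 ξR S)
    (hpos : ∀ s ∈ S, 0 < ξR s)
    (hcausal : ∀ s ∈ S, |q s| ≤ deriv ξR s)
    (hβ : ∀ s ∈ S, |β s| ≤ α s + 1 / (4 * ξR s))
    (hgeo : ∀ s ∈ S, deriv (deriv ξR) s
      ≤ -(α s * (deriv ξR s ^ 2 + q s ^ 2)) - 2 * β s * deriv ξR s * q s + T s) :
    ∀ s ∈ S, ∃ d : ℝ, HasDerivAt (fun u => deriv ξR u / √(ξR u)) d s ∧ d ≤ T s / √(ξR s) := by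
  intro s hs
  have hvel : HasDerivAt ξR (deriv ξR s) s :=
    (hξR.differentiableOn two_ne_zero).hasDerivAt (hS.mem_nhds hs)
  have hacc : HasDerivAt (deriv ξR) (deriv (deriv ξR) s) s :=
    ((hξR.deriv_of_isOpen (m := 1) hS (by norm_num)).differentiableOn one_ne_zero).hasDerivAt
      (hS.mem_nhds hs)
  refine ⟨_, hasDerivAt_div_sqrt hvel hacc (hpos s hs), ?_⟩
  gcongr
  linarith [hgeo s hs, neg_quadratic_le_sq_div (hpos s hs) (hβ s hs) (hcausal s hs)]

theorem stmt17
    (R₀ : ℝ) (hR₀ : 0 < R₀)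
    (U A : ℝ → ℝ → ℝ)
    (hU : ContDiff ℝ (⊤ : ℕ∞) (Function.uncurry U))
    (hA : ContDiff ℝ (⊤ : ℕ∞) (Function.uncurry A))
    (hUper : ∀ R θ, U R (θ + 2 * π) = U R θ)
    (hAper : ∀ R θ, A R (θ + 2 * π) = A R θ)
    (η : ℝ → ℝ → ℝ)
    (hη : ContDiff ℝ (⊤ : ℕ∞) (Function.uncurry η))
    (hηper : ∀ R θ, η R (θ + 2 * π) = η R θ)
    (conηR : ∀ R, R₀ ≤ R → ∀ θ : ℝ,
      pdR η R θ = R * ((pdR U R θ) ^ 2 + (pdT U R θ) ^ 2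
        + exp (4 * U R θ) / (4 * R ^ 2) * ((pdR A R θ) ^ 2 + (pdT A R θ) ^ 2)))
    (conηT : ∀ R, R₀ ≤ R → ∀ θ : ℝ,
      pdT η R θ = R * (2 * pdR U R θ * pdT U R θ
        + exp (4 * U R θ) / (2 * R ^ 2) * (pdR A R θ * pdT A R θ)))
    (s₀ s₁ : ℝ) (hs : s₀ < s₁)
    (ξR ξθ ξX ξY : ℝ → ℝ)
    (hξR : ContDiffOn ℝ 2 ξR (Set.Ioo s₀ s₁))
    (hξθ : ContDiffOn ℝ 2 ξθ (Set.Ioo s₀ s₁))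
    (hξX : ContDiffOn ℝ 2 ξX (Set.Ioo s₀ s₁))
    (hξY : ContDiffOn ℝ 2 ξY (Set.Ioo s₀ s₁))
    (hdom : ∀ s ∈ Set.Ioo s₀ s₁, R₀ ≤ ξR s)
    (hfut : ∀ s ∈ Set.Ioo s₀ s₁, 0 < deriv ξR s)
    (htl : ∀ s ∈ Set.Ioo s₀ s₁, |deriv ξθ s| ≤ deriv ξR s)
    (T : ℝ → ℝ)
    (hT : ∀ s ∈ Set.Ioo s₀ s₁,
      T s = 1 / 2 * exp (-(2 * (η (ξR s) (ξθ s) - U (ξR s) (ξθ s))))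
        * (deriv (fun r => exp (2 * U r (ξθ s))) (ξR s) * (deriv ξX s) ^ 2
          + 2 * deriv (fun r => A r (ξθ s) * exp (2 * U r (ξθ s))) (ξR s)
              * deriv ξX s * deriv ξY s
          + deriv (fun r => (A r (ξθ s)) ^ 2 * exp (2 * U r (ξθ s))
              + r ^ 2 * exp (-(2 * U r (ξθ s)))) (ξR s) * (deriv ξY s) ^ 2))
    (hgeo : ∀ s ∈ Set.Ioo s₀ s₁,
      deriv (fun u => deriv ξR u) s
        = -((pdR η (ξR s) (ξθ s) - pdR U (ξR s) (ξθ s))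
              * ((deriv ξR s) ^ 2 + (deriv ξθ s) ^ 2))
          - 2 * (pdT η (ξR s) (ξθ s) - pdT U (ξR s) (ξθ s)) * deriv ξR s * deriv ξθ s
          + T s) :
    ∀ s ∈ Set.Ioo s₀ s₁, ∃ d : ℝ,
      HasDerivAt (fun u => deriv ξR u / Real.sqrt (ξR u)) d s
        ∧ d ≤ T s / Real.sqrt (ξR s) := by
  have hpos : ∀ s ∈ Ioo s₀ s₁, 0 < ξR s := fun s hs => hR₀.trans_le (hdom s hs)
  exact stmt17_general isOpen_Ioo hξR hpos htl
    (fun s hs => abs_pdT_sub_le_of_constraints (hpos s hs) (conηR _ (hdom s hs) _)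
      (conηT _ (hdom s hs) _))
    fun s hs => (hgeo s hs).le
end
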